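/- Assume ε ∉ (1/2)ℤ. Then there exist h₀ > 0 and β > 0, depending only on V₁, V₂ and ε, such that for every positive integer N with h = 1/N ≤ h₀ and every vector φ = (φ₀,…,φ_{N−1}) ∈ ℂ^N, the Euclidean-norm lower bound |W^ε φ|₂ ≥ β h |φ|₂ holds (equivalently, sup over nonzero ψ ∈ ℂ^N of |Σ_{i,j=0}^{N−1} ψ_i W^ε_{ij} φ_j| / (h^{1/2}|ψ|₂) is at least β h^{1/2}|φ|₂, which is the discrete inf-sup condition for the bilinear form of the method in the L² norms of the associated step functions). In particular, for h ≤ h₀ the N×N matrix W^ε is invertible. -/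

import Mathlib

/-!
The matrix `N W^ε` acts on grid functions `x : ℤ/N → ℂ` as a discrete hypersingular operator
(`Nys.Dat.Op`): a quadrature operator whose kernel is the mixed divided difference of `V₁`, plus the
quadrature operator of `V₂`. The claim is the uniform bound `β ‖x‖ ≤ ‖Op x‖` for large `N`
(`Nys.Dat.stable`), which is proved by contradiction and compactness.

*Ellipticity.* The principal part of `Op` is the mixed difference of `κ log sin²(π(s-t))`, where `κ`
is the constant diagonal value of the coefficient of the logarithm. It is a convolution, so the
discrete Fourier transform diagonalises it. Writing `log |1 - z|²` as an integral of its radial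
derivative and summing a geometric progression over the `N`-th roots of unity gives a closed form
for the symbol (`Nys.dft_lam`), which is bounded below exactly because `exp(2πiε)` is not real, that
is, `ε ∉ ½ℤ` (`Nys.symbol_lower`). The remainder has a logarithmic coefficient vanishing on the
diagonal. Replacing `log sin²` by `log (sin² + ρ⁸)` shows that it is bounded by
`θ ‖∂x‖ + C_θ ‖x‖` with `θ` arbitrarily small (`Nys.order_zero`). Hence
`‖∂x‖ ≤ C (‖Op x‖ + ‖x‖)` (`Nys.Dat.elliptic`). Since divided differences commute with `Op` up to
kernels differenced along the diagonal, the estimate bootstraps to all orders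
(`Nys.Dat.regularity`).

*Compactness.* If stability fails, pick for a sequence `N → ∞` a singular vector `x` with singular
value tending to zero, normalised by `‖x‖² = N`. The adjoint of `Op` is an operator of the same type
(`Nys.Dat.adj`), so the equation `Op* Op x = μ x` and regularity for both operators bound all
discrete derivatives of `x` uniformly (`Nys.Dat.singular_regular`). By a discrete Fourier argument a
subsequence converges, with its first differences, uniformly to a smooth periodic `φ`
(`Nys.compactness`).

*The limit.* Quadrature sums of logarithmic kernels on shifted grids converge uniformly
(`Nys.riemann_main`). Summing `Op x → 0` over grid intervals gives
`V₁φ'(s) - V₁φ'(r) = ∫_r^s V₂φ`, that is, `Wφ = 0` (`Nys.Dat.limit_kernel`). Injectivity of `W`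
yields `φ = 0`, which contradicts the normalisation.
-/

noncomputable section

/-- Smooth kernel data, 1-periodic in each variable. -/
def SPK (A : ℝ → ℝ → ℂ) : Prop :=
  ContDiff ℝ (⊤ : ℕ∞) (fun p : ℝ × ℝ => A p.1 p.2) ∧
    (∀ s t, A (s + 1) t = A s t) ∧ (∀ s t, A s (t + 1) = A s t)

/-- Logarithmic kernel `V(s,t) = (i/(2π)) A(s,t) log(sin²(π(s−t))) + K(s,t)`. -/
def logKer (A K : ℝ → ℝ → ℂ) (s t : ℝ) : ℂ :=
  Complex.I / (2 * Real.pi) * A s t * (Real.log (Real.sin (Real.pi * (s - t)) ^ 2) : ℂ) + K s t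

/-- Grid point `s_{j+ε} = (j − 1/2 + ε)h`. -/
def sg (h ε : ℝ) (j : ℤ) : ℝ := ((j : ℝ) - 1 / 2 + ε) * h

/-- Grid point `t_{j+ε} = (j + ε)h`. -/
def tg (h ε : ℝ) (j : ℤ) : ℝ := ((j : ℝ) + ε) * h

/-- Integral operator with kernel `V`. -/
def Vop (V : ℝ → ℝ → ℂ) (φ : ℝ → ℂ) (s : ℝ) : ℂ := ∫ t in (0:ℝ)..1, V s t * φ t

/-- Hypersingular operator `W = −D V₁ D + V₂`. -/
def Wop (V1 V2 : ℝ → ℝ → ℂ) (φ : ℝ → ℂ) (s : ℝ) : ℂ :=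
  -deriv (Vop V1 (deriv φ)) s + Vop V2 φ s

/-- Nyström matrix entries `W^ε_{ij}`. -/
def Wmat (V1 V2 : ℝ → ℝ → ℂ) (h ε : ℝ) (i j : ℤ) : ℂ :=
  V1 (sg h ε (i + 1)) (sg h 0 (j + 1)) - V1 (sg h ε i) (sg h 0 (j + 1))
    - V1 (sg h ε (i + 1)) (sg h 0 j) + V1 (sg h ε i) (sg h 0 j)
    + (h : ℂ) ^ 2 * V2 (tg h ε i) (tg h 0 j)

/-- Fourier coefficient of a 1-periodic function. -/
def fc (u : ℝ → ℂ) (m : ℤ) : ℂ :=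
  ∫ t in (0:ℝ)..1, u t * Complex.exp (-(2 * Real.pi * Complex.I * (m : ℂ) * (t : ℂ)))

/-- Periodic Sobolev norm of order `r`. -/
def sobNorm (r : ℝ) (u : ℝ → ℂ) : ℝ :=
  Real.sqrt (‖fc u 0‖ ^ 2 +
    ∑' m : ℤ, if m = 0 then 0 else |(m : ℝ)| ^ (2 * r) * ‖fc u m‖ ^ 2)

/-- 1-periodic step function on the ε-shifted grid with coefficients `v`. -/
def stepf (N : ℕ) (ε : ℝ) (v : ZMod N → ℂ) (s : ℝ) : ℂ :=
  v ((⌊s * N + 1 / 2 - ε⌋ : ℤ) : ZMod N)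

/-- Midpoint quadrature error matrix entries `E^ε_{ij}`. -/
def Emat (V2 : ℝ → ℝ → ℂ) (h ε : ℝ) (i j : ℤ) : ℂ :=
  (∫ s in (sg h ε i)..(sg h ε (i + 1)), ∫ t in (sg h 0 j)..(sg h 0 (j + 1)), V2 s t)
    - (h : ℂ) ^ 2 * V2 (tg h ε i) (tg h 0 j)

/-- Spectral (ℓ²-operator) norm of a complex `N×N` matrix. -/
def specNorm {N : ℕ} (M : Matrix (Fin N) (Fin N) ℂ) : ℝ :=
  ‖LinearMap.toContinuousLinearMap (Matrix.toEuclideanLin M)‖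

/-- The function `C̄₁(t) = −(1/(2πi)) log(4 sin²(πt))`. -/
def Cbar1 (t : ℝ) : ℂ :=
  -(1 / (2 * Real.pi * Complex.I)) * (Real.log (4 * Real.sin (Real.pi * t) ^ 2) : ℂ)

end

/-! ### Grid functions and quadrature operators -/

noncomputable section

namespace Nys

/-- The Euclidean norm of a grid function, i.e. of a function on `ℤ/N`. -/
def nrm {N : ℕ} [NeZero N] (x : ZMod N → ℂ) : ℝ :=
  ‖(WithLp.toLp 2 x : EuclideanSpace ℂ (ZMod N))‖

/-- Forward divided difference on the grid of mesh `1/N`. -/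
def dl {N : ℕ} (x : ZMod N → ℂ) (j : ZMod N) : ℂ := (N : ℂ) * (x (j + 1) - x j)

/-- Backward divided difference on the grid of mesh `1/N`. -/
def db {N : ℕ} (x : ZMod N → ℂ) (j : ZMod N) : ℂ := (N : ℂ) * (x j - x (j - 1))

/-- The shift of a grid function by one node. -/
def sh {N : ℕ} (x : ZMod N → ℂ) (j : ZMod N) : ℂ := x (j + 1)

/-- Divided difference of a kernel with step `1/N` in direction `w`. The directions that occur are
`(1,0)`, `(0,1)` and the diagonal direction `(1,1)`. -/
def df (N : ℕ) (w : ℝ × ℝ) (F : ℝ × ℝ → ℂ) (p : ℝ × ℝ) : ℂ :=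
  (N : ℂ) * (F (p + (1 / (N : ℝ)) • w) - F p)

/-- The grid point `(i + a)/N`. -/
def gp (N : ℕ) (a : ℝ) (i : ℤ) : ℝ := ((i : ℝ) + a) / N

/-- Periodicity with period `1` in each variable. -/
def Per (F : ℝ × ℝ → ℂ) : Prop := ∀ s t, F (s + 1, t) = F (s, t) ∧ F (s, t + 1) = F (s, t)

/-- Values of a kernel on the product of the two grids `(i + a)/N` and `(j + c)/N`, indexed by
`ℤ/N`; representatives in `ℤ` are irrelevant for periodic kernels (`mat_intCast`). -/
def mat (N : ℕ) (a c : ℝ) (F : ℝ × ℝ → ℂ) (i j : ZMod N) : ℂ :=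
  F (gp N a (ZMod.cast i), gp N c (ZMod.cast j))

/-- The quadrature operator `x ↦ (1/N) ∑ⱼ F(sᵢ, tⱼ) xⱼ`. -/
def Q (N : ℕ) [NeZero N] (a c : ℝ) (F : ℝ × ℝ → ℂ) (x : ZMod N → ℂ) (i : ZMod N) : ℂ :=
  (1 / (N : ℂ)) * ∑ j, mat N a c F i j * x j

section norm
variable {N : ℕ} [NeZero N]

lemma nrm_nonneg (x : ZMod N → ℂ) : 0 ≤ nrm x := norm_nonneg _

lemma nrm_sq (x : ZMod N → ℂ) : nrm x ^ 2 = ∑ j, ‖x j‖ ^ 2 := by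
  simp [nrm, EuclideanSpace.norm_sq_eq]

lemma nrm_eq (x : ZMod N → ℂ) : nrm x = Real.sqrt (∑ j, ‖x j‖ ^ 2) := by
  simp [nrm, EuclideanSpace.norm_eq]

lemma nrm_add_le (x y : ZMod N → ℂ) : nrm (x + y) ≤ nrm x + nrm y := by
  simpa [nrm] using norm_add_le (WithLp.toLp 2 x : EuclideanSpace ℂ (ZMod N)) (WithLp.toLp 2 y)

lemma nrm_sub_le (x y : ZMod N → ℂ) : nrm (x - y) ≤ nrm x + nrm y := by
  simpa [nrm] using norm_sub_le (WithLp.toLp 2 x : EuclideanSpace ℂ (ZMod N)) (WithLp.toLp 2 y)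

lemma nrm_neg (x : ZMod N → ℂ) : nrm (-x) = nrm x := by
  simp [nrm]

lemma nrm_smul (c : ℂ) (x : ZMod N → ℂ) : nrm (c • x) = ‖c‖ * nrm x := by
  simp [nrm, norm_smul]

lemma nrm_le_of_sq {x : ZMod N → ℂ} {y : ZMod N → ℂ} {C : ℝ} (hC : 0 ≤ C)
    (h : ∑ j, ‖x j‖ ^ 2 ≤ C ^ 2 * ∑ j, ‖y j‖ ^ 2) : nrm x ≤ C * nrm y := by
  refine abs_le_of_sq_le_sq' ?_ (mul_nonneg hC (nrm_nonneg y)) |>.2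
  rw [mul_pow, nrm_sq, nrm_sq]; exact h

lemma nrm_sh (x : ZMod N → ℂ) : nrm (sh x) = nrm x := by
  rw [nrm_eq, nrm_eq]
  congr 1
  exact Equiv.sum_comp (Equiv.addRight (1 : ZMod N)) (fun j => ‖x j‖ ^ 2)

lemma nrm_db (x : ZMod N → ℂ) : nrm (db x) = nrm (dl x) := by
  rw [← nrm_sh (db x)]
  congr 1
  ext j
  simp [sh, db, dl]

lemma norm_apply_le (x : ZMod N → ℂ) (j : ZMod N) : ‖x j‖ ≤ nrm x := by
  simpa [nrm] using PiLp.norm_apply_le (WithLp.toLp 2 x : EuclideanSpace ℂ (ZMod N)) j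

lemma sum_norm_le (x : ZMod N → ℂ) : ∑ j, ‖x j‖ ≤ Real.sqrt N * nrm x := by
  have h := sq_sum_le_card_mul_sum_sq (s := (Finset.univ : Finset (ZMod N))) (f := fun j => ‖x j‖)
  rw [← nrm_sq, Finset.card_univ, ZMod.card] at h
  refine abs_le_of_sq_le_sq' ?_ (mul_nonneg (Real.sqrt_nonneg _) (nrm_nonneg x)) |>.2
  rw [mul_pow, Real.sq_sqrt (by positivity)]
  exact h

end norm

section dlalg
variable {N : ℕ}

lemma dl_add (x y : ZMod N → ℂ) : dl (x + y) = dl x + dl y := by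
  ext j; simp [dl]; ring

lemma dl_smul (c : ℂ) (x : ZMod N → ℂ) : dl (c • x) = c • dl x := by
  ext j; simp [dl]; ring

lemma dl_sh (x : ZMod N → ℂ) : dl (sh x) = sh (dl x) := rfl

lemma dl_iter_sh (k : ℕ) (x : ZMod N → ℂ) : dl^[k] (sh x) = sh (dl^[k] x) := by
  induction k generalizing x with
  | zero => rfl
  | succ k ih => rw [Function.iterate_succ_apply, dl_sh, ih, ← Function.iterate_succ_apply dl k x]

lemma dl_iter_add (k : ℕ) (x y : ZMod N → ℂ) : dl^[k] (x + y) = dl^[k] x + dl^[k] y := by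
  induction k generalizing x y with
  | zero => rfl
  | succ k ih => simp only [Function.iterate_succ_apply, dl_add, ih]

lemma dl_iter_smul (k : ℕ) (c : ℂ) (x : ZMod N → ℂ) : dl^[k] (c • x) = c • dl^[k] x := by
  induction k generalizing x with
  | zero => rfl
  | succ k ih => simp only [Function.iterate_succ_apply, dl_smul, ih]

end dlalg

section kernels
variable {N : ℕ}

lemma Per.int {F : ℝ × ℝ → ℂ} (hF : Per F) (s t : ℝ) (m n : ℤ) :
    F (s + m, t + n) = F (s, t) := by
  have h1 : Function.Periodic (fun s => F (s, t + n)) 1 := fun s => (hF s _).1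
  have h2 : Function.Periodic (fun t => F (s, t)) 1 := fun t => (hF s t).2
  have e1 := (h1.int_mul m) s
  have e2 := (h2.int_mul n) t
  simp only [mul_one] at e1 e2
  rw [e1, e2]

lemma Per.df {F : ℝ × ℝ → ℂ} (hF : Per F) (N : ℕ) (w : ℝ × ℝ) : Per (df N w F) := by
  intro s t
  have h1 := fun s t => (hF s t).1
  have h2 := fun s t => (hF s t).2
  constructor
  · simp only [Nys.df, Prod.mk_add_mk, Prod.smul_def, h1, add_right_comm s 1]
  · simp only [Nys.df, Prod.mk_add_mk, Prod.smul_def, h2, add_right_comm t 1]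

lemma Per.add {F G : ℝ × ℝ → ℂ} (hF : Per F) (hG : Per G) : Per (fun p => F p + G p) :=
  fun s t => ⟨by simp [(hF s t).1, (hG s t).1], by simp [(hF s t).2, (hG s t).2]⟩

lemma Per.mul {F G : ℝ × ℝ → ℂ} (hF : Per F) (hG : Per G) : Per (fun p => F p * G p) :=
  fun s t => ⟨by simp [(hF s t).1, (hG s t).1], by simp [(hF s t).2, (hG s t).2]⟩

lemma df_comm (N : ℕ) (w w' : ℝ × ℝ) (F : ℝ × ℝ → ℂ) :
    df N w (df N w' F) = df N w' (df N w F) := by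
  ext p
  simp only [df]
  rw [add_right_comm p]
  ring

lemma mat_intCast [NeZero N] (a c : ℝ) {F : ℝ × ℝ → ℂ} (hF : Per F) (m n : ℤ) :
    mat N a c F (m : ZMod N) (n : ZMod N) = F (gp N a m, gp N c n) := by
  have hN : (N : ℝ) ≠ 0 := Nat.cast_ne_zero.2 (NeZero.ne N)
  have key : ∀ (a : ℝ) (m : ℤ), ∃ k : ℤ, gp N a m = gp N a (ZMod.cast (m : ZMod N)) + k := by
    intro a m
    have : ((m - ZMod.cast (m : ZMod N) : ℤ) : ZMod N) = 0 := by simp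
    obtain ⟨k, hk⟩ := (ZMod.intCast_zmod_eq_zero_iff_dvd _ N).1 this
    refine ⟨k, ?_⟩
    have hk' : (m : ℝ) - ((ZMod.cast (m : ZMod N) : ℤ) : ℝ) = N * k := by exact_mod_cast hk
    unfold gp
    field_simp
    linarith
  obtain ⟨k, hk⟩ := key a m
  obtain ⟨l, hl⟩ := key c n
  rw [hk, hl, hF.int]
  rfl

lemma gp_succ [NeZero N] (a : ℝ) (m : ℤ) : gp N a (m + 1) = gp N a m + 1 / N := by
  unfold gp; push_cast; ring

lemma gp_zero (m : ℤ) (a : ℝ) : gp N a m = ((m : ℝ) + a) * (1 / N) := by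
  unfold gp; ring

variable [NeZero N]

lemma mat_df10 (a c : ℝ) {F : ℝ × ℝ → ℂ} (hF : Per F) (i j : ZMod N) :
    mat N a c (df N (1, 0) F) i j = N * (mat N a c F (i + 1) j - mat N a c F i j) := by
  obtain ⟨m, rfl⟩ := ZMod.intCast_surjective i
  obtain ⟨n, rfl⟩ := ZMod.intCast_surjective j
  have : ((m : ZMod N) + 1) = ((m + 1 : ℤ) : ZMod N) := by push_cast; rfl
  rw [this, mat_intCast a c hF, mat_intCast a c hF, mat_intCast a c (hF.df N _), gp_succ]
  simp [df]

lemma mat_df01 (a c : ℝ) {F : ℝ × ℝ → ℂ} (hF : Per F) (i j : ZMod N) :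
    mat N a c (df N (0, 1) F) i j = N * (mat N a c F i (j + 1) - mat N a c F i j) := by
  obtain ⟨m, rfl⟩ := ZMod.intCast_surjective i
  obtain ⟨n, rfl⟩ := ZMod.intCast_surjective j
  have : ((n : ZMod N) + 1) = ((n + 1 : ℤ) : ZMod N) := by push_cast; rfl
  rw [this, mat_intCast a c hF, mat_intCast a c hF, mat_intCast a c (hF.df N _), gp_succ]
  simp [df]

lemma mat_df11 (a c : ℝ) {F : ℝ × ℝ → ℂ} (hF : Per F) (i j : ZMod N) :
    mat N a c (df N (1, 1) F) i j = N * (mat N a c F (i + 1) (j + 1) - mat N a c F i j) := by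
  obtain ⟨m, rfl⟩ := ZMod.intCast_surjective i
  obtain ⟨n, rfl⟩ := ZMod.intCast_surjective j
  have : ((n : ZMod N) + 1) = ((n + 1 : ℤ) : ZMod N) := by push_cast; rfl
  have h' : ((m : ZMod N) + 1) = ((m + 1 : ℤ) : ZMod N) := by push_cast; rfl
  rw [this, h', mat_intCast a c hF, mat_intCast a c hF, mat_intCast a c (hF.df N _), gp_succ,
    gp_succ]
  simp [df]

/-- Summation by parts in the second variable. -/
lemma Q_df01 (a c : ℝ) {F : ℝ × ℝ → ℂ} (hF : Per F) (x : ZMod N → ℂ) :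
    Q N a c (df N (0, 1) F) x = -Q N a c F (db x) := by
  ext i
  simp only [Q, Pi.neg_apply, mat_df01 a c hF, db]
  rw [← mul_neg, ← Finset.sum_neg_distrib]
  congr 1
  have h1 := Equiv.sum_comp (Equiv.addRight (1 : ZMod N))
    (fun j => (N : ℂ) * (mat N a c F i j * x (j - 1)))
  simp only [Equiv.coe_addRight, add_sub_cancel_right] at h1
  have : ∀ j, (N : ℂ) * (mat N a c F i (j + 1) - mat N a c F i j) * x j =
    (N : ℂ) * (mat N a c F i (j + 1) * x j) - N * (mat N a c F i j * x j) := fun j => by ring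
  simp only [this]
  rw [Finset.sum_sub_distrib, h1, ← Finset.sum_sub_distrib]
  exact Finset.sum_congr rfl fun j _ => by ring

lemma Q_df10 (a c : ℝ) {F : ℝ × ℝ → ℂ} (hF : Per F) (x : ZMod N → ℂ) :
    Q N a c (df N (1, 0) F) x = dl (Q N a c F x) := by
  ext i
  simp only [Q, mat_df10 a c hF, dl]
  rw [← mul_sub, ← Finset.sum_sub_distrib, mul_left_comm]
  congr 1
  rw [Finset.mul_sum]
  exact Finset.sum_congr rfl fun j _ => by ring

/-- The commutator of the difference operator with a quadrature operator is the quadrature operator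
of the kernel differenced along the diagonal. -/
lemma dl_Q (a c : ℝ) {F : ℝ × ℝ → ℂ} (hF : Per F) (x : ZMod N → ℂ) :
    dl (Q N a c F x) = Q N a c (df N (1, 1) F) (sh x) + Q N a c F (dl x) := by
  ext i
  simp only [Q, mat_df11 a c hF, dl, sh, Pi.add_apply]
  rw [← mul_add, ← mul_sub, mul_left_comm]
  congr 1
  have h1 := Equiv.sum_comp (Equiv.addRight (1 : ZMod N))
    (fun j => mat N a c F (i + 1) j * x j)
  simp only [Equiv.coe_addRight] at h1
  rw [← h1, ← Finset.sum_sub_distrib, Finset.mul_sum, ← Finset.sum_add_distrib]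
  exact Finset.sum_congr rfl fun j _ => by ring

lemma Q_add (a c : ℝ) (F G : ℝ × ℝ → ℂ) (x : ZMod N → ℂ) :
    Q N a c (fun p => F p + G p) x = Q N a c F x + Q N a c G x := by
  ext i
  simp only [Q, mat, Pi.add_apply, add_mul, Finset.sum_add_distrib, mul_add]

lemma Q_vadd (a c : ℝ) (F : ℝ × ℝ → ℂ) (x y : ZMod N → ℂ) :
    Q N a c F (x + y) = Q N a c F x + Q N a c F y := by
  ext i
  simp only [Q, Pi.add_apply, mul_add, Finset.sum_add_distrib]

/-- A Hilbert–Schmidt bound: it suffices to control the entries by a function of `i - j`. -/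
lemma Q_bound (a c : ℝ) (F : ℝ × ℝ → ℂ) (w : ZMod N → ℝ) {C : ℝ} (hC : 0 ≤ C)
    (hF : ∀ i j, ‖mat N a c F i j‖ ^ 2 ≤ w (i - j)) (hw : (1 / (N : ℝ)) * ∑ k, w k ≤ C ^ 2)
    (x : ZMod N → ℂ) : nrm (Q N a c F x) ≤ C * nrm x := by
  have hN : (0 : ℝ) < N := Nat.cast_pos.2 (Nat.pos_of_ne_zero (NeZero.ne N))
  apply nrm_le_of_sq hC
  have hS : ∑ k, w k ≤ N * C ^ 2 := by
    rw [one_div, inv_mul_le_iff₀ hN] at hw; exact hw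
  have hi : ∀ i, ‖Q N a c F x i‖ ^ 2 ≤ (1 / (N : ℝ)) * C ^ 2 * ∑ j, ‖x j‖ ^ 2 := by
    intro i
    have h1 : ‖∑ j, mat N a c F i j * x j‖ ≤ ∑ j, ‖mat N a c F i j‖ * ‖x j‖ :=
      (norm_sum_le _ _).trans (le_of_eq (Finset.sum_congr rfl fun j _ => norm_mul _ _))
    have h2 := Finset.sum_mul_sq_le_sq_mul_sq (Finset.univ : Finset (ZMod N))
      (fun j => ‖mat N a c F i j‖) (fun j => ‖x j‖)
    have h3 : ∑ j, ‖mat N a c F i j‖ ^ 2 ≤ N * C ^ 2 := by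
      refine le_trans (Finset.sum_le_sum fun j _ => hF i j) (le_trans (le_of_eq ?_) hS)
      exact Equiv.sum_comp (Equiv.subLeft i) w
    have h0 : (0 : ℝ) ≤ ∑ j, ‖x j‖ ^ 2 := by positivity
    have h4 : ‖∑ j, mat N a c F i j * x j‖ ^ 2 ≤ N * C ^ 2 * ∑ j, ‖x j‖ ^ 2 :=
      (pow_le_pow_left₀ (norm_nonneg _) h1 2).trans (h2.trans (by gcongr))
    have h5 : ‖Q N a c F x i‖ ^ 2 = (1 / (N : ℝ)) ^ 2 * ‖∑ j, mat N a c F i j * x j‖ ^ 2 := by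
      simp [Q, mul_pow]
    rw [h5]
    calc _ ≤ (1 / (N : ℝ)) ^ 2 * (N * C ^ 2 * ∑ j, ‖x j‖ ^ 2) := by gcongr
      _ = _ := by field_simp
  refine (Finset.sum_le_sum fun i _ => hi i).trans (le_of_eq ?_)
  rw [Finset.sum_const, Finset.card_univ, ZMod.card, nsmul_eq_mul]
  field_simp

end kernels

end Nys

end

noncomputable section
open scoped ContDiff
namespace Nys

/-! ### Uniformly smooth families of kernels -/

/-- A family of smooth kernels, indexed by the mesh parameter `N`, all of whose derivatives are
bounded uniformly in `N` and over the plane. -/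
def UB (F : ℕ → ℝ × ℝ → ℂ) : Prop :=
  (∀ N, ContDiff ℝ ∞ (F N)) ∧ ∀ k : ℕ, ∃ C, ∀ N p, ‖iteratedFDeriv ℝ k (F N) p‖ ≤ C

lemma UB.bdd {F : ℕ → ℝ × ℝ → ℂ} (hF : UB F) : ∃ C, 0 ≤ C ∧ ∀ N p, ‖F N p‖ ≤ C := by
  obtain ⟨C, hC⟩ := hF.2 0
  refine ⟨C, (norm_nonneg _).trans (hC 0 0), fun N p => ?_⟩
  simpa using hC N p

lemma UB.add {F G : ℕ → ℝ × ℝ → ℂ} (hF : UB F) (hG : UB G) : UB (fun N p => F N p + G N p) := by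
  refine ⟨fun N => (hF.1 N).add (hG.1 N), fun k => ?_⟩
  obtain ⟨C, hC⟩ := hF.2 k
  obtain ⟨D, hD⟩ := hG.2 k
  refine ⟨C + D, fun N p => ?_⟩
  have hf : ContDiffAt ℝ k (F N) p := ((hF.1 N).of_le (by exact_mod_cast le_top)).contDiffAt
  have hg : ContDiffAt ℝ k (G N) p := ((hG.1 N).of_le (by exact_mod_cast le_top)).contDiffAt
  have := iteratedFDeriv_add_apply hf hg
  change ‖iteratedFDeriv ℝ k (F N + G N) p‖ ≤ _
  rw [this]
  exact (norm_add_le _ _).trans (add_le_add (hC N p) (hD N p))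

lemma UB.mul {F G : ℕ → ℝ × ℝ → ℂ} (hF : UB F) (hG : UB G) : UB (fun N p => F N p * G N p) := by
  refine ⟨fun N => (hF.1 N).mul (hG.1 N), fun k => ?_⟩
  choose C hC using hF.2
  choose D hD using hG.2
  have hC0 : ∀ k, 0 ≤ C k := fun k => (norm_nonneg _).trans (hC k 0 0)
  refine ⟨∑ i ∈ Finset.range (k + 1), (k.choose i : ℝ) * C i * D (k - i), fun N p => ?_⟩
  refine (norm_iteratedFDeriv_mul_le (hF.1 N) (hG.1 N) p (n := k)
    (by exact_mod_cast le_top)).trans ?_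
  refine Finset.sum_le_sum fun i _ => ?_
  have := hC i N p
  have := hD (k - i) N p
  have := hC0 i
  gcongr

lemma UB.lip_aux {F : ℕ → ℝ × ℝ → ℂ} (hF : UB F) (k : ℕ) : ∃ C, 0 ≤ C ∧ ∀ N p q,
    ‖iteratedFDeriv ℝ k (F N) q - iteratedFDeriv ℝ k (F N) p‖ ≤ C * ‖q - p‖ := by
  obtain ⟨C, hC⟩ := hF.2 (k + 1)
  refine ⟨C, (norm_nonneg _).trans (hC 0 0), fun N p q => ?_⟩
  refine Convex.norm_image_sub_le_of_norm_fderiv_le (𝕜 := ℝ) (s := Set.univ) (fun x _ => ?_)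
    (fun x _ => ?_) convex_univ (Set.mem_univ p) (Set.mem_univ q)
  · have := (hF.1 N).differentiable_iteratedFDeriv (m := k) (by exact_mod_cast WithTop.coe_lt_top _)
    exact this x
  · rw [norm_fderiv_iteratedFDeriv]; exact hC N x

lemma UB.lip {F : ℕ → ℝ × ℝ → ℂ} (hF : UB F) : ∃ C, 0 ≤ C ∧ ∀ N p q,
    ‖F N q - F N p‖ ≤ C * ‖q - p‖ := by
  obtain ⟨C, h0, hC⟩ := hF.lip_aux 0
  refine ⟨C, h0, fun N p q => ?_⟩
  have h := hC N p q
  simp only [iteratedFDeriv_zero_eq_comp, Function.comp_apply, ← map_sub] at h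
  simpa using h

/-- Divided differences with step `1/N` preserve uniform smoothness. -/
lemma UB.df {F : ℕ → ℝ × ℝ → ℂ} (hF : UB F) (w : ℝ × ℝ) : UB (fun N => df N w (F N)) := by
  have hsm : ∀ N : ℕ, ContDiff ℝ ∞ (fun p => F N (p + (1 / (N : ℝ)) • w)) := fun N =>
    (hF.1 N).comp (contDiff_id.add contDiff_const)
  refine ⟨fun N => contDiff_const.mul ((hsm N).sub (hF.1 N)), fun k => ?_⟩
  obtain ⟨C, hC0, hC⟩ := hF.lip_aux k
  refine ⟨C * ‖w‖, fun N p => ?_⟩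
  have h1 : ContDiffAt ℝ k (fun p => F N (p + (1 / (N : ℝ)) • w)) p :=
    ((hsm N).of_le (by exact_mod_cast le_top)).contDiffAt
  have h2 : ContDiffAt ℝ k (F N) p := ((hF.1 N).of_le (by exact_mod_cast le_top)).contDiffAt
  have e : Nys.df N w (F N) =
      (N : ℂ) • ((fun p => F N (p + (1 / (N : ℝ)) • w)) - F N) := by
    ext q; simp [Nys.df]
  change ‖iteratedFDeriv ℝ k (Nys.df N w (F N)) p‖ ≤ _
  have h3 : ContDiffAt ℝ k ((fun p => F N (p + (1 / (N : ℝ)) • w)) - F N) p := h1.sub h2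
  rw [e, iteratedFDeriv_const_smul_apply h3, iteratedFDeriv_sub_apply h1 h2,
    iteratedFDeriv_comp_add_right, norm_smul]
  have h := hC N p (p + (1 / (N : ℝ)) • w)
  rw [add_sub_cancel_left, norm_smul] at h
  rcases Nat.eq_zero_or_pos N with h0 | h0
  · subst h0; simp; positivity
  · have hN : (0 : ℝ) < N := Nat.cast_pos.2 h0
    have hn : ‖(1 / (N : ℝ))‖ = 1 / N := by rw [Real.norm_of_nonneg]; positivity
    rw [hn] at h
    calc _ ≤ ‖(N : ℂ)‖ * (C * (1 / N * ‖w‖)) := by gcongr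
      _ = _ := by simp; field_simp

lemma UB.df_iter {F : ℕ → ℝ × ℝ → ℂ} (hF : UB F) (w : ℝ × ℝ) (l : ℕ) :
    UB (fun N => (Nys.df N w)^[l] (F N)) := by
  induction l with
  | zero => exact hF
  | succ l ih => simpa only [Function.iterate_succ_apply'] using ih.df w

lemma Per.df_iter {F : ℝ × ℝ → ℂ} (hF : Per F) (N : ℕ) (w : ℝ × ℝ) (l : ℕ) :
    Per ((Nys.df N w)^[l] F) := by
  induction l with
  | zero => exact hF
  | succ l ih => simpa only [Function.iterate_succ_apply'] using ih.df N w

/-- A continuous function on the plane that is periodic in both variables is bounded. -/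
lemma Per.bdd_of_continuous {E : Type*} [NormedAddCommGroup E] {G : ℝ × ℝ → E}
    (hc : Continuous G) (h1 : ∀ s t, G (s + 1, t) = G (s, t))
    (h2 : ∀ s t, G (s, t + 1) = G (s, t)) : ∃ C, ∀ p, ‖G p‖ ≤ C := by
  obtain ⟨C, hC⟩ := (isCompact_Icc (a := ((0 : ℝ), (0 : ℝ))) (b := (1, 1))).exists_bound_of_continuousOn
    hc.continuousOn
  refine ⟨C, fun p => ?_⟩
  have e1 : ∀ t, G (p.1, t) = G (Int.fract p.1, t) := fun t => by
    have : Function.Periodic (fun s => G (s, t)) 1 := fun s => h1 s t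
    have := (this.sub_int_mul_eq (x := p.1) ⌊p.1⌋)
    simp only [mul_one] at this
    rw [← this]; rfl
  have e2 : ∀ s, G (s, p.2) = G (s, Int.fract p.2) := fun s => by
    have : Function.Periodic (fun t => G (s, t)) 1 := fun t => h2 s t
    have := (this.sub_int_mul_eq (x := p.2) ⌊p.2⌋)
    simp only [mul_one] at this
    rw [← this]; rfl
  have : G p = G (Int.fract p.1, Int.fract p.2) := by
    rw [← e2, ← e1]
  rw [this]
  exact hC _ ⟨⟨Int.fract_nonneg _, Int.fract_nonneg _⟩,
    ⟨(Int.fract_lt_one _).le, (Int.fract_lt_one _).le⟩⟩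

lemma UB_const {F : ℝ × ℝ → ℂ} (hF : ContDiff ℝ ∞ F) (hp : Per F) : UB (fun _ => F) := by
  refine ⟨fun _ => hF, fun k => ?_⟩
  have hc : Continuous (iteratedFDeriv ℝ k F) :=
    hF.continuous_iteratedFDeriv (by exact_mod_cast le_top)
  have h1 : ∀ s t, iteratedFDeriv ℝ k F (s + 1, t) = iteratedFDeriv ℝ k F (s, t) := by
    intro s t
    have e : (fun p : ℝ × ℝ => F (p + (1, 0))) = F := by
      ext ⟨a, b⟩; simpa using (hp a b).1
    have := iteratedFDeriv_comp_add_right (𝕜 := ℝ) (f := F) k (1, 0) (s, t)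
    rw [e] at this
    simpa using this.symm
  have h2 : ∀ s t, iteratedFDeriv ℝ k F (s, t + 1) = iteratedFDeriv ℝ k F (s, t) := by
    intro s t
    have e : (fun p : ℝ × ℝ => F (p + (0, 1))) = F := by
      ext ⟨a, b⟩; simpa using (hp a b).2
    have := iteratedFDeriv_comp_add_right (𝕜 := ℝ) (f := F) k (0, 1) (s, t)
    rw [e] at this
    simpa using this.symm
  obtain ⟨C, hC⟩ := Per.bdd_of_continuous hc h1 h2
  exact ⟨C, fun _ p => hC p⟩

/-! ### The distance to the diagonal, measured by `|sin(π(s-t))|` -/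

lemma abs_sin_pi_add_int (x : ℝ) (n : ℤ) :
    |Real.sin (Real.pi * (x + n))| = |Real.sin (Real.pi * x)| := by
  rw [mul_add, mul_comm Real.pi (n : ℝ), Real.sin_add_int_mul_pi, abs_mul]
  rcases Int.even_or_odd n with h | h
  · simp [h.neg_one_zpow]
  · simp [h.neg_one_zpow]

lemma two_mul_abs_sub_round_le (x : ℝ) : 2 * |x - round x| ≤ |Real.sin (Real.pi * x)| := by
  have hr := abs_sub_round x
  set r := x - round x with hrdef
  have : |Real.sin (Real.pi * x)| = |Real.sin (Real.pi * r)| := by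
    rw [← abs_sin_pi_add_int r (round x)]; congr 3; rw [hrdef]; ring
  rw [this]
  have e : |Real.sin (Real.pi * r)| = |Real.sin (Real.pi * |r|)| := by
    rcases abs_cases r with ⟨h, _⟩ | ⟨h, _⟩
    · rw [h]
    · rw [h, mul_neg, Real.sin_neg, abs_neg]
  rw [e]
  have hpi := Real.pi_pos
  have := Real.mul_le_sin (x := Real.pi * |r|) (by positivity) (by nlinarith)
  refine le_trans (le_of_eq ?_) (this.trans (le_abs_self _))
  field_simp

/-- Uniformly smooth kernels vanishing on the diagonal vanish there to first order. -/
lemma UB.vanish {F : ℕ → ℝ × ℝ → ℂ} (hF : UB F) (hp : ∀ N, Per (F N))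
    (h0 : ∀ N s, F N (s, s) = 0) :
    ∃ C, 0 ≤ C ∧ ∀ N p, ‖F N p‖ ≤ C * |Real.sin (Real.pi * (p.1 - p.2))| := by
  obtain ⟨C, hC0, hC⟩ := hF.lip
  refine ⟨C, hC0, fun N p => ?_⟩
  obtain ⟨s, t⟩ := p
  set n := round (s - t) with hn
  have h1 := hC N (t + n, t) (s, t)
  have h2 : F N (t + n, t) = 0 := by
    have := (hp N).int t t n 0
    simp only [Int.cast_zero, add_zero] at this
    rw [this, h0]
  rw [h2, sub_zero] at h1
  refine h1.trans ?_
  gcongr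
  have h3 := two_mul_abs_sub_round_le (s - t)
  rw [Prod.mk_sub_mk, Prod.norm_mk, sub_self, norm_zero, Real.norm_eq_abs,
    max_eq_left (abs_nonneg _)]
  have : s - (t + n) = s - t - round (s - t) := by rw [hn]; ring
  rw [this]
  have := abs_nonneg (s - t - round (s - t))
  linarith

/-- The value of `|sin(π(sᵢ-tⱼ))|` on grids of offset difference `ε`, as a function of
`k = i - j`. -/
def us (N : ℕ) (ε : ℝ) (k : ZMod N) : ℝ := |Real.sin (Real.pi * gp N ε (ZMod.cast k))|

section us
variable {N : ℕ} [NeZero N]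

lemma us_intCast (ε : ℝ) (m : ℤ) :
    us N ε (m : ZMod N) = |Real.sin (Real.pi * gp N ε m)| := by
  have hp : Per (fun p : ℝ × ℝ => ((|Real.sin (Real.pi * p.1)| : ℝ) : ℂ)) := by
    intro s t
    refine ⟨?_, rfl⟩
    have := abs_sin_pi_add_int s 1
    simp only [Int.cast_one] at this
    simp [this]
  have := mat_intCast (N := N) ε 0 hp m 0
  simp only [mat] at this
  exact_mod_cast this

lemma us_sub (a c : ℝ) (m n : ℤ) :
    |Real.sin (Real.pi * (gp N a m - gp N c n))| = us N (a - c) ((m : ZMod N) - (n : ZMod N)) := by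
  have : ((m : ZMod N) - (n : ZMod N)) = ((m - n : ℤ) : ZMod N) := by push_cast; rfl
  rw [this, us_intCast]
  congr 3
  unfold gp; push_cast; ring

lemma us_lower {ε d : ℝ} (hd : ∀ k : ℤ, d ≤ |ε - k|) (k : ZMod N) : 2 * d / N ≤ us N ε k := by
  have hN : (0 : ℝ) < N := Nat.cast_pos.2 (Nat.pos_of_ne_zero (NeZero.ne N))
  obtain ⟨m, rfl⟩ := ZMod.intCast_surjective k
  rw [us_intCast]
  refine le_trans ?_ (two_mul_abs_sub_round_le _)
  set r := round (gp N ε m)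
  have h := hd (N * r - m)
  have e : gp N ε m - r = (ε - (N * r - m : ℤ)) / N := by
    unfold gp; push_cast; field_simp; ring
  rw [e, abs_div, abs_of_pos hN, mul_div_assoc]
  gcongr

lemma sum_zmod_val (f : ℕ → ℝ) : ∑ k : ZMod N, f k.val = ∑ k ∈ Finset.range N, f k := by
  cases N with
  | zero => exact absurd rfl (NeZero.ne 0)
  | succ n => exact Fin.sum_univ_eq_sum_range f (n + 1)

lemma sum_inv_sqrt_le {e : ℝ} (he : 0 < e) (n : ℕ) :
    ∑ k ∈ Finset.range (n + 1), 1 / Real.sqrt (k + e) ≤ 1 / Real.sqrt e + 2 * Real.sqrt n := by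
  induction n with
  | zero => simp
  | succ n ih =>
    rw [Finset.sum_range_succ]
    have h1 : 1 / Real.sqrt ((n + 1 : ℕ) + e) ≤ 2 * (Real.sqrt (n + 1 : ℕ) - Real.sqrt n) := by
      have hs1 : Real.sqrt (n + 1 : ℕ) ^ 2 = n + 1 := by
        rw [Real.sq_sqrt (by positivity)]; push_cast; ring
      have hs2 : Real.sqrt n ^ 2 = n := Real.sq_sqrt (by positivity)
      have hp1 : 0 < Real.sqrt (n + 1 : ℕ) := Real.sqrt_pos.2 (by positivity)
      have hp2 : 0 ≤ Real.sqrt n := Real.sqrt_nonneg _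
      have hle : 1 / Real.sqrt ((n + 1 : ℕ) + e) ≤ 1 / Real.sqrt (n + 1 : ℕ) := by
        gcongr; linarith
      refine hle.trans ?_
      rw [div_le_iff₀ hp1]
      nlinarith [sq_nonneg (Real.sqrt (n + 1 : ℕ) - Real.sqrt n)]
    linarith

/-- The Riemann sums of `|sin(πr)|^(-1/2)` on the shifted grids are uniformly bounded. -/
lemma sum_us {ε : ℝ} (hε : ∀ k : ℤ, ε ≠ k) :
    ∃ C, 0 ≤ C ∧ ∀ (N : ℕ) [NeZero N], (1 / (N : ℝ)) * ∑ k, 1 / Real.sqrt (us N ε k) ≤ C := by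
  set e0 := Int.fract ε with he0
  have h0 : 0 < e0 := by
    refine lt_of_le_of_ne (Int.fract_nonneg _) fun h => hε ⌊ε⌋ ?_
    have := Int.self_sub_floor ε
    linarith
  have h1 : e0 < 1 := Int.fract_lt_one _
  refine ⟨(1 / Real.sqrt e0 + 2) + (1 / Real.sqrt (1 - e0) + 2), by positivity, ?_⟩
  intro N _
  have hNpos : 0 < N := Nat.pos_of_ne_zero (NeZero.ne N)
  have hN : (0 : ℝ) < N := Nat.cast_pos.2 hNpos
  have hshift : ∀ k : ZMod N, us N ε k = us N e0 (k + (⌊ε⌋ : ℤ)) := by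
    intro k
    obtain ⟨m, rfl⟩ := ZMod.intCast_surjective k
    rw [← Int.cast_add, us_intCast, us_intCast]
    congr 3
    unfold gp
    push_cast
    have := Int.self_sub_floor ε
    rw [he0, ← this]; ring
  simp only [hshift]
  have hre := Equiv.sum_comp (Equiv.addRight ((⌊ε⌋ : ℤ) : ZMod N))
    (fun k => 1 / Real.sqrt (us N e0 k))
  simp only [Equiv.coe_addRight] at hre
  rw [hre]
  have hval : ∀ k : ZMod N, us N e0 k = |Real.sin (Real.pi * gp N e0 (k.val : ℤ))| := by
    intro k
    rw [← us_intCast]; simp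
  simp only [hval]
  rw [sum_zmod_val (fun k => 1 / Real.sqrt |Real.sin (Real.pi * gp N e0 (k : ℤ))|)]
  have hterm : ∀ k ∈ Finset.range N, 1 / Real.sqrt |Real.sin (Real.pi * gp N e0 (k : ℤ))| ≤
      Real.sqrt N * (1 / Real.sqrt (k + e0)) +
        Real.sqrt N * (1 / Real.sqrt ((N - 1 - k : ℕ) + (1 - e0))) := by
    intro k hk
    have hk' : k + 1 ≤ N := Finset.mem_range.1 hk
    have hkN : ((N - 1 - k : ℕ) : ℝ) = N - 1 - k := by
      rw [Nat.sub_sub, Nat.cast_sub (by omega)]; push_cast; ring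
    have hkR : (k : ℝ) + 1 ≤ N := by exact_mod_cast hk'
    rw [hkN]
    have hk0 : (0 : ℝ) ≤ k := Nat.cast_nonneg k
    set x := gp N e0 (k : ℤ) with hx
    have hxe : x = (k + e0) / N := by rw [hx]; unfold gp; push_cast; rfl
    have e1 : Real.sqrt N * (1 / Real.sqrt (k + e0)) = 1 / Real.sqrt x := by
      rw [hxe, Real.sqrt_div (by positivity)]; field_simp
    have e2 : Real.sqrt N * (1 / Real.sqrt ((N : ℝ) - 1 - k + (1 - e0))) =
        1 / Real.sqrt (1 - x) := by
      have : 1 - x = ((N : ℝ) - 1 - k + (1 - e0)) / N := by rw [hxe]; field_simp; ring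
      rw [this, Real.sqrt_div (by linarith)]; field_simp
    rw [e1, e2]
    have hx0 : 0 < x := by rw [hxe]; positivity
    have hx1 : x < 1 := by rw [hxe, div_lt_one hN]; linarith
    have hs := two_mul_abs_sub_round_le x
    have hmin : x ≤ |Real.sin (Real.pi * x)| ∨ 1 - x ≤ |Real.sin (Real.pi * x)| := by
      have hr : round x = 0 ∨ round x = 1 := by
        rw [round_eq]
        have a1 : 0 ≤ ⌊x + 1 / 2⌋ := Int.floor_nonneg.2 (by linarith)
        have a2 : ⌊x + 1 / 2⌋ < 2 := Int.floor_lt.2 (by push_cast; linarith)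
        omega
      rcases hr with hr | hr
      · left; rw [hr] at hs; simp only [Int.cast_zero, sub_zero, abs_of_pos hx0] at hs; linarith
      · right; rw [hr] at hs
        simp only [Int.cast_one, abs_sub_comm x 1, abs_of_pos (sub_pos.2 hx1)] at hs; linarith
    rcases hmin with h | h
    · have : 1 / Real.sqrt |Real.sin (Real.pi * x)| ≤ 1 / Real.sqrt x := by
        have := Real.sqrt_pos.2 hx0
        gcongr
      have : 0 ≤ 1 / Real.sqrt (1 - x) := by positivity
      linarith
    · have : 1 / Real.sqrt |Real.sin (Real.pi * x)| ≤ 1 / Real.sqrt (1 - x) := by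
        have := Real.sqrt_pos.2 (sub_pos.2 hx1)
        gcongr
      have : 0 ≤ 1 / Real.sqrt x := by positivity
      linarith
  have hsum : ∀ e : ℝ, 0 < e → (1 / (N : ℝ)) * (Real.sqrt N *
      ∑ k ∈ Finset.range N, 1 / Real.sqrt (k + e)) ≤ 1 / Real.sqrt e + 2 := by
    intro e he
    obtain ⟨n, rfl⟩ : ∃ n, N = n + 1 := ⟨N - 1, by omega⟩
    have h := sum_inv_sqrt_le he n
    have hs : Real.sqrt ((n + 1 : ℕ) : ℝ) ^ 2 = ((n + 1 : ℕ) : ℝ) := Real.sq_sqrt hN.le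
    have hsp : 1 ≤ Real.sqrt ((n + 1 : ℕ) : ℝ) := Real.one_le_sqrt.2 (by push_cast; linarith [(Nat.cast_nonneg n : (0:ℝ) ≤ n)])
    have hm : Real.sqrt n ≤ Real.sqrt ((n + 1 : ℕ) : ℝ) := Real.sqrt_le_sqrt (by push_cast; linarith)
    set S := ∑ k ∈ Finset.range (n + 1), 1 / Real.sqrt (k + e)
    set q := Real.sqrt ((n + 1 : ℕ) : ℝ)
    rw [← hs]
    have hq : 1 / q ^ 2 * (q * S) = S / q := by field_simp
    rw [hq, div_le_iff₀ (by linarith)]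
    have : 0 ≤ 1 / Real.sqrt e := by positivity
    nlinarith
  calc (1 / (N : ℝ)) * ∑ k ∈ Finset.range N, 1 / Real.sqrt |Real.sin (Real.pi * gp N e0 (k : ℤ))|
      ≤ (1 / (N : ℝ)) * ∑ k ∈ Finset.range N, (Real.sqrt N * (1 / Real.sqrt (k + e0)) +
        Real.sqrt N * (1 / Real.sqrt ((N - 1 - k : ℕ) + (1 - e0)))) := by
        gcongr with k hk
        exact hterm k hk
    _ = (1 / (N : ℝ)) * (Real.sqrt N * ∑ k ∈ Finset.range N, 1 / Real.sqrt (k + e0)) +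
        (1 / (N : ℝ)) * (Real.sqrt N * ∑ k ∈ Finset.range N, 1 / Real.sqrt (k + (1 - e0))) := by
        rw [Finset.sum_add_distrib, ← Finset.mul_sum, ← Finset.mul_sum, mul_add]
        congr 3
        exact Finset.sum_range_reflect (fun k => 1 / Real.sqrt ((k : ℝ) + (1 - e0))) N
    _ ≤ _ := add_le_add (hsum e0 h0) (hsum (1 - e0) (by linarith))

end us
end Nys

end

noncomputable section
open scoped ContDiff
namespace Nys

/-! ### The logarithmic kernel and its regularisation -/

/-- The kernel `log(sin²(π(s-t)))`. -/
def Lk (p : ℝ × ℝ) : ℂ := (Real.log (Real.sin (Real.pi * (p.1 - p.2)) ^ 2) : ℂ)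

/-- The smooth regularisation `log(sin²(π(s-t)) + η)` of `Lk`. -/
def Le (η : ℝ) (p : ℝ × ℝ) : ℂ := (Real.log (Real.sin (Real.pi * (p.1 - p.2)) ^ 2 + η) : ℂ)

lemma sin_sq_per (s : ℝ) : Real.sin (Real.pi * (s + 1)) ^ 2 = Real.sin (Real.pi * s) ^ 2 := by
  rw [mul_add, mul_one, Real.sin_add_pi, neg_sq]

lemma Per_of_sin_sq (f : ℝ → ℂ) :
    Per (fun p : ℝ × ℝ => f (Real.sin (Real.pi * (p.1 - p.2)) ^ 2)) := by
  intro s t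
  constructor
  · simp only [add_sub_right_comm, sin_sq_per]
  · have := sin_sq_per (s - (t + 1))
    simp only
    rw [← this]
    congr 4
    ring

lemma Per_Lk : Per Lk := Per_of_sin_sq (fun x => (Real.log x : ℂ))

lemma Per_Le (η : ℝ) : Per (Le η) := Per_of_sin_sq (fun x => (Real.log (x + η) : ℂ))

lemma contDiff_Le {η : ℝ} (hη : 0 < η) : ContDiff ℝ ∞ (Le η) := by
  unfold Le
  refine Complex.ofRealCLM.contDiff.comp (ContDiff.log ?_ fun p => by positivity)
  refine ContDiff.add (ContDiff.pow (Real.contDiff_sin.comp ?_) 2) contDiff_const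
  exact contDiff_const.mul (contDiff_fst.sub contDiff_snd)

lemma df_mul_diag (N : ℕ) (B : ℝ × ℝ → ℂ) :
    df N (1, 1) (fun p => B p * Lk p) = fun p => df N (1, 1) B p * Lk p := by
  ext p
  have : Lk (p + (1 / (N : ℝ)) • (1, 1)) = Lk p := by
    simp [Lk]
  simp only [df, this]; ring

/-- The auxiliary weight `ρ u^(-1/4)`. -/
def qw (ρ u : ℝ) : ℝ := ρ / Real.sqrt (Real.sqrt u)

/-- `log(u² + ρ⁸) - log(u²)`, the error of the regularisation. -/
def gw (ρ u : ℝ) : ℝ := Real.log (u ^ 2 + ρ ^ 8) - Real.log (u ^ 2)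

lemma qw_nonneg {ρ u : ℝ} (hρ : 0 ≤ ρ) : 0 ≤ qw ρ u := by unfold qw; positivity

lemma qw_pow {ρ u : ℝ} (hu : 0 < u) : qw ρ u ^ 8 = ρ ^ 8 / u ^ 2 := by
  unfold qw
  rw [div_pow]
  congr 1
  have h1 : Real.sqrt (Real.sqrt u) ^ 2 = Real.sqrt u := Real.sq_sqrt (Real.sqrt_nonneg _)
  have h2 : Real.sqrt u ^ 2 = u := Real.sq_sqrt hu.le
  calc Real.sqrt (Real.sqrt u) ^ 8 = (Real.sqrt (Real.sqrt u) ^ 2) ^ 4 := by ring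
    _ = (Real.sqrt u ^ 2) ^ 2 := by rw [h1]; ring
    _ = _ := by rw [h2]

lemma qw_sq (ρ u : ℝ) : qw ρ u ^ 2 = ρ ^ 2 * (1 / Real.sqrt u) := by
  unfold qw
  rw [div_pow, Real.sq_sqrt (Real.sqrt_nonneg _)]; ring

lemma gw_eq {ρ u : ℝ} (hρ : 0 < ρ) (hu : 0 < u) : gw ρ u = Real.log (1 + qw ρ u ^ 8) := by
  rw [gw, ← Real.log_div (by positivity) (by positivity), qw_pow hu]
  congr 1
  field_simp

lemma gw_nonneg {ρ u : ℝ} (hρ : 0 < ρ) (hu : 0 < u) : 0 ≤ gw ρ u := by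
  rw [gw_eq hρ hu]; exact Real.log_nonneg (by have := qw_nonneg (u := u) hρ.le; simp; positivity)

lemma one_add_pow_le {q : ℝ} (hq : 0 ≤ q) : 1 + q ^ 8 ≤ (1 + q) ^ 8 := by
  have : (1 + q) ^ 8 = 1 + q ^ 8 + (8 * q + 28 * q ^ 2 + 56 * q ^ 3 + 70 * q ^ 4 + 56 * q ^ 5
    + 28 * q ^ 6 + 8 * q ^ 7) := by ring
  rw [this]
  have : 0 ≤ 8 * q + 28 * q ^ 2 + 56 * q ^ 3 + 70 * q ^ 4 + 56 * q ^ 5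
    + 28 * q ^ 6 + 8 * q ^ 7 := by positivity
  linarith

lemma gw_le {ρ u : ℝ} (hρ : 0 < ρ) (hu : 0 < u) : gw ρ u ≤ 8 * qw ρ u := by
  have hq := qw_nonneg (u := u) hρ.le
  rw [gw_eq hρ hu]
  calc Real.log (1 + qw ρ u ^ 8) ≤ Real.log ((1 + qw ρ u) ^ 8) :=
        Real.log_le_log (by positivity) (one_add_pow_le hq)
    _ = 8 * Real.log (1 + qw ρ u) := by rw [Real.log_pow]; norm_num
    _ ≤ 8 * qw ρ u := by
        have := Real.log_le_sub_one_of_pos (x := 1 + qw ρ u) (by positivity)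
        linarith

lemma pow8_div_le {q : ℝ} (hq : 0 ≤ q) : q ^ 8 / (1 + q ^ 8) ≤ q := by
  rw [div_le_iff₀ (by positivity)]
  rcases le_total q 1 with h | h
  · have : q ^ 8 ≤ q ^ 1 := pow_le_pow_of_le_one hq h (by norm_num)
    have : 0 ≤ q * q ^ 8 := by positivity
    linarith
  · have : 0 ≤ q ^ 8 := by positivity
    nlinarith

/-- The variation of `gw` between comparable points, weighted by the distance `u` to the singularity.
-/
lemma gw_diff_aux {ρ u v δ κ : ℝ} (hρ : 0 < ρ) (hu : 0 < u) (huv : u ≤ v) (hδ : v - u ≤ δ)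
    (hκ : v ≤ κ * u) : 0 ≤ gw ρ u - gw ρ v ∧ u * (gw ρ u - gw ρ v) ≤ (κ + 1) * δ * qw ρ v := by
  have hv : 0 < v := hu.trans_le huv
  have hδ0 : 0 ≤ δ := (sub_nonneg.2 huv).trans hδ
  have hq := qw_nonneg (u := v) hρ.le
  have hq8 := qw_pow (ρ := ρ) hv
  have hq8u := qw_pow (ρ := ρ) hu
  have hle : qw ρ v ^ 8 ≤ qw ρ u ^ 8 := by rw [hq8, hq8u]; gcongr
  rw [gw_eq hρ hu, gw_eq hρ hv]
  have hqu := qw_nonneg (u := u) hρ.le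
  constructor
  · exact sub_nonneg.2 (Real.log_le_log (by positivity) (by linarith))
  · rw [← Real.log_div (by positivity) (by positivity)]
    have h1 := Real.log_le_sub_one_of_pos (x := (1 + qw ρ u ^ 8) / (1 + qw ρ v ^ 8))
      (by positivity)
    have h2 := pow8_div_le hq
    have h3 : u * ((1 + qw ρ u ^ 8) / (1 + qw ρ v ^ 8) - 1) =
        (qw ρ v ^ 8 / (1 + qw ρ v ^ 8)) * ((v - u) * ((v + u) / u)) := by
      have : qw ρ u ^ 8 = qw ρ v ^ 8 * (v ^ 2 / u ^ 2) := by rw [hq8, hq8u]; field_simp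
      rw [this]
      field_simp
      ring
    have h4 : (v + u) / u ≤ κ + 1 := by rw [div_le_iff₀ hu]; linarith
    have h5 : 0 ≤ (v + u) / u := by positivity
    calc u * Real.log ((1 + qw ρ u ^ 8) / (1 + qw ρ v ^ 8))
        ≤ u * ((1 + qw ρ u ^ 8) / (1 + qw ρ v ^ 8) - 1) := by gcongr
      _ = _ := h3
      _ ≤ qw ρ v * (δ * (κ + 1)) := by
          have : 0 ≤ v - u := sub_nonneg.2 huv
          have : 0 ≤ qw ρ v ^ 8 / (1 + qw ρ v ^ 8) := by positivity
          gcongr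
      _ = _ := by ring

lemma gw_diff {ρ u v δ κ : ℝ} (hρ : 0 < ρ) (hu : 0 < u) (hv : 0 < v) (hδ : |v - u| ≤ δ)
    (hκ : v ≤ κ * u) (hκ' : u ≤ κ * v) (hκ1 : 1 ≤ κ) :
    u * |gw ρ u - gw ρ v| ≤ κ * (κ + 1) * δ * (qw ρ u + qw ρ v) := by
  have hqu := qw_nonneg (u := u) hρ.le
  have hqv := qw_nonneg (u := v) hρ.le
  have hδ0 : 0 ≤ δ := (abs_nonneg _).trans hδ
  have hd := abs_le.1 hδ
  rcases le_total u v with h | h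
  · obtain ⟨h1, h2⟩ := gw_diff_aux hρ hu h hd.2 hκ
    rw [abs_of_nonneg h1]
    refine h2.trans ?_
    have e1 : 0 ≤ (κ + 1) * δ := by positivity
    calc (κ + 1) * δ * qw ρ v ≤ (κ + 1) * δ * (qw ρ u + qw ρ v) := by gcongr; linarith
      _ = 1 * ((κ + 1) * δ * (qw ρ u + qw ρ v)) := by ring
      _ ≤ κ * ((κ + 1) * δ * (qw ρ u + qw ρ v)) := by gcongr
      _ = _ := by ring
  · obtain ⟨h1, h2⟩ := gw_diff_aux (δ := δ) hρ hv h (by linarith [hd.1]) hκ'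
    rw [abs_sub_comm, abs_of_nonneg h1]
    calc u * (gw ρ v - gw ρ u) ≤ κ * v * (gw ρ v - gw ρ u) := by gcongr
      _ = κ * (v * (gw ρ v - gw ρ u)) := by ring
      _ ≤ κ * ((κ + 1) * δ * qw ρ u) := by gcongr
      _ ≤ κ * ((κ + 1) * δ * (qw ρ u + qw ρ v)) := by gcongr; linarith
      _ = _ := by ring

lemma abs_log_sq_le {u : ℝ} (hu : 0 < u) (hu1 : u ≤ 1) : |Real.log (u ^ 2)| ≤ 8 * qw 1 u := by
  have hs : 0 < Real.sqrt (Real.sqrt u) := Real.sqrt_pos.2 (Real.sqrt_pos.2 hu)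
  have hq8 := qw_pow (ρ := 1) hu
  have hq : 0 < qw 1 u := by unfold qw; positivity
  have h1 : Real.log (u ^ 2) = -(8 * Real.log (qw 1 u)) := by
    have : u ^ 2 = (qw 1 u ^ 8)⁻¹ := by rw [hq8]; simp
    rw [this, Real.log_inv, Real.log_pow]; norm_num
  have h2 : Real.log (u ^ 2) ≤ 0 := Real.log_nonpos (by positivity) (by nlinarith)
  rw [abs_of_nonpos h2, h1, neg_neg]
  have := Real.log_le_sub_one_of_pos hq
  linarith

lemma Lk_eq (p : ℝ × ℝ) :
    Lk p = (Real.log (|Real.sin (Real.pi * (p.1 - p.2))| ^ 2) : ℂ) := by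
  rw [Lk, sq_abs]

lemma Le_sub_Lk (ρ : ℝ) (p : ℝ × ℝ) :
    Le (ρ ^ 8) p - Lk p = (gw ρ |Real.sin (Real.pi * (p.1 - p.2))| : ℂ) := by
  rw [Lk, Le, gw, sq_abs]; push_cast; rfl

lemma qw_one_sq_le {u : ℝ} : qw 1 u ^ 2 = 1 / Real.sqrt u := by
  rw [qw_sq]; ring

lemma one_le_qw {u : ℝ} (hu : 0 < u) (hu1 : u ≤ 1) : 1 ≤ qw 1 u := by
  unfold qw
  rw [le_div_iff₀ (Real.sqrt_pos.2 (Real.sqrt_pos.2 hu)), one_mul]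
  exact Real.sqrt_le_one.2 (Real.sqrt_le_one.2 hu1)

lemma us_le_one {N : ℕ} (ε : ℝ) (k : ZMod N) : us N ε k ≤ 1 := Real.abs_sin_le_one _

/-- A point off the integers has positive distance to them. -/
lemma exists_dist {ε : ℝ} (hε : ∀ k : ℤ, ε ≠ k) : ∃ d, 0 < d ∧ ∀ k : ℤ, d ≤ |ε - k| :=
  ⟨|ε - round ε|, abs_pos.2 (sub_ne_zero.2 (hε _)), fun k => round_le ε k⟩

/-- Logarithmic kernels are bounded by a constant multiple of `|sin(π(s-t))|^(-1/4)`. -/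
lemma log_ker_bound {A K : ℕ → ℝ × ℝ → ℂ} (hA : UB A) (hK : UB K) :
    ∃ C, 0 ≤ C ∧ ∀ N p, 0 < |Real.sin (Real.pi * (p.1 - p.2))| →
      ‖A N p * Lk p + K N p‖ ≤ C * qw 1 |Real.sin (Real.pi * (p.1 - p.2))| := by
  obtain ⟨C1, h1, hC1⟩ := hA.bdd
  obtain ⟨C2, h2, hC2⟩ := hK.bdd
  refine ⟨C1 * 8 + C2, by positivity, fun N p hp => ?_⟩
  have hl := abs_log_sq_le hp (Real.abs_sin_le_one _)
  have ho := one_le_qw hp (Real.abs_sin_le_one _)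
  set q := qw 1 |Real.sin (Real.pi * (p.1 - p.2))|
  calc ‖A N p * Lk p + K N p‖ ≤ ‖A N p‖ * ‖Lk p‖ + ‖K N p‖ := by
        refine (norm_add_le _ _).trans (by rw [norm_mul])
    _ ≤ C1 * (8 * q) + C2 * q := by
        have : ‖Lk p‖ ≤ 8 * q := by rw [Lk_eq, Complex.norm_real]; exact hl
        have h3 := hC1 N p
        have h4 := hC2 N p
        have : C2 ≤ C2 * q := by nlinarith
        gcongr
        exact h4.trans this
    _ = _ := by ring

lemma us_pos {N : ℕ} [NeZero N] {ε : ℝ} (hε : ∀ k : ℤ, ε ≠ k) (k : ZMod N) : 0 < us N ε k := by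
  have hN : (0 : ℝ) < N := Nat.cast_pos.2 (Nat.pos_of_ne_zero (NeZero.ne N))
  obtain ⟨d, hd, h⟩ := exists_dist hε
  exact lt_of_lt_of_le (by positivity) (us_lower h k)

/-- Quadrature operators of logarithmic kernels are bounded. -/
lemma Q_log_bound {A K : ℕ → ℝ × ℝ → ℂ} (hA : UB A) (hK : UB K) (hAp : ∀ N, Per (A N))
    (hKp : ∀ N, Per (K N)) {a c : ℝ} (hε : ∀ k : ℤ, a - c ≠ k) :
    ∃ C, 0 ≤ C ∧ ∀ (N : ℕ) [NeZero N] (x : ZMod N → ℂ),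
      nrm (Q N a c (fun p => A N p * Lk p + K N p) x) ≤ C * nrm x := by
  obtain ⟨C, hC0, hC⟩ := log_ker_bound hA hK
  obtain ⟨S, hS0, hS⟩ := sum_us hε
  refine ⟨Real.sqrt (C ^ 2 * S), by positivity, ?_⟩
  intro N _ x
  refine Q_bound a c _ (fun k => C ^ 2 * (1 / Real.sqrt (us N (a - c) k))) (by positivity) ?_ ?_ x
  · intro i j
    obtain ⟨m, rfl⟩ := ZMod.intCast_surjective i
    obtain ⟨n, rfl⟩ := ZMod.intCast_surjective j
    rw [mat_intCast a c (((hAp N).mul Per_Lk).add (hKp N)), ← us_sub]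
    have hpos := us_pos hε ((m : ZMod N) - (n : ZMod N))
    rw [← us_sub] at hpos
    have := hC N (gp N a m, gp N c n) hpos
    rw [← qw_one_sq_le, ← mul_pow]
    exact pow_le_pow_left₀ (norm_nonneg _) this 2
  · rw [Real.sq_sqrt (by positivity), ← Finset.mul_sum, mul_left_comm]
    have := hS N
    gcongr

lemma abs_abs_sin_sub_le (x y : ℝ) : |(|Real.sin x| - |Real.sin y|)| ≤ |x - y| := by
  refine (abs_abs_sub_abs_le _ _).trans ?_
  have := Real.abs_sin_sub_sin_le x y
  exact this

/-- If `B` vanishes on the diagonal, the divided difference of `B` times the regularisation error of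
the logarithm, which is concentrated near the diagonal, gives an operator of norm `O(ρ)`. -/
lemma near_bound {B : ℕ → ℝ × ℝ → ℂ} (hB : UB B) (hBp : ∀ N, Per (B N))
    (hB0 : ∀ N s, B N (s, s) = 0) {a c : ℝ} (hε : ∀ k : ℤ, a - c ≠ k) :
    ∃ C, 0 ≤ C ∧ ∀ ρ : ℝ, 0 < ρ → ∀ (N : ℕ) [NeZero N] (x : ZMod N → ℂ),
      nrm (Q N a c (df N (1, 0) (fun p => B N p * (Le (ρ ^ 8) p - Lk p))) x) ≤ C * ρ * nrm x := by
  obtain ⟨d, hd, hdl⟩ := exists_dist hε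
  obtain ⟨S, hS0, hS⟩ := sum_us hε
  obtain ⟨C1, hC10, hC1⟩ := hB.vanish hBp hB0
  obtain ⟨C2, hC20, hC2⟩ := (hB.df (1, 0)).bdd
  set κ : ℝ := 1 + Real.pi / (2 * d) with hκ
  have hpi := Real.pi_pos
  have hκ1 : 1 ≤ κ := by rw [hκ]; simp; positivity
  set D : ℝ := C1 * (κ * (κ + 1) * Real.pi) + 8 * C2 with hD
  have hD0 : 0 ≤ D := by rw [hD]; positivity
  refine ⟨Real.sqrt (4 * D ^ 2 * S), by positivity, fun ρ hρ N _ x => ?_⟩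
  have hN : (0 : ℝ) < N := Nat.cast_pos.2 (Nat.pos_of_ne_zero (NeZero.ne N))
  refine Q_bound a c _ (fun k => 2 * D ^ 2 * ρ ^ 2 * (1 / Real.sqrt (us N (a - c) k) +
    1 / Real.sqrt (us N (a - c) (k + 1)))) (by positivity) ?_ ?_ x
  · intro i j
    obtain ⟨m, rfl⟩ := ZMod.intCast_surjective i
    obtain ⟨n, rfl⟩ := ZMod.intCast_surjective j
    have hper : Per (fun p => B N p * (Le (ρ ^ 8) p - Lk p)) := by
      have h1 : Per (fun p => Le (ρ ^ 8) p - Lk p) :=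
        Per_of_sin_sq (fun x => (Real.log (x + ρ ^ 8) : ℂ) - (Real.log x : ℂ))
      exact (hBp N).mul h1
    rw [mat_intCast a c (hper.df N _)]
    have hlu := us_lower hdl ((m : ZMod N) - (n : ZMod N))
    have hlv := us_lower hdl ((m : ZMod N) - (n : ZMod N) + 1)
    have ev : ((m : ZMod N) - (n : ZMod N) + 1) = ((m + 1 : ℤ) : ZMod N) - (n : ZMod N) := by
      push_cast; ring
    rw [ev] at hlv ⊢
    have e2 := us_sub (N := N) a c (m + 1) n
    have e1 := us_sub (N := N) a c m n
    rw [gp_succ] at e2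
    rw [← e1] at hlu ⊢
    rw [← e2] at hlv ⊢
    set s := gp N a m
    set t := gp N c n
    set u := |Real.sin (Real.pi * (s - t))| with hu
    set v := |Real.sin (Real.pi * (s + 1 / N - t))| with hv
    have hu0 : 0 < u := lt_of_lt_of_le (by positivity) hlu
    have hv0 : 0 < v := lt_of_lt_of_le (by positivity) hlv
    have huv : |v - u| ≤ Real.pi * (1 / N) := by
      refine (abs_abs_sin_sub_le _ _).trans (le_of_eq ?_)
      rw [← mul_sub, abs_mul, abs_of_pos hpi]
      congr 1
      rw [show s + 1 / N - t - (s - t) = 1 / (N : ℝ) by ring, abs_of_pos (by positivity)]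
    have hκu : ∀ z : ℝ, 2 * d / N ≤ z → Real.pi * (1 / N) ≤ (κ - 1) * z := by
      intro z hz
      rw [hκ]
      calc Real.pi * (1 / N) = (Real.pi / (2 * d)) * (2 * d / N) := by field_simp
        _ ≤ (Real.pi / (2 * d)) * z := by gcongr
        _ = _ := by ring
    have hab := abs_le.1 huv
    have hg := gw_diff hρ hu0 hv0 huv (κ := κ) (by linarith [hκu u hlu]) (by linarith [hκu v hlv]) hκ1
    have hqu := qw_nonneg (u := u) hρ.le
    have hqv := qw_nonneg (u := v) hρ.le
    have hdec : df N (1, 0) (fun p => B N p * (Le (ρ ^ 8) p - Lk p)) (s, t) =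
        df N (1, 0) (B N) (s, t) * (gw ρ v : ℂ) + N * (B N (s, t) * ((gw ρ v : ℂ) - (gw ρ u : ℂ))) := by
      simp only [df, Le_sub_Lk]
      simp only [Prod.smul_mk, Prod.mk_add_mk, smul_eq_mul, mul_one, mul_zero, add_zero]
      rw [← hu, ← hv]
      ring
    have hb : ‖df N (1, 0) (fun p => B N p * (Le (ρ ^ 8) p - Lk p)) (s, t)‖ ≤
        D * (qw ρ u + qw ρ v) := by
      rw [hdec]
      refine (norm_add_le _ _).trans ?_
      rw [norm_mul, norm_mul, norm_mul, Complex.norm_natCast, Complex.norm_real, ← Complex.ofReal_sub,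
        Complex.norm_real, Real.norm_eq_abs, Real.norm_eq_abs, abs_of_nonneg (gw_nonneg hρ hv0),
        abs_sub_comm (gw ρ v)]
      have a1 : ‖df N (1, 0) (B N) (s, t)‖ * gw ρ v ≤ C2 * (8 * qw ρ v) := by
        have := hC2 N (s, t)
        have := gw_le hρ hv0
        have := gw_nonneg hρ hv0
        gcongr
      have a2 : (N : ℝ) * (‖B N (s, t)‖ * |gw ρ u - gw ρ v|) ≤
          C1 * (κ * (κ + 1) * Real.pi) * (qw ρ u + qw ρ v) := by
        calc (N : ℝ) * (‖B N (s, t)‖ * |gw ρ u - gw ρ v|)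
            ≤ N * ((C1 * u) * |gw ρ u - gw ρ v|) := by
              have := hC1 N (s, t); gcongr
          _ = N * C1 * (u * |gw ρ u - gw ρ v|) := by ring
          _ ≤ N * C1 * (κ * (κ + 1) * (Real.pi * (1 / N)) * (qw ρ u + qw ρ v)) := by gcongr
          _ = _ := by field_simp
      rw [hD]
      nlinarith [mul_nonneg hC20 hqu]
    calc _ ≤ (D * (qw ρ u + qw ρ v)) ^ 2 := pow_le_pow_left₀ (norm_nonneg _) hb 2
      _ ≤ 2 * D ^ 2 * (qw ρ u ^ 2 + qw ρ v ^ 2) := by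
          have : 0 ≤ D ^ 2 := by positivity
          nlinarith [mul_nonneg this (sq_nonneg (qw ρ u - qw ρ v))]
      _ = _ := by rw [qw_sq, qw_sq]; ring
  · have h1 := Equiv.sum_comp (Equiv.addRight (1 : ZMod N))
      (fun k => 1 / Real.sqrt (us N (a - c) k))
    simp only [Equiv.coe_addRight] at h1
    rw [← Finset.mul_sum, Finset.sum_add_distrib, h1, mul_pow, Real.sq_sqrt (by positivity)]
    have := hS N
    calc _ = 4 * D ^ 2 * ρ ^ 2 * ((1 / (N : ℝ)) * ∑ k, 1 / Real.sqrt (us N (a - c) k)) := by ring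
      _ ≤ 4 * D ^ 2 * ρ ^ 2 * S := by gcongr
      _ = _ := by ring

/-- Quadrature operators with uniformly bounded entries are bounded. -/
lemma Q_bdd {F : ℕ → ℝ × ℝ → ℂ} (hF : UB F) (a c : ℝ) :
    ∃ C, 0 ≤ C ∧ ∀ (N : ℕ) [NeZero N] (x : ZMod N → ℂ), nrm (Q N a c (F N) x) ≤ C * nrm x := by
  obtain ⟨C, hC0, hC⟩ := hF.bdd
  refine ⟨C, hC0, fun N _ x => ?_⟩
  have hN : (0 : ℝ) < N := Nat.cast_pos.2 (Nat.pos_of_ne_zero (NeZero.ne N))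
  refine Q_bound a c _ (fun _ => C ^ 2) hC0 (fun i j => ?_) ?_ x
  · exact pow_le_pow_left₀ (norm_nonneg _) (hC N _) 2
  · rw [Finset.sum_const, Finset.card_univ, ZMod.card, nsmul_eq_mul]
    field_simp
    exact le_rfl

/-- When the logarithm's coefficient vanishes on the diagonal, the twice differenced kernel is of
order zero up to an arbitrarily small multiple of a first-order term. -/
lemma order_zero {B K : ℕ → ℝ × ℝ → ℂ} (hB : UB B) (hBp : ∀ N, Per (B N))
    (hB0 : ∀ N s, B N (s, s) = 0) (hK : UB K) {a c : ℝ}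
    (hε : ∀ k : ℤ, a - c ≠ k) {θ : ℝ} (hθ : 0 < θ) :
    ∃ C, 0 ≤ C ∧ ∀ (N : ℕ) [NeZero N] (x : ZMod N → ℂ),
      nrm (Q N a c (df N (1, 0) (df N (0, 1) (fun p => B N p * Lk p + K N p))) x) ≤
        θ * nrm (dl x) + C * nrm x := by
  obtain ⟨C, hC0, hC⟩ := near_bound hB hBp hB0 hε
  set ρ : ℝ := θ / (C + 1) with hρ
  have hρ0 : 0 < ρ := by positivity
  have hsm : UB (fun N p => B N p * Le (ρ ^ 8) p + K N p) :=
    (hB.mul (UB_const (contDiff_Le (by positivity)) (Per_Le _))).add hK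
  obtain ⟨D, hD0, hD⟩ := Q_bdd ((hsm.df (0, 1)).df (1, 0)) a c
  refine ⟨D, hD0, fun N _ x => ?_⟩
  set G : ℝ × ℝ → ℂ := fun p => B N p * (Le (ρ ^ 8) p - Lk p) with hG
  have hGp : Per G := by
    have h1 : Per (fun p => Le (ρ ^ 8) p - Lk p) :=
      Per_of_sin_sq (fun x => (Real.log (x + ρ ^ 8) : ℂ) - (Real.log x : ℂ))
    exact (hBp N).mul h1
  have e : df N (1, 0) (df N (0, 1) (fun p => B N p * Lk p + K N p)) =
      fun p => df N (1, 0) (df N (0, 1) (fun p => B N p * Le (ρ ^ 8) p + K N p)) p +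
        df N (0, 1) (df N (1, 0) (fun p => -G p)) p := by
    rw [df_comm N (0, 1) (1, 0)]
    ext p
    simp only [df, hG]
    ring
  have e2 : df N (0, 1) (df N (1, 0) (fun p => -G p)) =
      fun p => (-1) * df N (0, 1) (df N (1, 0) G) p := by
    ext p; simp only [df]; ring
  have e3 : Q N a c (fun p => (-1) * df N (0, 1) (df N (1, 0) G) p) x =
      -Q N a c (df N (0, 1) (df N (1, 0) G)) x := by
    ext i; simp [Q, mat]
  rw [e, Q_add, e2, e3, Q_df01 a c (hGp.df N _), neg_neg]
  refine (nrm_add_le _ _).trans ?_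
  have h1 := hD N x
  have h2 := hC ρ hρ0 N (db x)
  rw [nrm_db] at h2
  have h3 : C * ρ ≤ θ := by
    rw [hρ, mul_div_assoc', div_le_iff₀ (by positivity)]
    nlinarith
  have h4 := mul_le_mul_of_nonneg_right h3 (nrm_nonneg (dl x))
  linarith

end Nys

end

noncomputable section
open scoped ContDiff ComplexConjugate
namespace Nys

/-! ### The discrete Fourier transform -/

section dft
variable {N : ℕ} [NeZero N]

local notation "ee" => (ZMod.stdAddChar (N := N))

lemma ee_norm (k : ZMod N) : ‖ee k‖ = 1 := by
  rw [ZMod.stdAddChar_apply]; exact Circle.norm_coe _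

lemma ee_conj (k : ZMod N) : conj (ee k) = ee (-k) := by
  rw [AddChar.map_neg_eq_inv, ← Complex.inv_eq_conj (ee_norm k)]

lemma dft_inv (x : ZMod N → ℂ) (j : ZMod N) : ∑ k, ee (j * k) * ZMod.dft x k = N * x j := by
  have h := congrFun (ZMod.dft_dft x) (-j)
  rw [ZMod.dft_apply] at h
  simp only [neg_neg, smul_eq_mul] at h
  rw [← h]
  refine Finset.sum_congr rfl fun k _ => ?_
  congr 2; ring

/-- Parseval's identity for the discrete Fourier transform. -/
lemma parseval (x : ZMod N → ℂ) : ∑ k, ‖ZMod.dft x k‖ ^ 2 = N * ∑ j, ‖x j‖ ^ 2 := by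
  have h : ∑ k, conj (ZMod.dft x k) * ZMod.dft x k = N * ∑ j, conj (x j) * x j := by
    calc ∑ k, conj (ZMod.dft x k) * ZMod.dft x k
        = ∑ k, ∑ j, conj (x j) * (ee (j * k) * ZMod.dft x k) := by
          refine Finset.sum_congr rfl fun k _ => ?_
          conv_lhs => arg 1; rw [ZMod.dft_apply]
          rw [map_sum, Finset.sum_mul]
          refine Finset.sum_congr rfl fun j _ => ?_
          rw [smul_eq_mul, map_mul, ee_conj, neg_neg]; ring
      _ = ∑ j, conj (x j) * (N * x j) := by
          rw [Finset.sum_comm]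
          refine Finset.sum_congr rfl fun j _ => ?_
          rw [← Finset.mul_sum, dft_inv]
      _ = _ := by rw [Finset.mul_sum]; exact Finset.sum_congr rfl fun j _ => by ring
  simp only [Complex.conj_mul'] at h
  exact_mod_cast h

lemma nrm_dft (x : ZMod N → ℂ) : nrm (ZMod.dft x) = Real.sqrt N * nrm x := by
  rw [nrm_eq, nrm_eq, parseval, Real.sqrt_mul (by positivity)]

lemma dft_conv (f g : ZMod N → ℂ) (k : ZMod N) :
    ZMod.dft (fun i => ∑ j, f (i - j) * g j) k = ZMod.dft f k * ZMod.dft g k := by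
  simp only [ZMod.dft_apply, smul_eq_mul]
  simp only [Finset.mul_sum]
  rw [Finset.sum_comm]
  simp only [← Finset.mul_sum]
  rw [Finset.mul_sum]
  refine Finset.sum_congr rfl fun j _ => ?_
  rw [← Equiv.sum_comp (Equiv.addRight j), Finset.sum_mul]
  refine Finset.sum_congr rfl fun i _ => ?_
  simp only [Equiv.coe_addRight, add_sub_cancel_right]
  rw [add_mul, neg_add, AddChar.map_add_eq_mul]; ring

lemma dft_sh (x : ZMod N → ℂ) (k : ZMod N) : ZMod.dft (sh x) k = ee k * ZMod.dft x k := by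
  simp only [ZMod.dft_apply, smul_eq_mul, sh]
  rw [Finset.mul_sum, ← Equiv.sum_comp (Equiv.addRight (1 : ZMod N))
    (fun j => ee k * (ee (-(j * k)) * x j))]
  refine Finset.sum_congr rfl fun i _ => ?_
  simp only [Equiv.coe_addRight]
  rw [← mul_assoc, ← AddChar.map_add_eq_mul]
  congr 2; ring

lemma dft_dl (x : ZMod N → ℂ) (k : ZMod N) :
    ZMod.dft (dl x) k = N * (ee k - 1) * ZMod.dft x k := by
  have : dl x = (N : ℂ) • (sh x - x) := by ext j; simp [dl, sh]
  rw [this, map_smul, map_sub, Pi.smul_apply, Pi.sub_apply, dft_sh, smul_eq_mul]; ring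

lemma dft_db_zero (x : ZMod N → ℂ) : ZMod.dft (db x) 0 = 0 := by
  have : sh (db x) = dl x := by ext j; simp [sh, db, dl]
  have h := dft_sh (db x) 0
  rw [this, dft_dl] at h
  simpa using h.symm

lemma ee_natCast (m : ℕ) : ee (m : ZMod N) = Complex.exp (2 * Real.pi * Complex.I * m / N) := by
  have := ZMod.stdAddChar_coe (N := N) (m : ℤ)
  push_cast at this
  exact this

lemma norm_one_sub_exp (t : ℝ) :
    ‖Complex.exp (2 * t * Complex.I) - 1‖ = 2 * |Real.sin t| := by
  have h : Complex.exp (2 * t * Complex.I) - 1 =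
      Complex.exp (t * Complex.I) * (2 * Complex.I * (Real.sin t : ℂ)) := by
    have e1 : Complex.exp (2 * t * Complex.I) =
      Complex.exp (t * Complex.I) * Complex.exp (t * Complex.I) := by
        rw [← Complex.exp_add]; congr 1; ring
    have h0 : Complex.exp (t * Complex.I) * Complex.exp (-t * Complex.I) = 1 := by
      rw [← Complex.exp_add]; simp
    rw [Complex.ofReal_sin, Complex.sin, e1]
    have hI := Complex.I_sq
    linear_combination (1 : ℂ) * h0 + (-1 : ℂ) * (Complex.exp (t * Complex.I) *
      (Complex.exp (-t * Complex.I) - Complex.exp (t * Complex.I))) * hI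
  rw [h, norm_mul, Complex.norm_exp_ofReal_mul_I, one_mul, norm_mul, norm_mul, Complex.norm_I,
    Complex.norm_real, Real.norm_eq_abs]
  simp

/-- Lower bound for the symbol of the difference operator. -/
lemma ee_sub_one_lower {m : ℕ} (hm : 2 * m ≤ N) : 4 * ((m : ℝ) / N) ≤ ‖ee (m : ZMod N) - 1‖ := by
  have hN : (0 : ℝ) < N := Nat.cast_pos.2 (Nat.pos_of_ne_zero (NeZero.ne N))
  have h := norm_one_sub_exp (Real.pi * (m / N))
  have e : (2 * ((Real.pi * (m / N) : ℝ) : ℂ) * Complex.I) = 2 * Real.pi * Complex.I * m / N := by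
    push_cast; ring
  rw [e, ← ee_natCast] at h
  rw [h]
  have h0 : (0 : ℝ) ≤ m / N := by positivity
  have h1 : (m : ℝ) / N ≤ 1 / 2 := by
    rw [div_le_div_iff₀ hN (by norm_num)]; exact_mod_cast (by omega : m * 2 ≤ 1 * N)
  have := Real.mul_le_sin (x := Real.pi * (m / N)) (by positivity)
    (by nlinarith [Real.pi_pos])
  have h2 : 2 / Real.pi * (Real.pi * (m / N)) = 2 * ((m : ℝ) / N) := by field_simp
  rw [h2] at this
  have := this.trans (le_abs_self _)
  linarith

end dft
end Nys

end

noncomputable section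
open scoped ComplexConjugate
namespace Nys

/-! ### The symbol of the discrete logarithmic convolution -/

lemma one_sub_mul_ne {z : ℂ} (hz : ‖z‖ = 1) (hz1 : z ≠ 1) {r : ℝ} (hr : 0 ≤ r) :
    1 - (r : ℂ) * z ≠ 0 := by
  intro h
  have h1 : (r : ℂ) * z = 1 := (sub_eq_zero.1 h).symm
  have h2 : r = 1 := by
    have := congrArg norm h1
    rw [norm_mul, hz, mul_one, Complex.norm_real, norm_one, Real.norm_eq_abs, abs_of_nonneg hr] at this
    exact this
  rw [h2] at h1
  exact hz1 (by simpa using h1)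

lemma normSq_one_sub {z : ℂ} (hz : ‖z‖ = 1) (r : ℝ) :
    ((1 - 2 * r * z.re + r ^ 2 : ℝ) : ℂ) = (1 - r * z) * (1 - r * conj z) := by
  have h1 : z * conj z = 1 := by rw [Complex.mul_conj']; simp [hz]
  have h2 : (2 * z.re : ℂ) = z + conj z := by rw [Complex.add_conj]; push_cast; ring
  push_cast
  linear_combination (-(r : ℂ)) * h2 - (r : ℂ) ^ 2 * h1

lemma conj_ne_one {z : ℂ} (hz1 : z ≠ 1) : conj z ≠ 1 := fun h => hz1 (by
  have := congrArg conj h; simpa using this)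

/-- `log |1 - z|²` for `|z| = 1`, as the integral of its radial derivative. -/
lemma log_eq_integral {z : ℂ} (hz : ‖z‖ = 1) (hz1 : z ≠ 1) :
    (Real.log (2 - 2 * z.re) : ℂ) =
      ∫ r in (0 : ℝ)..1, -(z / (1 - r * z) + conj z / (1 - r * conj z)) := by
  have hcz : ‖conj z‖ = 1 := by rw [Complex.norm_conj, hz]
  have hne : ∀ r : ℝ, 0 ≤ r → (1 - 2 * r * z.re + r ^ 2 : ℝ) ≠ 0 := by
    intro r hr h
    have := normSq_one_sub hz r
    rw [h] at this
    exact mul_ne_zero (one_sub_mul_ne hz hz1 hr) (one_sub_mul_ne hcz (conj_ne_one hz1) hr)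
      (by rw [← this]; simp)
  have hder : ∀ r ∈ Set.uIcc (0 : ℝ) 1, HasDerivAt
      (fun r : ℝ => (Real.log (1 - 2 * r * z.re + r ^ 2) : ℂ))
      (-(z / (1 - r * z) + conj z / (1 - r * conj z))) r := by
    intro r hr
    rw [Set.uIcc_of_le zero_le_one] at hr
    have h1 : HasDerivAt (fun r : ℝ => 1 - 2 * r * z.re + r ^ 2) (-(2 * z.re) + 2 * r) r := by
      have e1 : HasDerivAt (fun r : ℝ => 2 * r * z.re) (2 * 1 * z.re) r :=
        ((hasDerivAt_id r).const_mul 2).mul_const _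
      have := (e1.const_sub 1).add (hasDerivAt_pow 2 r)
      exact this.congr_deriv (by norm_num)
    have h2 := (h1.log (hne r hr.1)).ofReal_comp
    convert h2 using 1
    have n1 := one_sub_mul_ne hz hz1 hr.1
    have n2 := one_sub_mul_ne hcz (conj_ne_one hz1) hr.1
    rw [Complex.ofReal_div, normSq_one_sub hz r]
    have k1 : z * conj z = 1 := by rw [Complex.mul_conj']; simp [hz]
    have k2 : (2 * z.re : ℂ) = z + conj z := by rw [Complex.add_conj]; push_cast; ring
    push_cast
    rw [k2]
    rw [div_add_div _ _ n1 n2, ← neg_div]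
    congr 1
    linear_combination (2 * r : ℂ) * k1
  rw [intervalIntegral.integral_eq_sub_of_hasDerivAt hder]
  · norm_num
    congr 2; ring
  · refine ContinuousOn.intervalIntegrable ?_
    rw [Set.uIcc_of_le zero_le_one]
    refine ContinuousOn.neg (ContinuousOn.add ?_ ?_)
    · exact ContinuousOn.div continuousOn_const (by fun_prop) fun r hr => one_sub_mul_ne hz hz1 hr.1
    · exact ContinuousOn.div continuousOn_const (by fun_prop)
        fun r hr => one_sub_mul_ne hcz (conj_ne_one hz1) hr.1

section symbol
variable {N : ℕ} [NeZero N]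

local notation "ee" => (ZMod.stdAddChar (N := N))

/-- Partial-fraction identity: only one power of `r` survives the summation over the characters. -/
lemma sum_partial_fraction {η ω : ℂ} (hω : η ^ N = ω) (r : ℂ) (hr : ∀ k : ZMod N, 1 - r * (ee k * η) ≠ 0)
    (hr' : 1 - r ^ N * ω ≠ 0) {p : ℕ} (hp : p < N) :
    ∑ k : ZMod N, ee (-(k * ((p + 1 : ℕ) : ZMod N))) * ((ee k * η) / (1 - r * (ee k * η))) =
      N * r ^ p * η ^ (p + 1) / (1 - r ^ N * ω) := by
  have hk : ∀ k : ZMod N, (ee k * η) ^ N = ω := by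
    intro k
    have : ee k ^ N = 1 := by
      rw [← AddChar.map_nsmul_eq_pow]; simp
    rw [mul_pow, this, one_mul, hω]
  have h1 : ∀ k : ZMod N, (ee k * η) / (1 - r * (ee k * η)) =
      (∑ l ∈ Finset.range N, r ^ l * (ee k * η) ^ (l + 1)) / (1 - r ^ N * ω) := by
    intro k
    rw [div_eq_div_iff (hr k) hr']
    have hg := mul_neg_geom_sum (r * (ee k * η)) N
    rw [mul_pow, hk k] at hg
    have hs : ∑ l ∈ Finset.range N, r ^ l * (ee k * η) ^ (l + 1) =
        ee k * η * ∑ l ∈ Finset.range N, (r * (ee k * η)) ^ l := by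
      rw [Finset.mul_sum]
      exact Finset.sum_congr rfl fun l _ => by rw [mul_pow r, pow_succ]; ring
    rw [hs, ← hg]; ring
  have h2 : ∀ l ∈ Finset.range N, ∑ k : ZMod N, ee (-(k * ((p + 1 : ℕ) : ZMod N))) *
      (r ^ l * (ee k * η) ^ (l + 1)) = if l = p then N * r ^ p * η ^ (p + 1) else 0 := by
    intro l hl
    have hs := AddChar.sum_mulShift (ψ := ee) ((l : ZMod N) - (p : ZMod N)) (ZMod.isPrimitive_stdAddChar N)
    have e : ∀ k : ZMod N, ee (-(k * ((p + 1 : ℕ) : ZMod N))) * (r ^ l * (ee k * η) ^ (l + 1)) =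
        r ^ l * η ^ (l + 1) * ee (k * ((l : ZMod N) - (p : ZMod N))) := by
      intro k
      have : k * ((l : ZMod N) - (p : ZMod N)) = -(k * ((p + 1 : ℕ) : ZMod N)) + (l + 1) • k := by
        rw [nsmul_eq_mul]; push_cast; ring
      rw [this, AddChar.map_add_eq_mul, AddChar.map_nsmul_eq_pow, mul_pow]; ring
    rw [Finset.sum_congr rfl fun k _ => e k, ← Finset.mul_sum, hs]
    have : ((l : ZMod N) - (p : ZMod N) = 0) ↔ l = p := by
      rw [sub_eq_zero, ZMod.natCast_eq_natCast_iff', Nat.mod_eq_of_lt (Finset.mem_range.1 hl),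
        Nat.mod_eq_of_lt hp]
    by_cases hlp : l = p
    · subst hlp; simp [ZMod.card]; ring
    · rw [if_neg (fun h => hlp (this.1 h)), if_neg hlp]; simp
  calc _ = ∑ k : ZMod N, ∑ l ∈ Finset.range N, ee (-(k * ((p + 1 : ℕ) : ZMod N))) *
      (r ^ l * (ee k * η) ^ (l + 1)) / (1 - r ^ N * ω) := by
        refine Finset.sum_congr rfl fun k _ => ?_
        rw [h1 k, mul_div_assoc', Finset.mul_sum, Finset.sum_div]
    _ = (∑ l ∈ Finset.range N, if l = p then N * r ^ p * η ^ (p + 1) else 0) / (1 - r ^ N * ω) := by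
        rw [Finset.sum_comm, Finset.sum_div]
        refine Finset.sum_congr rfl fun l hl => ?_
        rw [← Finset.sum_div, h2 l hl]
    _ = _ := by rw [Finset.sum_ite_eq' _ p, if_pos (Finset.mem_range.2 hp)]

/-- The values of the logarithmic convolution kernel on the grid. -/
def lam (N : ℕ) (ε : ℝ) (k : ZMod N) : ℂ := (Real.log (us N ε k ^ 2) : ℂ)

/-- The phase `exp(2πi ε)`. -/
def om (ε : ℝ) : ℂ := Complex.exp (2 * Real.pi * ε * Complex.I)

lemma om_norm (ε : ℝ) : ‖om ε‖ = 1 := by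
  have := Complex.norm_exp_ofReal_mul_I (2 * Real.pi * ε)
  push_cast at this; exact this

lemma om_re (ε : ℝ) : (om ε).re = Real.cos (2 * Real.pi * ε) := by
  have := Complex.exp_ofReal_mul_I_re (2 * Real.pi * ε)
  push_cast at this; exact this

lemma om_im (ε : ℝ) : (om ε).im = Real.sin (2 * Real.pi * ε) := by
  have := Complex.exp_ofReal_mul_I_im (2 * Real.pi * ε)
  push_cast at this; exact this

lemma om_ne_one {ε : ℝ} (hε : ∀ k : ℤ, ε ≠ k) : om ε ≠ 1 := by
  intro h
  have h1 := om_re ε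
  rw [h, Complex.one_re, eq_comm, Real.cos_eq_one_iff] at h1
  obtain ⟨n, hn⟩ := h1
  refine hε n ?_
  have := Real.pi_pos
  have h2 : (2 * Real.pi) * (n - ε) = 0 := by linarith
  rcases mul_eq_zero.1 h2 with h3 | h3
  · linarith
  · linarith

lemma om_add_int (ε : ℝ) (m : ℤ) : om (ε + m) = om ε := by
  rw [om, om, ← Complex.exp_periodic.int_mul m (2 * Real.pi * ε * Complex.I)]
  congr 1; push_cast; ring

lemma ee_intCast (m : ℤ) : ee (m : ZMod N) = om (m / N) := by
  rw [ZMod.stdAddChar_coe, om]; congr 1; push_cast; ring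

lemma om_add (s t : ℝ) : om (s + t) = om s * om t := by
  rw [om, om, om, ← Complex.exp_add]; congr 1; push_cast; ring

lemma om_pow (s : ℝ) (n : ℕ) : om s ^ n = om (n * s) := by
  rw [om, om, ← Complex.exp_nat_mul]; congr 1; push_cast; ring

lemma om_conj (s : ℝ) : conj (om s) = om (-s) := by
  rw [om, om, ← Complex.exp_conj]; congr 1; simp [Complex.conj_ofNat]

/-- The integral whose multiple is the Fourier transform of `lam`. -/
def symF (N p q : ℕ) (ω : ℂ) : ℂ :=
  ∫ r in (0 : ℝ)..1, ((r : ℂ) ^ p / (1 - (r : ℂ) ^ N * ω) +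
    conj ω * ((r : ℂ) ^ q / (1 - (r : ℂ) ^ N * conj ω)))

lemma two_sub_re (ε : ℝ) (k : ZMod N) :
    2 - 2 * (ee k * om (ε / N)).re = 4 * us N ε k ^ 2 := by
  obtain ⟨m, rfl⟩ := ZMod.intCast_surjective k
  rw [ee_intCast, ← om_add, om_re, us_intCast, sq_abs,
    show 2 * Real.pi * ((m : ℝ) / N + ε / N) = 2 * (Real.pi * gp N ε m) by
      unfold gp; ring, Real.cos_two_mul, Real.cos_sq']
  ring

lemma lam_eq {ε : ℝ} (hε : ∀ k : ℤ, ε ≠ k) (k : ZMod N) :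
    lam N ε k = (Real.log (2 - 2 * (ee k * om (ε / N)).re) : ℂ) - (Real.log 4 : ℂ) := by
  have h := us_pos hε k
  rw [two_sub_re, Real.log_mul (by norm_num) (by positivity), lam]
  push_cast; ring

/-- The Fourier transform of the discrete logarithm. -/
lemma dft_lam {ε : ℝ} (hε : ∀ k : ℤ, ε ≠ k) {p q : ℕ} (hpq : p + q + 2 = N) :
    ZMod.dft (lam N ε) ((p + 1 : ℕ) : ZMod N) =
      -(N * om (ε / N) ^ (p + 1)) * symF N p q (om ε) := by
  have hN : (N : ℝ) ≠ 0 := Nat.cast_ne_zero.2 (NeZero.ne N)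
  set η := om (ε / N) with hη
  set ω := om ε with hω
  set mm : ZMod N := ((p + 1 : ℕ) : ZMod N) with hmm
  have hηω : η ^ N = ω := by rw [hη, om_pow, hω]; congr 1; field_simp
  have hmm0 : mm ≠ 0 := by
    rw [hmm, Ne, ZMod.natCast_eq_zero_iff]
    intro h
    have := Nat.le_of_dvd (by omega) h
    omega
  have hzn : ∀ k : ZMod N, ‖ee k * η‖ = 1 := fun k => by rw [norm_mul, ee_norm, om_norm, one_mul]
  have hz1 : ∀ k : ZMod N, ee k * η ≠ 1 := by
    intro k h
    have h2 := two_sub_re ε k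
    rw [← hη, h] at h2
    have := us_pos hε k
    have : 0 < 4 * us N ε k ^ 2 := by positivity
    rw [← h2] at this
    norm_num at this
  have hω1 : ω ≠ 1 := om_ne_one hε
  have hωc : ‖ω‖ = 1 := om_norm _
  have hcn : ∀ z : ℂ, ‖z‖ = 1 → ‖conj z‖ = 1 := fun z hz => by rw [Complex.norm_conj, hz]
  have hrN : ∀ r : ℝ, 0 ≤ r → 1 - (r : ℂ) ^ N * ω ≠ 0 := fun r hr => by
    have := one_sub_mul_ne hωc hω1 (r := r ^ N) (by positivity)
    push_cast at this; exact this
  have hrN' : ∀ r : ℝ, 0 ≤ r → 1 - (r : ℂ) ^ N * conj ω ≠ 0 := fun r hr => by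
    have := one_sub_mul_ne (hcn _ hωc) (conj_ne_one hω1) (r := r ^ N) (by positivity)
    push_cast at this; exact this
  have hintg : ∀ k : ZMod N, IntervalIntegrable (fun r : ℝ => ee (-(k * mm)) *
      (-(ee k * η / (1 - r * (ee k * η)) + conj (ee k * η) / (1 - r * conj (ee k * η)))))
      MeasureTheory.volume 0 1 := by
    intro k
    refine ContinuousOn.intervalIntegrable ?_
    rw [Set.uIcc_of_le zero_le_one]
    refine continuousOn_const.mul (ContinuousOn.neg (ContinuousOn.add ?_ ?_))
    · exact ContinuousOn.div continuousOn_const (by fun_prop)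
        fun r hr => one_sub_mul_ne (hzn k) (hz1 k) hr.1
    · exact ContinuousOn.div continuousOn_const (by fun_prop)
        fun r hr => one_sub_mul_ne (hcn _ (hzn k)) (conj_ne_one (hz1 k)) hr.1
  have hconst : ∑ k : ZMod N, ee (-(k * mm)) * (Real.log 4 : ℂ) = 0 := by
    rw [← Finset.sum_mul]
    have := AddChar.sum_mulShift (ψ := ee) (-mm) (ZMod.isPrimitive_stdAddChar N)
    rw [if_neg (neg_ne_zero.2 hmm0)] at this
    simp only [mul_neg] at this
    rw [this]; simp
  rw [ZMod.dft_apply]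
  calc ∑ k : ZMod N, ee (-(k * mm)) • lam N ε k
      = ∑ k : ZMod N, ∫ r in (0 : ℝ)..1, ee (-(k * mm)) *
        (-(ee k * η / (1 - r * (ee k * η)) + conj (ee k * η) / (1 - r * conj (ee k * η)))) := by
        simp only [smul_eq_mul, lam_eq hε, mul_sub, Finset.sum_sub_distrib, hconst, sub_zero]
        refine Finset.sum_congr rfl fun k _ => ?_
        rw [intervalIntegral.integral_const_mul, ← log_eq_integral (hzn k) (hz1 k)]
    _ = ∫ r in (0 : ℝ)..1, ∑ k : ZMod N, ee (-(k * mm)) *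
        (-(ee k * η / (1 - r * (ee k * η)) + conj (ee k * η) / (1 - r * conj (ee k * η)))) := by
        rw [intervalIntegral.integral_finsetSum fun k _ => hintg k]
    _ = ∫ r in (0 : ℝ)..1, -(N * η ^ (p + 1)) * ((r : ℂ) ^ p / (1 - (r : ℂ) ^ N * ω) +
          conj ω * ((r : ℂ) ^ q / (1 - (r : ℂ) ^ N * conj ω))) := by
        refine intervalIntegral.integral_congr fun r hr => ?_
        rw [Set.uIcc_of_le zero_le_one] at hr
        have s1 := sum_partial_fraction hηω (r : ℂ) (fun k => one_sub_mul_ne (hzn k) (hz1 k) hr.1)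
          (hrN r hr.1) (p := p) (by omega)
        have s2 := congrArg conj (sum_partial_fraction hηω (r : ℂ)
          (fun k => one_sub_mul_ne (hzn k) (hz1 k) hr.1) (hrN r hr.1) (p := q) (by omega))
        have hqm : ((q + 1 : ℕ) : ZMod N) = -mm := by
          rw [hmm, eq_neg_iff_add_eq_zero, ← Nat.cast_add, ZMod.natCast_eq_zero_iff]
          exact ⟨1, by omega⟩
        rw [hqm] at s2
        simp only [map_sum, map_mul, map_div₀, map_sub, map_one, map_pow, Complex.conj_ofReal,
          ee_conj, neg_neg, mul_neg, map_natCast] at s2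
        have hηη : η * conj η = 1 := by rw [Complex.mul_conj']; simp [hη, om_norm]
        have hconjω : conj ω * η ^ (p + 1) = conj η ^ (q + 1) := by
          rw [← hηω, map_pow, ← hpq, show p + q + 2 = (q + 1) + (p + 1) by ring, pow_add, mul_assoc,
            ← mul_pow, mul_comm (conj η), hηη, one_pow, mul_one]
        simp only [mul_neg, mul_add, neg_add, Finset.sum_add_distrib, Finset.sum_neg_distrib]
        rw [s1]
        simp only [map_mul, ee_conj]
        rw [s2, ← hconjω]
        ring
    _ = _ := by rw [intervalIntegral.integral_const_mul]; rfl

end symbol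
end Nys

end

noncomputable section
open scoped ComplexConjugate
namespace Nys

/-! ### Lower bound for the symbol -/

lemma abs_im_le_norm_one_sub {ω : ℂ} (hω : ‖ω‖ = 1) (x : ℝ) : |ω.im| ≤ ‖1 - (x : ℂ) * ω‖ := by
  have h1 : ‖1 - (x : ℂ) * ω‖ = ‖conj ω - x‖ := by
    have e : 1 - (x : ℂ) * ω = ω * (conj ω - x) := by
      have : ω * conj ω = 1 := by rw [Complex.mul_conj']; simp [hω]
      linear_combination -this
    rw [e, norm_mul, hω, one_mul]
  rw [h1]
  have := Complex.abs_im_le_norm (conj ω - x)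
  simpa using this

/-- The integrand of `symF`. -/
def symg (N p q : ℕ) (ω : ℂ) (r : ℝ) : ℂ :=
  (r : ℂ) ^ p / (1 - (r : ℂ) ^ N * ω) + conj ω * ((r : ℂ) ^ q / (1 - (r : ℂ) ^ N * conj ω))

lemma one_sub_ne_of_im {ω : ℂ} (hω : ‖ω‖ = 1) (him : ω.im ≠ 0) (x : ℝ) : 1 - (x : ℂ) * ω ≠ 0 := by
  intro h
  have := abs_im_le_norm_one_sub hω x
  rw [h, norm_zero] at this
  exact him (abs_nonpos_iff.1 this)

lemma symg_continuous {ω : ℂ} (hω : ‖ω‖ = 1) (him : ω.im ≠ 0) (N p q : ℕ) :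
    Continuous (symg N p q ω) := by
  have hc : ‖conj ω‖ = 1 := by rw [Complex.norm_conj, hω]
  have hci : (conj ω).im ≠ 0 := by simpa using him
  unfold symg
  refine Continuous.add (Continuous.div (by fun_prop) (by fun_prop) fun r => ?_)
    (continuous_const.mul (Continuous.div (by fun_prop) (by fun_prop) fun r => ?_))
  · have := one_sub_ne_of_im hω him (r ^ N); push_cast at this; exact this
  · have := one_sub_ne_of_im hc hci (r ^ N); push_cast at this; exact this

lemma symg_im {ω : ℂ} (hω : ‖ω‖ = 1) (him : ω.im ≠ 0) (N p q : ℕ) (r : ℝ) :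
    (symg N p q ω r).im = -ω.im * ((r ^ q - r ^ (p + N)) / Complex.normSq (1 - (r : ℂ) ^ N * ω)) := by
  have hd := one_sub_ne_of_im hω him (r ^ N)
  have hci : (conj ω).im ≠ 0 := by simpa using him
  have hd' := one_sub_ne_of_im (by rw [Complex.norm_conj, hω]) hci (r ^ N)
  push_cast at hd hd'
  set x : ℝ := r ^ N with hx
  have hxc : (r : ℂ) ^ N = (x : ℂ) := by rw [hx]; push_cast; rfl
  rw [symg]
  simp only [hxc] at hd hd' ⊢
  set D := Complex.normSq (1 - (x : ℂ) * ω) with hD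
  have hDD : (D : ℂ) = (1 - x * ω) * (1 - x * conj ω) := by
    rw [hD, Complex.normSq_eq_conj_mul_self]; simp; ring
  have hω2 : ω * conj ω = 1 := by rw [Complex.mul_conj']; simp [hω]
  have hDne : (D : ℂ) ≠ 0 := by rw [hDD]; exact mul_ne_zero hd hd'
  have e : (r : ℂ) ^ p / (1 - (x : ℂ) * ω) + conj ω * ((r : ℂ) ^ q / (1 - (x : ℂ) * conj ω)) =
      ((r ^ p / D : ℝ) : ℂ) * (1 - x * conj ω) + ((r ^ q / D : ℝ) : ℂ) * (conj ω - x) := by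
    have hr1 : (1 - (x : ℂ) * conj ω) / D = 1 / (1 - x * ω) := by
      rw [div_eq_div_iff hDne hd, hDD]; ring
    have hr2 : (conj ω - x) / D = conj ω / (1 - x * conj ω) := by
      rw [div_eq_div_iff hDne hd', hDD]
      linear_combination (x : ℂ) * (1 - x * conj ω) * hω2
    calc _ = (r : ℂ) ^ p * (1 / (1 - x * ω)) + (r : ℂ) ^ q * (conj ω / (1 - x * conj ω)) := by ring
      _ = _ := by rw [← hr1, ← hr2]; push_cast; ring
  rw [e, pow_add, ← hx, Complex.add_im, Complex.im_ofReal_mul, Complex.im_ofReal_mul]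
  simp
  ring

lemma symF_im {ω : ℂ} (hω : ‖ω‖ = 1) (him : ω.im ≠ 0) {N p q : ℕ} (hpq : p + q + 2 = N) :
    |ω.im| / 4 * (2 * (p + 1) / N ^ 2) ≤ ‖symF N p q ω‖ := by
  have hcont := symg_continuous hω him N p q
  have h1 : (symF N p q ω).im = ∫ r in (0 : ℝ)..1, (symg N p q ω r).im :=
    (Complex.imCLM.intervalIntegral_comp_comm (hcont.intervalIntegrable 0 1)).symm
  set h : ℝ → ℝ := fun r => (r ^ q - r ^ (p + N)) / Complex.normSq (1 - (r : ℂ) ^ N * ω) with hh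
  have h2 : (symF N p q ω).im = -ω.im * ∫ r in (0 : ℝ)..1, h r := by
    rw [h1, ← intervalIntegral.integral_const_mul]
    exact intervalIntegral.integral_congr fun r _ => symg_im hω him N p q r
  have hNpos : ∀ r : ℝ, 0 < Complex.normSq (1 - (r : ℂ) ^ N * ω) := fun r => by
    have := one_sub_ne_of_im hω him (r ^ N)
    push_cast at this
    exact Complex.normSq_pos.2 this
  have h3 : ∫ r in (0 : ℝ)..1, (r ^ q - r ^ (p + N)) / 4 ≤ ∫ r in (0 : ℝ)..1, h r := by
    refine intervalIntegral.integral_mono_on zero_le_one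
      (Continuous.intervalIntegrable (by fun_prop) _ _) (Continuous.intervalIntegrable ?_ _ _) ?_
    · rw [hh]
      refine Continuous.div (by fun_prop) (Complex.continuous_normSq.comp (by fun_prop))
        fun r => (hNpos r).ne'
    · intro r hr
      have hle : r ^ (p + N) ≤ r ^ q := pow_le_pow_of_le_one hr.1 hr.2 (by omega)
      have h4 : Complex.normSq (1 - (r : ℂ) ^ N * ω) ≤ 4 := by
        rw [Complex.normSq_eq_norm_sq]
        have : ‖1 - (r : ℂ) ^ N * ω‖ ≤ 2 := by
          refine (norm_sub_le _ _).trans ?_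
          rw [norm_mul, hω, norm_pow, Complex.norm_real, Real.norm_eq_abs, abs_of_nonneg hr.1, norm_one]
          have := pow_le_one₀ (n := N) hr.1 hr.2
          linarith
        nlinarith [norm_nonneg (1 - (r : ℂ) ^ N * ω)]
      have := hNpos r
      have := sub_nonneg.2 hle
      simp only [hh]
      gcongr
  have h5 : ∫ r in (0 : ℝ)..1, (r ^ q - r ^ (p + N)) / 4 = (1 / (q + 1) - 1 / (p + N + 1)) / 4 := by
    rw [intervalIntegral.integral_div, intervalIntegral.integral_sub
      (Continuous.intervalIntegrable (by fun_prop) _ _) (Continuous.intervalIntegrable (by fun_prop) _ _)]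
    simp [integral_pow]
  have hN : (N : ℝ) = p + q + 2 := by rw [← hpq]; push_cast; ring
  have h6 : 2 * ((p : ℝ) + 1) / N ^ 2 ≤ 1 / (q + 1) - 1 / (p + N + 1) := by
    rw [div_sub_div _ _ (by positivity) (by positivity), hN]
    rw [div_le_div_iff₀ (by positivity) (by positivity)]
    have hp0 : (0 : ℝ) ≤ p := by positivity
    have hq0 : (0 : ℝ) ≤ q := by positivity
    have : (2 * ((p : ℝ) + 1)) * ((p + q + 2) ^ 2 - (q + 1) * (p + (p + q + 2) + 1)) =
      2 * (p + 1) * (p + 1) ^ 2 := by ring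
    nlinarith [pow_nonneg (add_nonneg hp0 zero_le_one) 3]
  have h7 : (1 / ((q : ℝ) + 1) - 1 / (p + N + 1)) / 4 ≤ ∫ r in (0 : ℝ)..1, h r := h5 ▸ h3
  have h8 := Complex.abs_im_le_norm (symF N p q ω)
  rw [h2, abs_mul, abs_neg] at h8
  refine le_trans ?_ h8
  have h9 : 2 * ((p : ℝ) + 1) / N ^ 2 / 4 ≤ |∫ r in (0 : ℝ)..1, h r| :=
    le_trans (by linarith) (h7.trans (le_abs_self _))
  calc |ω.im| / 4 * (2 * (p + 1) / N ^ 2) = |ω.im| * (2 * ((p : ℝ) + 1) / N ^ 2 / 4) := by ring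
    _ ≤ _ := by gcongr

/-- The main term `1/(p+1)` of `symF`; it dominates for small `p/N`, whereas `symF_im` covers the
other frequencies. -/
lemma symF_approx {ω : ℂ} (hω : ‖ω‖ = 1) (him : ω.im ≠ 0) (N p q : ℕ) :
    ‖symF N p q ω - 1 / (p + 1)‖ ≤ (1 / (p + N + 1) + 1 / (q + 1)) / |ω.im| := by
  have hcont := symg_continuous hω him N p q
  have hS : 0 < |ω.im| := abs_pos.2 him
  have h1 : symF N p q ω - 1 / (p + 1) = ∫ r in (0 : ℝ)..1, (symg N p q ω r - (r : ℂ) ^ p) := by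
    rw [intervalIntegral.integral_sub (hcont.intervalIntegrable 0 1)
      (Continuous.intervalIntegrable (by fun_prop) _ _)]
    congr 1
    have : ∫ r in (0 : ℝ)..1, ((r : ℂ) ^ p) = ((∫ r in (0 : ℝ)..1, r ^ p : ℝ) : ℂ) := by
      rw [← intervalIntegral.integral_ofReal]; push_cast; rfl
    rw [this, integral_pow]; simp
  have h2 : ∫ r in (0 : ℝ)..1, (r ^ (p + N) + r ^ q) / |ω.im| =
      (1 / (p + N + 1) + 1 / (q + 1)) / |ω.im| := by
    rw [intervalIntegral.integral_div, intervalIntegral.integral_add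
      (Continuous.intervalIntegrable (by fun_prop) _ _) (Continuous.intervalIntegrable (by fun_prop) _ _)]
    simp [integral_pow]
  rw [h1, ← h2]
  refine intervalIntegral.norm_integral_le_of_norm_le zero_le_one ?_
    (Continuous.intervalIntegrable (by fun_prop) _ _)
  refine Filter.Eventually.of_forall fun r hr => ?_
  have hr0 : 0 ≤ r := hr.1.le
  have hd := one_sub_ne_of_im hω him (r ^ N)
  have b1 := abs_im_le_norm_one_sub hω (r ^ N)
  have b2 := abs_im_le_norm_one_sub (ω := conj ω) (by rw [Complex.norm_conj, hω]) (r ^ N)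
  rw [Complex.conj_im, abs_neg] at b2
  push_cast at hd b1 b2
  have e : symg N p q ω r - (r : ℂ) ^ p = (r : ℂ) ^ (p + N) * ω / (1 - (r : ℂ) ^ N * ω) +
      conj ω * ((r : ℂ) ^ q / (1 - (r : ℂ) ^ N * conj ω)) := by
    rw [symg, add_sub_right_comm]
    congr 1
    rw [pow_add]
    field_simp
    ring
  have hrn : ‖(r : ℂ)‖ = r := by rw [Complex.norm_real, Real.norm_eq_abs, abs_of_nonneg hr0]
  rw [e]
  refine (norm_add_le _ _).trans ?_
  rw [norm_div, norm_mul, norm_mul, norm_div, Complex.norm_conj, hω, norm_pow, norm_pow, hrn, mul_one,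
    one_mul, add_div]
  gcongr

/-- Uniform lower bound for the normalised Fourier coefficients of the discrete logarithm. -/
lemma symF_lower {ω : ℂ} (hω : ‖ω‖ = 1) (him : ω.im ≠ 0) {N p q : ℕ} (hpq : p + q + 2 = N)
    (hpN : 2 * (p + 1) ≤ N) : |ω.im| ^ 3 / 72 ≤ (N * ‖symF N p q ω‖) * ((p + 1) / N) := by
  have h1 := symF_im hω him hpq
  have h2 := symF_approx hω him N p q
  set S := |ω.im| with hS
  have hS0 : 0 < S := abs_pos.2 him
  have hS1 : S ≤ 1 := by rw [hS, ← hω]; exact Complex.abs_im_le_norm ω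
  have hN0 : (0 : ℝ) < N := by rw [← hpq]; positivity
  have hp0 : (0 : ℝ) < (p : ℝ) + 1 := by positivity
  set f := ‖symF N p q ω‖
  have hf : 0 ≤ f := norm_nonneg _
  have hS3 : S ^ 3 ≤ 1 := pow_le_one₀ hS0.le hS1
  have e : (N * f) * ((p + 1) / N) = f * (p + 1) := by field_simp
  rw [e]
  rcases le_total (((p : ℝ) + 1) / N) (S / 6) with h | h
  · -- low frequencies: the leading term `N/m` dominates
    have h3 : 1 / ((p : ℝ) + 1) - f ≤ (1 / (p + N + 1) + 1 / (q + 1)) / S := by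
      refine le_trans ?_ h2
      have := norm_sub_norm_le (1 / ((p : ℂ) + 1)) (symF N p q ω)
      rw [norm_sub_rev] at this
      refine le_trans (le_of_eq ?_) this
      congr 1
      have : ((p : ℂ) + 1) = (((p : ℝ) + 1 : ℝ) : ℂ) := by push_cast; rfl
      rw [this, norm_div, norm_one, Complex.norm_real, Real.norm_eq_abs, abs_of_pos hp0]
    have h4 : 1 / ((p : ℝ) + N + 1) + 1 / (q + 1) ≤ 3 / N := by
      have a1 : 1 / ((p : ℝ) + N + 1) ≤ 1 / N := by
        apply one_div_le_one_div_of_le hN0; linarith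
      have a2 : 1 / ((q : ℝ) + 1) ≤ 2 / N := by
        rw [div_le_div_iff₀ (by positivity) hN0]
        exact_mod_cast (by omega : 1 * N ≤ 2 * (q + 1))
      have : (3 : ℝ) / N = 1 / N + 2 / N := by ring
      linarith
    have h5 : (1 / ((p : ℝ) + N + 1) + 1 / (q + 1)) / S * (p + 1) ≤ 1 / 2 := by
      calc (1 / ((p : ℝ) + N + 1) + 1 / (q + 1)) / S * (p + 1) ≤ (3 / N) / S * (p + 1) := by gcongr
        _ = 3 / S * ((p + 1) / N) := by ring
        _ ≤ 3 / S * (S / 6) := by gcongr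
        _ = _ := by field_simp; norm_num
    have h6 := mul_le_mul_of_nonneg_right h3 hp0.le
    rw [sub_mul, one_div, inv_mul_cancel₀ hp0.ne'] at h6
    simp only [one_div] at h6 h5
    linarith
  · calc S ^ 3 / 72 = S / 2 * (S / 6) ^ 2 := by ring
      _ ≤ S / 2 * (((p : ℝ) + 1) / N) ^ 2 := by gcongr
      _ = (S / 4 * (2 * (p + 1) / N ^ 2)) * (p + 1) := by field_simp; ring
      _ ≤ _ := by gcongr

section T
variable {N : ℕ} [NeZero N]
local notation "ee" => (ZMod.stdAddChar (N := N))

lemma dft_lam_neg (ε : ℝ) (m : ZMod N) :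
    ZMod.dft (lam N ε) (-m) = conj (ZMod.dft (lam N ε) m) := by
  simp only [ZMod.dft_apply, map_sum, smul_eq_mul, map_mul, ee_conj]
  refine Finset.sum_congr rfl fun k _ => ?_
  rw [lam, Complex.conj_ofReal, mul_neg]

lemma im_om_ne {ε : ℝ} (hε : ∀ k : ℤ, ε ≠ (k : ℝ) / 2) : (om ε).im ≠ 0 := by
  rw [om_im]
  intro h
  obtain ⟨n, hn⟩ := Real.sin_eq_zero_iff.1 h
  refine hε n ?_
  have := Real.pi_pos
  field_simp
  nlinarith [mul_left_cancel₀ this.ne' (by linarith : Real.pi * n = Real.pi * (2 * ε))]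

lemma ne_int {ε : ℝ} (hε : ∀ k : ℤ, ε ≠ (k : ℝ) / 2) (k : ℤ) : ε ≠ k := by
  intro h; apply hε (2 * k); rw [h]; push_cast; ring

lemma symbol_lower_aux {ε : ℝ} (hε : ∀ k : ℤ, ε ≠ (k : ℝ) / 2) {m : ℕ} (hm0 : 0 < m) (hm : 2 * m ≤ N) :
    |(om ε).im| ^ 3 / 18 ≤ ‖ee (m : ZMod N) - 1‖ * ‖ZMod.dft (lam N ε) (m : ZMod N)‖ := by
  obtain ⟨p, rfl⟩ : ∃ p, m = p + 1 := ⟨m - 1, by omega⟩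
  have h1 := ee_sub_one_lower hm
  rw [dft_lam (ne_int hε) (p := p) (q := N - p - 2) (by omega)]
  have h2 := symF_lower (om_norm ε) (im_om_ne hε) (N := N) (p := p) (q := N - p - 2) (by omega) hm
  rw [norm_mul, norm_neg, norm_mul, norm_pow, om_norm, one_pow, mul_one, Complex.norm_natCast]
  push_cast at h1 ⊢
  set f := (N : ℝ) * ‖symF N p (N - p - 2) (om ε)‖
  have hf : 0 ≤ f := by positivity
  calc |(om ε).im| ^ 3 / 18 ≤ 4 * (f * ((p + 1) / N)) := by linarith
    _ = (4 * ((p + 1) / N)) * f := by ring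
    _ ≤ _ := by gcongr

/-- The symbol of the principal part is bounded below. -/
lemma symbol_lower {ε : ℝ} (hε : ∀ k : ℤ, ε ≠ (k : ℝ) / 2) {m : ZMod N} (hm : m ≠ 0) :
    |(om ε).im| ^ 3 / 18 ≤ ‖ee m - 1‖ * ‖ZMod.dft (lam N ε) m‖ := by
  have hv : 0 < m.val := Nat.pos_of_ne_zero fun h => hm ((ZMod.val_eq_zero m).1 h)
  have hlt := ZMod.val_lt m
  by_cases h : 2 * m.val ≤ N
  · have := symbol_lower_aux hε hv h
    rwa [ZMod.natCast_zmod_val] at this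
  · have := symbol_lower_aux (N := N) hε (m := N - m.val) (by omega) (by omega)
    have e : ((N - m.val : ℕ) : ZMod N) = -m := by
      rw [Nat.cast_sub hlt.le, ZMod.natCast_self, ZMod.natCast_zmod_val, zero_sub]
    rw [e, dft_lam_neg, Complex.norm_conj, ← ee_conj, ← Complex.norm_conj (conj (ee m) - 1)] at this
    simpa using this

/-- The principal part, a convolution whose symbol is bounded below by `symbol_lower`, controls the
divided difference. -/
lemma principal_lower {ε : ℝ} (hε : ∀ k : ℤ, ε ≠ (k : ℝ) / 2) {a c : ℝ} (hac : a - c = ε) (κ : ℂ)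
    (x : ZMod N → ℂ) :
    ‖κ‖ * (|(om ε).im| ^ 3 / 18) * nrm (dl x) ≤
      nrm (Q N a c (df N (1, 0) (df N (0, 1) (fun p => κ * Lk p))) x) := by
  have hN : (0 : ℝ) < N := Nat.cast_pos.2 (Nat.pos_of_ne_zero (NeZero.ne N))
  have hNc : (N : ℂ) ≠ 0 := Nat.cast_ne_zero.2 (NeZero.ne N)
  have hP : Per (fun p => κ * Lk p) := Per.mul (F := fun _ => κ) (fun _ _ => ⟨rfl, rfl⟩) Per_Lk
  set y := Q N a c (df N (1, 0) (df N (0, 1) (fun p => κ * Lk p))) x with hy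
  have e1 : y = dl ((-(κ / N)) • fun i => ∑ j, lam N ε (i - j) * db x j) := by
    rw [hy, Q_df10 a c (hP.df N _), Q_df01 a c hP]
    congr 1
    ext i
    simp only [Pi.neg_apply, Pi.smul_apply, Q, smul_eq_mul]
    rw [Finset.mul_sum, Finset.mul_sum, ← Finset.sum_neg_distrib]
    refine Finset.sum_congr rfl fun j _ => ?_
    obtain ⟨m, rfl⟩ := ZMod.intCast_surjective i
    obtain ⟨n, rfl⟩ := ZMod.intCast_surjective j
    rw [mat_intCast a c hP, lam, ← hac, ← us_sub, Lk_eq]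
    ring
  have e2 : ∀ m, ZMod.dft y m = -κ * ((ee m - 1) * ZMod.dft (lam N ε) m) * ZMod.dft (db x) m := by
    intro m
    rw [e1, dft_dl, map_smul, Pi.smul_apply, dft_conv, smul_eq_mul]
    field_simp
  have e3 : ∀ m, ‖κ‖ * (|(om ε).im| ^ 3 / 18) * ‖ZMod.dft (db x) m‖ ≤ ‖ZMod.dft y m‖ := by
    intro m
    by_cases hm : m = 0
    · rw [hm, dft_db_zero]; simp
    · rw [e2, norm_mul, norm_mul, norm_neg, norm_mul]
      have := symbol_lower hε hm
      gcongr
  set C := ‖κ‖ * (|(om ε).im| ^ 3 / 18) with hC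
  have hC0 : 0 ≤ C := by positivity
  have e4 : C * nrm (ZMod.dft (db x)) ≤ nrm (ZMod.dft y) := by
    have : C * nrm (ZMod.dft (db x)) = nrm ((C : ℂ) • ZMod.dft (db x)) := by
      rw [nrm_smul, Complex.norm_real, Real.norm_eq_abs, abs_of_nonneg hC0]
    rw [this, nrm_eq, nrm_eq]
    refine Real.sqrt_le_sqrt (Finset.sum_le_sum fun m _ => ?_)
    refine pow_le_pow_left₀ (norm_nonneg _) ?_ 2
    rw [Pi.smul_apply, norm_smul, Complex.norm_real, Real.norm_eq_abs, abs_of_nonneg hC0]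
    exact e3 m
  rw [nrm_dft, nrm_dft, nrm_db, mul_left_comm] at e4
  exact le_of_mul_le_mul_left e4 (Real.sqrt_pos.2 hN)

end T
end Nys

end

noncomputable section
open scoped ContDiff ComplexConjugate
namespace Nys

/-! ### Discrete ellipticity -/

/-- Coefficients of a pair of logarithmic kernels `A₁ log sin² + K₁`, `A₂ log sin² + K₂` together
with the offsets of the two staggered pairs of grids. The hypotheses are stable under
passage to the adjoint (`Dat.adj`). -/
structure Dat where
  /-- the constant value of `A₁` on the diagonal -/
  κ : ℂ
  /-- coefficient of the logarithm in the first kernel -/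
  A1 : ℝ × ℝ → ℂ
  /-- smooth part of the first kernel -/
  K1 : ℝ × ℝ → ℂ
  /-- coefficient of the logarithm in the second kernel -/
  A2 : ℝ × ℝ → ℂ
  /-- smooth part of the second kernel -/
  K2 : ℝ × ℝ → ℂ
  /-- row offset for the first kernel -/
  a : ℝ
  /-- column offset for the first kernel -/
  c : ℝ
  /-- row offset for the second kernel -/
  a' : ℝ
  /-- column offset for the second kernel -/
  c' : ℝ
  /-- the common difference of the row and column offsets -/
  ε : ℝ
  hκ : κ ≠ 0
  sA1 : ContDiff ℝ ∞ A1
  sK1 : ContDiff ℝ ∞ K1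
  sA2 : ContDiff ℝ ∞ A2
  sK2 : ContDiff ℝ ∞ K2
  pA1 : Per A1
  pK1 : Per K1
  pA2 : Per A2
  pK2 : Per K2
  diag : ∀ s, A1 (s, s) = κ
  hac : a - c = ε
  hac' : a' - c' = ε
  hε : ∀ k : ℤ, ε ≠ (k : ℝ) / 2

namespace Dat
variable (D : Dat)

/-- The first kernel. -/
def V1 (p : ℝ × ℝ) : ℂ := D.A1 p * Lk p + D.K1 p

/-- The second kernel. -/
def V2 (p : ℝ × ℝ) : ℂ := D.A2 p * Lk p + D.K2 p

/-- The discrete hypersingular operator with the kernels differenced `l` times along the diagonal.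
For `l = 0` this is `N` times the Nyström matrix. -/
def Op (N : ℕ) [NeZero N] (l : ℕ) (x : ZMod N → ℂ) : ZMod N → ℂ :=
  Q N D.a D.c (df N (1, 0) (df N (0, 1) ((df N (1, 1))^[l] D.V1))) x +
    Q N D.a' D.c' ((df N (1, 1))^[l] D.V2) x

lemma pV1 : Per D.V1 := (D.pA1.mul Per_Lk).add D.pK1
lemma pV2 : Per D.V2 := (D.pA2.mul Per_Lk).add D.pK2

lemma hac_int (k : ℤ) : D.a - D.c ≠ k := D.hac ▸ ne_int D.hε k
lemma hac_int' (k : ℤ) : D.a' - D.c' ≠ k := D.hac' ▸ ne_int D.hε k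

lemma df_iter_split (N l : ℕ) (A K : ℝ × ℝ → ℂ) :
    (df N (1, 1))^[l] (fun p => A p * Lk p + K p) =
      fun p => (df N (1, 1))^[l] A p * Lk p + (df N (1, 1))^[l] K p := by
  induction l with
  | zero => rfl
  | succ l ih =>
    simp only [Function.iterate_succ_apply', ih]
    ext p
    have := congrFun (df_mul_diag N ((df N (1, 1))^[l] A)) p
    simp only [df] at this ⊢
    linear_combination this

lemma df_iter_diag (N l : ℕ) {A : ℝ × ℝ → ℂ} {κ : ℂ} (h : ∀ s, A (s, s) = κ) (s : ℝ) :
    (df N (1, 1))^[l + 1] A (s, s) = 0 := by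
  induction l generalizing A κ with
  | zero => simp [df, h]
  | succ l ih =>
    rw [Function.iterate_succ_apply]
    exact ih (κ := 0) (fun s => by simp [df, h])

lemma Op_vadd (N : ℕ) [NeZero N] (l : ℕ) (x y : ZMod N → ℂ) :
    D.Op N l (x + y) = D.Op N l x + D.Op N l y := by
  simp only [Op, Q_vadd]; abel

lemma dl_Op (N : ℕ) [NeZero N] (l : ℕ) (x : ZMod N → ℂ) :
    dl (D.Op N l x) = D.Op N (l + 1) (sh x) + D.Op N l (dl x) := by
  simp only [Op]
  rw [dl_add, dl_Q _ _ (((D.pV1.df_iter N _ l).df N _).df N _), dl_Q _ _ (D.pV2.df_iter N _ l)]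
  rw [df_comm N (1, 1) (1, 0), df_comm N (1, 1) (0, 1)]
  simp only [Function.iterate_succ_apply']
  abel

lemma V2_bound (l : ℕ) : ∃ C, 0 ≤ C ∧ ∀ (N : ℕ) [NeZero N] (x : ZMod N → ℂ),
    nrm (Q N D.a' D.c' ((df N (1, 1))^[l] D.V2) x) ≤ C * nrm x := by
  obtain ⟨C, hC0, hC⟩ := Q_log_bound ((UB_const D.sA2 D.pA2).df_iter (1, 1) l)
    ((UB_const D.sK2 D.pK2).df_iter (1, 1) l) (fun N => D.pA2.df_iter N _ l)
    (fun N => D.pK2.df_iter N _ l) D.hac_int'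
  refine ⟨C, hC0, fun N _ x => ?_⟩
  have := hC N x
  rwa [← df_iter_split] at this

/-- The operators with kernels differenced along the diagonal have order one: the constant diagonal
value of `A₁` is annihilated, so `order_zero` applies. -/
lemma Op_succ_bound (l : ℕ) : ∃ C, 0 ≤ C ∧ ∀ (N : ℕ) [NeZero N] (x : ZMod N → ℂ),
    nrm (D.Op N (l + 1) x) ≤ C * (nrm (dl x) + nrm x) := by
  obtain ⟨C1, h1, hC1⟩ := D.V2_bound (l + 1)
  obtain ⟨C2, h2, hC2⟩ := order_zero ((UB_const D.sA1 D.pA1).df_iter (1, 1) (l + 1))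
    (fun N => D.pA1.df_iter N _ (l + 1)) (fun N s => df_iter_diag N l D.diag s)
    ((UB_const D.sK1 D.pK1).df_iter (1, 1) (l + 1)) D.hac_int (θ := 1) one_pos
  refine ⟨1 + C1 + C2, by positivity, fun N _ x => ?_⟩
  have k1 := hC1 N x
  have k2 := hC2 N x
  rw [← df_iter_split] at k2
  refine (nrm_add_le _ _).trans ?_
  have := nrm_nonneg x
  have := nrm_nonneg (dl x)
  have k3 : nrm (Q N D.a D.c (df N (1, 0) (df N (0, 1) ((df N (1, 1))^[l + 1] D.V1))) x) ≤
    1 * nrm (dl x) + C2 * nrm x := k2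
  nlinarith [mul_nonneg h1 this, mul_nonneg h2 this]

/-- The discrete operator controls the divided difference up to lower order terms. -/
lemma elliptic : ∃ C, 0 ≤ C ∧ ∀ (N : ℕ) [NeZero N] (x : ZMod N → ℂ),
    nrm (dl x) ≤ C * (nrm (D.Op N 0 x) + nrm x) := by
  obtain ⟨C1, h1, hC1⟩ := D.V2_bound 0
  set c0 := ‖D.κ‖ * (|(om D.ε).im| ^ 3 / 18) with hc0
  have hc0pos : 0 < c0 := by
    have := abs_pos.2 (im_om_ne D.hε)
    have := norm_pos_iff.2 D.hκ
    positivity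
  have hB : ContDiff ℝ ∞ (fun p => D.A1 p + -D.κ) := D.sA1.add contDiff_const
  have hBp : Per (fun p => D.A1 p + -D.κ) :=
    D.pA1.add (G := fun _ => -D.κ) (fun _ _ => ⟨rfl, rfl⟩)
  obtain ⟨C2, h2, hC2⟩ := order_zero (UB_const hB hBp) (fun _ => hBp)
    (fun N s => by simp [D.diag]) (UB_const D.sK1 D.pK1) D.hac_int (θ := c0 / 2) (by positivity)
  refine ⟨(2 / c0) * (1 + C1 + C2), by positivity, fun N _ x => ?_⟩
  have k1 := hC1 N x
  have k2 := hC2 N x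
  have k3 := principal_lower (N := N) D.hε D.hac D.κ x
  rw [← hc0] at k3
  set P := Q N D.a D.c (df N (1, 0) (df N (0, 1) (fun p => D.κ * Lk p))) x with hP
  set R := Q N D.a D.c (df N (1, 0) (df N (0, 1) (fun p => (D.A1 p + -D.κ) * Lk p + D.K1 p))) x
    with hR
  set T := Q N D.a' D.c' ((df N (1, 1))^[0] D.V2) x with hT
  have e : D.Op N 0 x = P + R + T := by
    rw [Op, ← hT]
    congr 1
    rw [hP, hR, ← Q_add]
    congr 1
    ext p
    simp only [df, Function.iterate_zero, id, V1]
    ring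
  have e2 : P = D.Op N 0 x - (R + T) := by rw [e]; abel
  have k4 : nrm P ≤ nrm (D.Op N 0 x) + (nrm R + nrm T) := by
    rw [e2]
    refine (nrm_sub_le _ _).trans ?_
    have := nrm_add_le R T
    linarith
  have n1 := nrm_nonneg x
  have n2 := nrm_nonneg (D.Op N 0 x)
  have k5 : c0 / 2 * nrm (dl x) ≤ (1 + C1 + C2) * (nrm (D.Op N 0 x) + nrm x) := by
    nlinarith [mul_nonneg h1 n2, mul_nonneg h2 n2]
  calc nrm (dl x) = (2 / c0) * (c0 / 2 * nrm (dl x)) := by field_simp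
    _ ≤ (2 / c0) * ((1 + C1 + C2) * (nrm (D.Op N 0 x) + nrm x)) := by gcongr
    _ = _ := by ring

/-- The discrete Sobolev norm of order `k`. -/
def _root_.Nys.sob {N : ℕ} [NeZero N] (k : ℕ) (x : ZMod N → ℂ) : ℝ :=
  ∑ j ∈ Finset.range (k + 1), nrm (dl^[j] x)

lemma _root_.Nys.sob_nonneg {N : ℕ} [NeZero N] (k : ℕ) (x : ZMod N → ℂ) : 0 ≤ sob k x :=
  Finset.sum_nonneg fun _ _ => nrm_nonneg _

lemma _root_.Nys.sob_sh {N : ℕ} [NeZero N] (k : ℕ) (x : ZMod N → ℂ) : sob k (sh x) = sob k x :=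
  Finset.sum_congr rfl fun j _ => by rw [dl_iter_sh, nrm_sh]

lemma _root_.Nys.sob_succ {N : ℕ} [NeZero N] (k : ℕ) (x : ZMod N → ℂ) :
    sob (k + 1) x = sob k x + nrm (dl^[k + 1] x) := Finset.sum_range_succ _ _

lemma _root_.Nys.sob_dl {N : ℕ} [NeZero N] (k : ℕ) (x : ZMod N → ℂ) :
    sob k (dl x) ≤ sob (k + 1) x := by
  rw [sob, sob, Finset.sum_range_succ' _ (k + 1)]
  simp only [Function.iterate_succ_apply]
  have := nrm_nonneg (dl^[0] x)
  linarith

lemma _root_.Nys.nrm_le_sob {N : ℕ} [NeZero N] (k : ℕ) (x : ZMod N → ℂ) :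
    nrm (dl^[k] x) ≤ sob k x :=
  Finset.single_le_sum (f := fun j => nrm (dl^[j] x)) (fun _ _ => nrm_nonneg _)
    (Finset.mem_range.2 (Nat.lt_succ_self k))

/-- Commuting `k` divided differences past the operator costs only `k` discrete derivatives, because
`dl` commutes with the operator up to a kernel differenced along the diagonal (`dl_Op`). -/
lemma comm_bound (k l : ℕ) : ∃ C, 0 ≤ C ∧ ∀ (N : ℕ) [NeZero N] (x : ZMod N → ℂ),
    nrm (dl^[k] (D.Op N l x) - D.Op N l (dl^[k] x)) ≤ C * sob k x := by
  induction k generalizing l with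
  | zero => exact ⟨0, le_rfl, fun N _ x => by simp [nrm]⟩
  | succ k ih =>
    obtain ⟨C1, h1, hC1⟩ := ih l
    obtain ⟨C2, h2, hC2⟩ := ih (l + 1)
    obtain ⟨C3, h3, hC3⟩ := D.Op_succ_bound l
    refine ⟨C1 + C2 + C3, by positivity, fun N _ x => ?_⟩
    have e : dl^[k + 1] (D.Op N l x) - D.Op N l (dl^[k + 1] x) =
        (dl^[k] (D.Op N l (dl x)) - D.Op N l (dl^[k] (dl x))) +
        ((dl^[k] (D.Op N (l + 1) (sh x)) - D.Op N (l + 1) (dl^[k] (sh x))) +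
          D.Op N (l + 1) (sh (dl^[k] x))) := by
      rw [Function.iterate_succ_apply, Function.iterate_succ_apply, dl_Op, dl_iter_add, dl_iter_sh]
      abel
    rw [e]
    have k1 := hC1 N (dl x)
    have k2 := hC2 N (sh x)
    have k3 := hC3 N (sh (dl^[k] x))
    rw [dl_sh, nrm_sh, nrm_sh, ← Function.iterate_succ_apply' dl k x] at k3
    rw [sob_sh] at k2
    have k4 := sob_dl k x
    have k5 := sob_succ k x
    have k6 := nrm_le_sob k x
    have k7 := nrm_nonneg (dl^[k + 1] x)
    refine (nrm_add_le _ _).trans ?_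
    refine (add_le_add_right (nrm_add_le _ _) _).trans ?_
    have m1 := mul_le_mul_of_nonneg_left k4 h1
    have m2 : C2 * sob k x ≤ C2 * sob (k + 1) x := by gcongr; linarith
    have m3 : C3 * (nrm (dl^[k + 1] x) + nrm (dl^[k] x)) ≤ C3 * sob (k + 1) x := by gcongr; linarith
    linarith

/-- Discrete elliptic regularity: the operator gains one discrete derivative at every order. -/
lemma regularity (k : ℕ) : ∃ C, 0 ≤ C ∧ ∀ (N : ℕ) [NeZero N] (x : ZMod N → ℂ),
    nrm (dl^[k + 1] x) ≤ C * (nrm (dl^[k] (D.Op N 0 x)) + sob k x) := by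
  obtain ⟨C1, h1, hC1⟩ := D.elliptic
  obtain ⟨C2, h2, hC2⟩ := D.comm_bound k 0
  refine ⟨C1 * (1 + C2 + 1), by positivity, fun N _ x => ?_⟩
  rw [Function.iterate_succ_apply']
  refine (hC1 N _).trans ?_
  rw [mul_assoc]
  refine mul_le_mul_of_nonneg_left ?_ h1
  have k1 := hC2 N x
  have e : D.Op N 0 (dl^[k] x) =
    dl^[k] (D.Op N 0 x) - (dl^[k] (D.Op N 0 x) - D.Op N 0 (dl^[k] x)) := by abel
  have k2 := nrm_sub_le (dl^[k] (D.Op N 0 x)) (dl^[k] (D.Op N 0 x) - D.Op N 0 (dl^[k] x))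
  rw [← e] at k2
  have k3 := nrm_le_sob k x
  have k4 := sob_nonneg k x
  have k5 := nrm_nonneg (dl^[k] (D.Op N 0 x))
  nlinarith [mul_nonneg h2 k4, mul_nonneg h2 k5]

/-- The adjoint kernel. -/
def _root_.Nys.stF (F : ℝ × ℝ → ℂ) (p : ℝ × ℝ) : ℂ := conj (F (p.2, p.1))

lemma _root_.Nys.stF_df (N : ℕ) (w : ℝ × ℝ) (F : ℝ × ℝ → ℂ) :
    df N w (stF F) = stF (df N (w.2, w.1) F) := by
  ext p; simp [df, stF]

lemma _root_.Nys.stF_smooth {F : ℝ × ℝ → ℂ} (hF : ContDiff ℝ ∞ F) : ContDiff ℝ ∞ (stF F) :=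
  Complex.conjCLE.contDiff.comp (hF.comp (contDiff_snd.prodMk contDiff_fst))

lemma _root_.Nys.stF_per {F : ℝ × ℝ → ℂ} (hF : Per F) : Per (stF F) := fun s t =>
  ⟨by simp only [stF]; rw [(hF t s).2], by simp only [stF]; rw [(hF t s).1]⟩

/-- The data of the adjoint operator. -/
def adj : Dat where
  κ := conj D.κ
  A1 := stF D.A1
  K1 := stF D.K1
  A2 := stF D.A2
  K2 := stF D.K2
  a := D.c
  c := D.a
  a' := D.c'
  c' := D.a'
  ε := -D.ε
  hκ := by simpa using D.hκ
  sA1 := stF_smooth D.sA1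
  sK1 := stF_smooth D.sK1
  sA2 := stF_smooth D.sA2
  sK2 := stF_smooth D.sK2
  pA1 := stF_per D.pA1
  pK1 := stF_per D.pK1
  pA2 := stF_per D.pA2
  pK2 := stF_per D.pK2
  diag s := by simp [stF, D.diag]
  hac := by rw [← D.hac]; ring
  hac' := by rw [← D.hac']; ring
  hε k h := D.hε (-k) (by push_cast; linarith)

lemma _root_.Nys.Lk_swap (s t : ℝ) : conj (Lk (t, s)) = Lk (s, t) := by
  simp only [Lk, Complex.conj_ofReal]
  rw [← neg_sub s t, mul_neg, Real.sin_neg, neg_sq]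

lemma adj_V1 : D.adj.V1 = stF D.V1 := by
  ext ⟨s, t⟩; simp [V1, adj, stF, Lk_swap]

lemma adj_V2 : D.adj.V2 = stF D.V2 := by
  ext ⟨s, t⟩; simp [V2, adj, stF, Lk_swap]

lemma _root_.Nys.Q_adj {N : ℕ} [NeZero N] (a c : ℝ) (F : ℝ × ℝ → ℂ) (x w : ZMod N → ℂ) :
    ∑ i, conj (w i) * Q N a c F x i = ∑ j, conj (Q N c a (stF F) w j) * x j := by
  simp only [Q, Finset.mul_sum, map_mul, map_sum, Finset.sum_mul]
  rw [Finset.sum_comm]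
  refine Finset.sum_congr rfl fun j _ => Finset.sum_congr rfl fun i _ => ?_
  simp [mat, stF]; ring

lemma Op_adj (N : ℕ) [NeZero N] (x w : ZMod N → ℂ) :
    ∑ i, conj (w i) * D.Op N 0 x i = ∑ j, conj (D.adj.Op N 0 w j) * x j := by
  simp only [Op, Pi.add_apply, mul_add, map_add, add_mul, Finset.sum_add_distrib, Q_adj,
    Function.iterate_zero, id, adj_V1, adj_V2, stF_df]
  rw [df_comm N (1, 0) (0, 1)]
  rfl

end Dat
end Nys

end

noncomputable section
open scoped ContDiff ComplexConjugate
namespace Nys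
namespace Dat
variable (D : Dat)

/-! ### Lowest singular vectors -/

lemma _root_.Nys.Q_vsmul {N : ℕ} [NeZero N] (a c : ℝ) (F : ℝ × ℝ → ℂ) (r : ℂ) (x : ZMod N → ℂ) :
    Q N a c F (r • x) = r • Q N a c F x := by
  ext i
  simp only [Q, Pi.smul_apply, smul_eq_mul, Finset.mul_sum]
  exact Finset.sum_congr rfl fun j _ => by ring

lemma Op_vsmul (N l : ℕ) [NeZero N] (r : ℂ) (x : ZMod N → ℂ) :
    D.Op N l (r • x) = r • D.Op N l x := by
  simp only [Op, Q_vsmul, smul_add]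

/-- The discrete operator as a linear endomorphism of Euclidean space. -/
def opLin (N : ℕ) [NeZero N] : EuclideanSpace ℂ (ZMod N) →ₗ[ℂ] EuclideanSpace ℂ (ZMod N) where
  toFun x := WithLp.toLp 2 (D.Op N 0 x.ofLp)
  map_add' x y := by simp [Op_vadd]
  map_smul' r x := by simp [Op_vsmul]

lemma opLin_adjoint (N : ℕ) [NeZero N] : LinearMap.adjoint (D.opLin N) = D.adj.opLin N := by
  symm
  rw [LinearMap.eq_adjoint_iff]
  intro w x
  simp only [PiLp.inner_apply, RCLike.inner_apply, opLin, LinearMap.coe_mk, AddHom.coe_mk]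
  have := D.Op_adj N x.ofLp w.ofLp
  simp only [mul_comm (conj _)] at this
  exact this.symm

/-- A lowest singular vector: the infimum of the Rayleigh quotient of `Op* Op` is an eigenvalue. -/
lemma exists_singular (N : ℕ) [NeZero N] (x₀ : ZMod N → ℂ) (h0 : x₀ ≠ 0) :
    ∃ (x : ZMod N → ℂ) (μ : ℝ), x ≠ 0 ∧ 0 ≤ μ ∧ μ * nrm x₀ ^ 2 ≤ nrm (D.Op N 0 x₀) ^ 2 ∧
      D.adj.Op N 0 (D.Op N 0 x) = (μ : ℂ) • x ∧ nrm (D.Op N 0 x) ^ 2 = μ * nrm x ^ 2 := by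
  set T := D.opLin N with hT
  set S := LinearMap.adjoint T ∘ₗ T with hS
  have hsym : S.IsSymmetric := by
    intro x y
    simp [hS, LinearMap.adjoint_inner_left, LinearMap.adjoint_inner_right]
  have hnorm : ∀ x, inner ℂ (S x) x = ((‖T x‖ ^ 2 : ℝ) : ℂ) := by
    intro x
    simp [hS, LinearMap.adjoint_inner_left, inner_self_eq_norm_sq_to_K]
  have hb : (WithLp.toLp 2 x₀ : EuclideanSpace ℂ (ZMod N)) ≠ 0 := by
    simpa using h0
  have : Nontrivial (EuclideanSpace ℂ (ZMod N)) := ⟨_, _, hb⟩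
  have hev := hsym.hasEigenvalue_iInf_of_finiteDimensional
  set μ := (⨅ x : { x : EuclideanSpace ℂ (ZMod N) // x ≠ 0 }, RCLike.re (inner ℂ (S x) (x : EuclideanSpace ℂ (ZMod N))) / ‖(x : EuclideanSpace ℂ (ZMod N))‖ ^ 2 : ℝ) with hμ
  obtain ⟨v, hv⟩ := hev.exists_hasEigenvector
  have hv1 : S v = (μ : ℂ) • v := hv.apply_eq_smul
  have hμv : ‖T v‖ ^ 2 = μ * ‖v‖ ^ 2 := by
    have h1 := hnorm v
    rw [hv1, inner_smul_left, inner_self_eq_norm_sq_to_K] at h1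
    rw [Complex.conj_ofReal] at h1
    have h2 : (μ : ℂ) * (‖v‖ : ℂ) ^ 2 = ((‖T v‖ ^ 2 : ℝ) : ℂ) := h1
    exact_mod_cast h2.symm
  have hvpos : 0 < ‖v‖ := norm_pos_iff.2 hv.2
  refine ⟨v.ofLp, μ, ?_, ?_, ?_, ?_, ?_⟩
  · intro h
    exact hv.2 (by ext i; exact congrFun h i)
  · by_contra hneg
    push Not at hneg
    have := mul_neg_of_neg_of_pos hneg (pow_pos hvpos 2)
    nlinarith [sq_nonneg ‖T v‖]
  · have hle : μ ≤ RCLike.re (inner ℂ (S (WithLp.toLp 2 x₀)) (WithLp.toLp 2 x₀ : EuclideanSpace ℂ (ZMod N))) / ‖(WithLp.toLp 2 x₀ : EuclideanSpace ℂ (ZMod N))‖ ^ 2 := by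
      refine ciInf_le (f := fun x : { x : EuclideanSpace ℂ (ZMod N) // x ≠ 0 } => RCLike.re (inner ℂ (S x) (x : EuclideanSpace ℂ (ZMod N))) / ‖(x : EuclideanSpace ℂ (ZMod N))‖ ^ 2) ⟨0, ?_⟩ ⟨_, hb⟩
      rintro _ ⟨x, rfl⟩
      simp only [hnorm]
      rw [RCLike.re_eq_complex_re, Complex.ofReal_re]
      positivity
    rw [hnorm, RCLike.re_eq_complex_re, Complex.ofReal_re, le_div_iff₀ (by positivity)] at hle
    exact hle
  · have h2 : WithLp.ofLp (S v) = (μ : ℂ) • v.ofLp := by rw [hv1]; rfl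
    rw [hS, hT, opLin_adjoint] at h2
    exact h2
  · exact hμv

/-- Discrete Sobolev bounds, uniform in `N`, for singular vectors with bounded singular value. -/
lemma singular_regular (k : ℕ) : ∃ C, 0 ≤ C ∧ ∀ (N : ℕ) [NeZero N] (x : ZMod N → ℂ) (μ : ℝ),
    0 ≤ μ → μ ≤ 1 → D.adj.Op N 0 (D.Op N 0 x) = (μ : ℂ) • x →
    nrm (D.Op N 0 x) ^ 2 = μ * nrm x ^ 2 →
    sob k x ≤ C * nrm x ∧ sob k (D.Op N 0 x) ≤ C * nrm x := by
  induction k with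
  | zero =>
    refine ⟨1, zero_le_one, fun N _ x μ h0 h1 hx hn => ?_⟩
    have : nrm (D.Op N 0 x) ≤ nrm x := by
      refine abs_le_of_sq_le_sq' ?_ (nrm_nonneg x) |>.2
      rw [hn]
      nlinarith [sq_nonneg (nrm x)]
    simpa [sob] using this
  | succ k ih =>
    obtain ⟨C, hC, h⟩ := ih
    obtain ⟨C1, h1, hC1⟩ := D.regularity k
    obtain ⟨C2, h2, hC2⟩ := D.adj.regularity k
    refine ⟨C + 2 * C1 * C + 2 * C2 * C, by positivity, fun N _ x μ m0 m1 hx hn => ?_⟩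
    obtain ⟨a1, a2⟩ := h N x μ m0 m1 hx hn
    have b1 := hC1 N x
    have b2 := hC2 N (D.Op N 0 x)
    rw [hx, dl_iter_smul, nrm_smul, Complex.norm_real, Real.norm_eq_abs, abs_of_nonneg m0] at b2
    have c1 := (nrm_le_sob k (D.Op N 0 x)).trans a2
    have c2 := (nrm_le_sob k x).trans a1
    have c3 := nrm_nonneg (dl^[k] x)
    have n0 := nrm_nonneg x
    rw [sob_succ, sob_succ]
    have d1 : nrm (dl^[k + 1] x) ≤ C1 * (C * nrm x + C * nrm x) :=
      b1.trans (by gcongr)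
    have d2 : nrm (dl^[k + 1] (D.Op N 0 x)) ≤ C2 * (C * nrm x + C * nrm x) := by
      refine b2.trans ?_
      have : μ * nrm (dl^[k] x) ≤ C * nrm x := by nlinarith
      gcongr
    have e1 : 0 ≤ C1 * C * nrm x := by positivity
    have e2 : 0 ≤ C2 * C * nrm x := by positivity
    constructor <;> nlinarith

end Dat
end Nys

end

noncomputable section
open scoped ContDiff ComplexConjugate Topology
open Filter
namespace Nys

/-! ### Fourier series and compactness of smooth grid functions -/

/-- The Fourier series with coefficients `c`. -/
def Fs (c : ℤ → ℂ) (t : ℝ) : ℂ := ∑' m : ℤ, c m * om (m * t)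

/-- Rapid decay of a sequence of Fourier coefficients. -/
def RD (c : ℤ → ℂ) : Prop := ∀ k : ℕ, ∃ B, ∀ m : ℤ, (1 + |(m : ℝ)|) ^ k * ‖c m‖ ≤ B

lemma summable_sq : Summable fun m : ℤ => 1 / (1 + |(m : ℝ)|) ^ 2 := by
  have h := (Real.summable_one_div_int_add_rpow (1 / 2) 2).2 (by norm_num)
  refine Summable.of_nonneg_of_le (fun m => by positivity) (fun m => ?_) h
  have h0 : (m : ℝ) + 1 / 2 ≠ 0 := by
    intro h
    have : (2 * m + 1 : ℤ) = 0 := by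
      have : ((2 * m + 1 : ℤ) : ℝ) = 0 := by push_cast; linarith
      exact_mod_cast this
    omega
  have h1 : 0 < |(m : ℝ) + 1 / 2| := abs_pos.2 h0
  have h2 : |(m : ℝ) + 1 / 2| ≤ 1 + |(m : ℝ)| := by
    refine (abs_add_le _ _).trans ?_
    rw [abs_of_pos (by norm_num : (0 : ℝ) < 1 / 2)]; linarith
  rw [Real.rpow_two]
  gcongr

lemma RD.bound {c : ℤ → ℂ} (h : RD c) : ∃ B, ∀ m : ℤ, ‖c m‖ ≤ B * (1 / (1 + |(m : ℝ)|) ^ 2) := by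
  obtain ⟨B, hB⟩ := h 2
  refine ⟨B, fun m => ?_⟩
  have : (0 : ℝ) < (1 + |(m : ℝ)|) ^ 2 := by positivity
  rw [mul_one_div, le_div_iff₀ this, mul_comm]
  exact hB m

lemma Fs_summable {c : ℤ → ℂ} {B : ℝ} (h : ∀ m : ℤ, ‖c m‖ ≤ B * (1 / (1 + |(m : ℝ)|) ^ 2))
    (t : ℝ) : Summable fun m : ℤ => c m * om (m * t) :=
  Summable.of_norm_bounded (summable_sq.mul_left B) fun m => by
    rw [norm_mul, om_norm, mul_one]; exact h m

/-- Fourier series converge uniformly when their coefficients converge dominatedly. -/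
lemma Fs_tendsto {b : ℕ → ℤ → ℂ} {c : ℤ → ℂ} {B : ℝ}
    (hb : ∀ n m, ‖b n m‖ ≤ B * (1 / (1 + |((m : ℤ) : ℝ)|) ^ 2))
    (hlim : ∀ m, Tendsto (fun n => b n m) atTop (𝓝 (c m))) {δ : ℝ} (hδ : 0 < δ) :
    ∀ᶠ n in atTop, ∀ t, ‖Fs (b n) t - Fs c t‖ ≤ δ := by
  have hc : ∀ m : ℤ, ‖c m‖ ≤ B * (1 / (1 + |(m : ℝ)|) ^ 2) := fun m =>
    le_of_tendsto (hlim m).norm (Eventually.of_forall fun n => hb n m)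
  have hlim0 : Tendsto (fun n => ∑' m, ‖b n m - c m‖) atTop (𝓝 (∑' _ : ℤ, (0 : ℝ))) := by
    refine tendsto_tsum_of_dominated_convergence
      (bound := fun m : ℤ => 2 * (B * (1 / (1 + |(m : ℝ)|) ^ 2)))
      ((summable_sq.mul_left B).mul_left 2) (fun m => ?_) (Eventually.of_forall fun n m => ?_)
    · have := ((hlim m).sub_const (c m)).norm
      simpa using this
    · rw [norm_norm]
      refine (norm_sub_le _ _).trans ?_
      have := hb n m
      have := hc m
      linarith
  rw [tsum_zero] at hlim0
  filter_upwards [hlim0.eventually (gt_mem_nhds hδ)] with n hn t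
  have hs : Summable fun m => ‖b n m - c m‖ :=
    Summable.of_nonneg_of_le (fun _ => norm_nonneg _) (fun m => by
      refine (norm_sub_le _ _).trans (add_le_add (hb n m) (hc m)))
      ((summable_sq.mul_left B).add (summable_sq.mul_left B))
  rw [Fs, Fs, ← (Fs_summable (hb n) t).tsum_sub (Fs_summable hc t)]
  refine (tsum_of_norm_bounded hs.hasSum fun m => ?_).trans hn.le
  rw [← sub_mul, norm_mul, om_norm, mul_one]

lemma hasDerivAt_om (m t : ℝ) :
    HasDerivAt (fun t : ℝ => om (m * t)) (2 * Real.pi * m * Complex.I * om (m * t)) t := by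
  have h1 : HasDerivAt (fun t : ℝ => 2 * Real.pi * ((m * t : ℝ) : ℂ) * Complex.I)
      (2 * Real.pi * m * Complex.I) t := by
    have h0 : HasDerivAt (fun t : ℝ => ((m * t : ℝ) : ℂ)) (m : ℂ) t := by
      have := ((hasDerivAt_id t).const_mul m).ofReal_comp
      simpa using this
    simpa [mul_assoc] using (h0.const_mul (2 * Real.pi : ℂ)).mul_const Complex.I
  refine h1.cexp.congr_deriv ?_
  rw [mul_comm]
  rfl

lemma RD.deriv {c : ℤ → ℂ} (h : RD c) : RD fun m => 2 * Real.pi * m * Complex.I * c m := by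
  intro k
  obtain ⟨B, hB⟩ := h (k + 1)
  refine ⟨2 * Real.pi * B, fun m => ?_⟩
  have hp := Real.pi_pos
  have e : ‖2 * Real.pi * m * Complex.I * c m‖ = 2 * Real.pi * (|(m : ℝ)| * ‖c m‖) := by
    simp [abs_of_pos hp]; ring
  rw [e]
  have := hB m
  have h1 : (1 + |(m : ℝ)|) ^ k * (|(m : ℝ)| * ‖c m‖) ≤ B := by
    refine le_trans ?_ this
    rw [pow_succ, mul_assoc]
    gcongr
    linarith
  nlinarith

lemma Fs_hasDerivAt {c : ℤ → ℂ} (h : RD c) (t : ℝ) :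
    HasDerivAt (Fs c) (Fs (fun m => 2 * Real.pi * m * Complex.I * c m) t) t := by
  obtain ⟨B, hB⟩ := h.deriv.bound
  obtain ⟨B', hB'⟩ := h.bound
  refine hasDerivAt_tsum (g := fun (m : ℤ) (y : ℝ) => c m * om (m * y))
    (g' := fun (m : ℤ) (y : ℝ) => 2 * Real.pi * m * Complex.I * c m * om (m * y))
    (summable_sq.mul_left B) (fun m y => ?_) (fun m y => ?_) (Fs_summable hB' 0) t
  · have := (hasDerivAt_om m y).const_mul (c m)
    push_cast at this
    refine this.congr_deriv ?_
    ring
  · rw [norm_mul, om_norm, mul_one]; exact hB m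

lemma Fs_contDiff {c : ℤ → ℂ} (h : RD c) : ContDiff ℝ ∞ (Fs c) := by
  rw [contDiff_infty]
  intro n
  induction n generalizing c with
  | zero =>
    exact contDiff_zero.2 (continuous_iff_continuousAt.2 fun t => (Fs_hasDerivAt h t).continuousAt)
  | succ n ih =>
    have : ((n + 1 : ℕ) : WithTop ℕ∞) = (n : WithTop ℕ∞) + 1 := by norm_cast
    rw [this, contDiff_succ_iff_deriv]
    refine ⟨fun t => (Fs_hasDerivAt h t).differentiableAt, by simp, ?_⟩
    have e : _root_.deriv (Fs c) = Fs (fun m => 2 * Real.pi * m * Complex.I * c m) :=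
      funext fun t => (Fs_hasDerivAt h t).deriv
    rw [e]
    exact ih h.deriv

lemma Fs_periodic (c : ℤ → ℂ) : Function.Periodic (Fs c) 1 := by
  intro t
  refine tsum_congr fun m => ?_
  rw [mul_add, mul_one, om_add_int]

section coef
variable {N : ℕ} [NeZero N]

/-- Discrete Fourier coefficients of a grid function, extended by zero from the representatives of
`ℤ/N` of least absolute value to all of `ℤ`. -/
def cf (x : ZMod N → ℂ) (m : ℤ) : ℂ :=
  if ((m : ZMod N)).valMinAbs = m then (1 / (N : ℂ)) * ZMod.dft x m else 0

lemma cf_sum (x : ZMod N → ℂ) (θ : ℤ → ℂ) :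
    ∑' m, cf x m * θ m = (1 / (N : ℂ)) * ∑ k : ZMod N, ZMod.dft x k * θ k.valMinAbs := by
  have hinj : Function.Injective (ZMod.valMinAbs : ZMod N → ℤ) := ZMod.injective_valMinAbs
  have hsupp : Function.support (fun m => cf x m * θ m) ⊆ Set.range (ZMod.valMinAbs : ZMod N → ℤ) := by
    intro m hm
    by_contra hne
    refine hm ?_
    have : ¬ ((m : ZMod N)).valMinAbs = m := fun h => hne ⟨_, h⟩
    simp [cf, this]
  rw [← hinj.tsum_eq hsupp, tsum_fintype, Finset.mul_sum]
  refine Finset.sum_congr rfl fun k _ => ?_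
  simp only [cf, ZMod.coe_valMinAbs, if_true]
  ring

lemma eval_eq (x : ZMod N → ℂ) (j : ℤ) :
    x j = (1 / (N : ℂ)) * ∑ k : ZMod N, ZMod.dft x k * om (k.valMinAbs * (j / N)) := by
  have hN : (N : ℂ) ≠ 0 := Nat.cast_ne_zero.2 (NeZero.ne N)
  have h := dft_inv x j
  have : ∀ k : ZMod N, ZMod.stdAddChar ((j : ZMod N) * k) = om (k.valMinAbs * (j / N)) := by
    intro k
    have e : (j : ZMod N) * k = ((j * k.valMinAbs : ℤ) : ZMod N) := by simp
    rw [e, ee_intCast]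
    congr 1; push_cast; ring
  simp only [this] at h
  rw [← mul_right_inj' hN, ← h]
  field_simp
  exact Finset.sum_congr rfl fun k _ => by ring

lemma gp_split (c : ℝ) (v j : ℤ) : om (v * (j / N)) = om (-(v * c / N)) * om (v * gp N c j) := by
  rw [← om_add]; congr 1; unfold gp; ring

lemma eval_Fs (x : ZMod N → ℂ) (c : ℝ) (j : ℤ) :
    x j = Fs (fun m => cf x m * om (-(m * c / N))) (gp N c j) := by
  simp only [Fs, mul_assoc]
  rw [cf_sum, eval_eq x j]
  simp only [gp_split c]

lemma eval_db (x : ZMod N → ℂ) (c : ℝ) (j : ℤ) :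
    db x j = Fs (fun m => cf x m * (N * (1 - om (-(m / N))) * om (-(m * c / N)))) (gp N c j) := by
  have e : ((j : ZMod N) - 1) = ((j - 1 : ℤ) : ZMod N) := by push_cast; rfl
  simp only [Fs, mul_assoc]
  rw [cf_sum, db, e, eval_eq x j, eval_eq x (j - 1), ← mul_sub, ← Finset.sum_sub_distrib,
    mul_left_comm, Finset.mul_sum]
  congr 1
  refine Finset.sum_congr rfl fun k _ => ?_
  have : om (k.valMinAbs * (((j - 1 : ℤ) : ℝ) / N)) =
      om (-(k.valMinAbs / N)) * om (k.valMinAbs * (j / N)) := by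
    rw [← om_add]; congr 1; push_cast; ring
  rw [this, gp_split c]
  ring

/-- Discrete derivatives control the decay of the discrete Fourier coefficients. -/
lemma cf_decay (x : ZMod N → ℂ) (k : ℕ) (m : ℤ) :
    (4 * |(m : ℝ)|) ^ k * ‖cf x m‖ ≤ nrm (dl^[k] x) / Real.sqrt N := by
  have hN : (0 : ℝ) < N := Nat.cast_pos.2 (Nat.pos_of_ne_zero (NeZero.ne N))
  have hs : 0 < Real.sqrt N := Real.sqrt_pos.2 hN
  unfold cf
  split_ifs with hm
  · have h2 : 2 * m.natAbs ≤ N := by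
      have := ZMod.natAbs_valMinAbs_le (m : ZMod N)
      rw [hm] at this; omega
    have h4 : 4 * |(m : ℝ)| ≤ ‖(N : ℂ) * (ZMod.stdAddChar (m : ZMod N) - 1)‖ := by
      have h5 := ee_sub_one_lower h2
      have h6 : ‖ZMod.stdAddChar ((m.natAbs : ℕ) : ZMod N) - 1‖ =
          ‖ZMod.stdAddChar (m : ZMod N) - 1‖ := by
        rcases Int.natAbs_eq m with h | h
        · conv_rhs => rw [h]
          simp
        · conv_rhs => rw [h]
          rw [Int.cast_neg, Int.cast_natCast, ← ee_conj, ← Complex.norm_conj, map_sub, map_one]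
      rw [h6] at h5
      have h7 : ((m.natAbs : ℕ) : ℝ) = |(m : ℝ)| := by
        rw [Nat.cast_natAbs]; push_cast; rfl
      rw [norm_mul, Complex.norm_natCast]
      rw [h7] at h5
      calc 4 * |(m : ℝ)| = N * (4 * (|(m : ℝ)| / N)) := by field_simp
        _ ≤ _ := by gcongr
    have hd : ∀ k : ℕ, ZMod.dft (dl^[k] x) (m : ZMod N) =
        (N * (ZMod.stdAddChar (m : ZMod N) - 1)) ^ k * ZMod.dft x m := by
      intro k
      induction k with
      | zero => simp
      | succ k ih => rw [Function.iterate_succ_apply', dft_dl, ih]; ring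
    have hb : ∀ y : ZMod N → ℂ, ‖ZMod.dft y (m : ZMod N)‖ ≤ Real.sqrt N * nrm y := by
      intro y
      refine le_trans ?_ (sum_norm_le y)
      rw [ZMod.dft_apply]
      refine (norm_sum_le _ _).trans (Finset.sum_le_sum fun j _ => ?_)
      rw [smul_eq_mul, norm_mul, ee_norm, one_mul]
    have hb' := hb (dl^[k] x)
    rw [hd, norm_mul, norm_pow] at hb'
    rw [norm_mul, norm_div, norm_one, Complex.norm_natCast]
    calc (4 * |(m : ℝ)|) ^ k * (1 / N * ‖ZMod.dft x (m : ZMod N)‖)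
        = 1 / N * ((4 * |(m : ℝ)|) ^ k * ‖ZMod.dft x (m : ZMod N)‖) := by ring
      _ ≤ 1 / N * (‖(N : ℂ) * (ZMod.stdAddChar (m : ZMod N) - 1)‖ ^ k * ‖ZMod.dft x (m : ZMod N)‖) := by
          gcongr
      _ ≤ 1 / N * (Real.sqrt N * nrm (dl^[k] x)) := by gcongr
      _ = nrm (dl^[k] x) / Real.sqrt N := by
          have := Real.sq_sqrt hN.le
          field_simp
          rw [this]
  · rw [norm_zero, mul_zero]
    exact div_nonneg (nrm_nonneg _) hs.le

lemma norm_symbol_le (m : ℤ) : ‖(N : ℂ) * (1 - om (-(m / N)))‖ ≤ 2 * Real.pi * |(m : ℝ)| := by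
  have hN : (0 : ℝ) < N := Nat.cast_pos.2 (Nat.pos_of_ne_zero (NeZero.ne N))
  have h := norm_one_sub_exp (-(Real.pi * (m / N)))
  have e : om (-(m / N)) = Complex.exp (2 * ((-(Real.pi * (m / N)) : ℝ) : ℂ) * Complex.I) := by
    rw [om]; congr 1; push_cast; ring
  rw [norm_mul, Complex.norm_natCast, e, norm_sub_rev, h]
  have h2 : |Real.sin (-(Real.pi * (m / N)))| ≤ Real.pi * |(m : ℝ)| / N := by
    refine (Real.abs_sin_le_abs).trans (le_of_eq ?_)
    rw [abs_neg, abs_mul, abs_div, abs_of_pos Real.pi_pos, abs_of_pos hN]; ring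
  calc (N : ℝ) * (2 * |Real.sin (-(Real.pi * (m / N)))|)
      ≤ N * (2 * (Real.pi * |(m : ℝ)| / N)) := by gcongr
    _ = _ := by field_simp

end coef

end Nys

end

noncomputable section
open scoped ContDiff ComplexConjugate Topology
open Filter
namespace Nys

lemma one_add_pow_le_four (m : ℤ) (k : ℕ) :
    (1 + |(m : ℝ)|) ^ k ≤ 1 + (4 * |(m : ℝ)|) ^ k := by
  rcases eq_or_ne m 0 with rfl | hm
  · simp
  · have h1 : (1 : ℝ) ≤ |(m : ℝ)| := by
      have := Int.one_le_abs hm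
      exact_mod_cast this
    have : (1 + |(m : ℝ)|) ^ k ≤ (4 * |(m : ℝ)|) ^ k := by gcongr; linarith
    linarith

lemma tendsto_symbol (m : ℝ) {M : ℕ → ℕ} (hM : Tendsto M atTop atTop) :
    Tendsto (fun n => (M n : ℂ) * (1 - om (-(m / M n)))) atTop
      (𝓝 (2 * Real.pi * m * Complex.I)) := by
  have h := (hasDerivAt_om (-m) 0).const_sub (1 : ℂ)
  have h2 := hasDerivAt_iff_tendsto_slope_zero.1 h
  have hM' : Tendsto (fun n => ((M n : ℝ))⁻¹) atTop (𝓝[≠] 0) := by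
    rw [tendsto_nhdsWithin_iff]
    refine ⟨tendsto_inv_atTop_zero.comp (tendsto_natCast_atTop_atTop.comp hM), ?_⟩
    filter_upwards [hM.eventually_gt_atTop 0] with n hn
    simp only [Set.mem_compl_iff, Set.mem_singleton_iff, inv_eq_zero]
    exact_mod_cast hn.ne'
  have h3 := h2.comp hM'
  have h0 : om 0 = 1 := by simp [om]
  refine (h3.congr fun n => ?_).trans (le_of_eq ?_)
  · simp only [Function.comp, inv_inv, zero_add, mul_zero, h0, sub_self, sub_zero, Complex.real_smul]
    congr 3
    rw [← div_eq_mul_inv]; ring_nf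
  · congr 1
    rw [mul_zero, h0]
    push_cast; ring

lemma tendsto_shift (m c : ℝ) {M : ℕ → ℕ} (hM : Tendsto M atTop atTop) :
    Tendsto (fun n => om (-(m * c / M n))) atTop (𝓝 1) := by
  have h : Continuous fun t : ℝ => om (m * t) :=
    continuous_iff_continuousAt.2 fun t => (hasDerivAt_om m t).continuousAt
  have h0 : om (m * 0) = 1 := by simp [om]
  have h1 : Tendsto (fun n => -(c * ((M n : ℝ))⁻¹)) atTop (𝓝 0) := by
    have h2 : Tendsto (fun n => ((M n : ℝ))⁻¹) atTop (𝓝 0) :=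
      tendsto_inv_atTop_zero.comp (tendsto_natCast_atTop_atTop.comp hM)
    simpa using (h2.const_mul c).neg
  have h2 := (h.tendsto 0).comp h1
  rw [h0] at h2
  refine h2.congr fun n => ?_
  simp only [Function.comp]
  congr 1
  ring

/-- Grid functions with uniformly bounded discrete derivatives of all orders have a subsequence
which, together with its first divided differences, converges uniformly to a smooth function. -/
lemma compactness {M : ℕ → ℕ} [hM0 : ∀ n, NeZero (M n)] (hM : Tendsto M atTop atTop)
    (x : ∀ n, ZMod (M n) → ℂ) (B : ℕ → ℝ)
    (hB : ∀ n k, nrm (dl^[k] (x n)) ≤ B k * Real.sqrt (M n)) :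
    ∃ φ : ℝ → ℂ, ContDiff ℝ ∞ φ ∧ Function.Periodic φ 1 ∧ ∃ σ : ℕ → ℕ, StrictMono σ ∧
      ∀ c : ℝ, ∀ δ > 0, ∀ᶠ n in atTop, ∀ j : ℤ,
        ‖x (σ n) j - φ (gp (M (σ n)) c j)‖ ≤ δ ∧
        ‖db (x (σ n)) j - deriv φ (gp (M (σ n)) c j)‖ ≤ δ := by
  have hdec : ∀ n k m, (1 + |((m : ℤ) : ℝ)|) ^ k * ‖cf (x n) m‖ ≤ B 0 + B k := by
    intro n k m
    have hs : 0 < Real.sqrt (M n) :=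
      Real.sqrt_pos.2 (Nat.cast_pos.2 (Nat.pos_of_ne_zero (NeZero.ne _)))
    have h0 := cf_decay (x n) 0 m
    have hk := cf_decay (x n) k m
    have b0 : nrm (dl^[0] (x n)) / Real.sqrt (M n) ≤ B 0 := (div_le_iff₀ hs).2 (hB n 0)
    have bk : nrm (dl^[k] (x n)) / Real.sqrt (M n) ≤ B k := (div_le_iff₀ hs).2 (hB n k)
    have := mul_le_mul_of_nonneg_right (one_add_pow_le_four m k) (norm_nonneg (cf (x n) m))
    rw [pow_zero, one_mul] at h0
    rw [add_mul, one_mul] at this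
    linarith
  have hcpt : IsCompact (Set.univ.pi fun _ : ℤ => Metric.closedBall (0 : ℂ) (B 0 + B 0)) :=
    isCompact_univ_pi fun _ => isCompact_closedBall _ _
  obtain ⟨c, -, σ, hσ, hlim⟩ := hcpt.tendsto_subseq (x := fun n => cf (x n)) fun n m _ => by
    rw [mem_closedBall_zero_iff]
    simpa using hdec n 0 m
  have hlim' : ∀ m, Tendsto (fun n => cf (x (σ n)) m) atTop (𝓝 (c m)) := fun m =>
    (tendsto_pi_nhds.1 hlim) m
  have hRD : RD c := fun k => ⟨B 0 + B k, fun m =>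
    le_of_tendsto ((hlim' m).norm.const_mul _) (Eventually.of_forall fun n => hdec (σ n) k m)⟩
  have hMσ : Tendsto (fun n => M (σ n)) atTop atTop := hM.comp hσ.tendsto_atTop
  have hpos : ∀ m : ℤ, (0 : ℝ) < (1 + |(m : ℝ)|) ^ 2 := fun m => by positivity
  refine ⟨Fs c, Fs_contDiff hRD, Fs_periodic c, σ, hσ, fun a δ hδ => ?_⟩
  have e1 := Fs_tendsto (b := fun n m => cf (x (σ n)) m * om (-(m * a / M (σ n)))) (c := c)
    (B := B 0 + B 2) (fun n m => ?_) (fun m => ?_) hδ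
  · have e2 := Fs_tendsto (b := fun n m => cf (x (σ n)) m *
      ((M (σ n) : ℂ) * (1 - om (-(m / M (σ n)))) * om (-(m * a / M (σ n)))))
      (c := fun m => 2 * Real.pi * m * Complex.I * c m)
      (B := 2 * Real.pi * (B 0 + B 3)) (fun n m => ?_) (fun m => ?_) hδ
    · filter_upwards [e1, e2] with n h1 h2 j
      rw [(Fs_hasDerivAt hRD _).deriv]
      have k1 := h1 (gp (M (σ n)) a j)
      have k2 := h2 (gp (M (σ n)) a j)
      rw [← eval_Fs] at k1
      rw [← eval_db] at k2
      exact ⟨k1, k2⟩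
    · rw [norm_mul, norm_mul, om_norm, mul_one, mul_one_div, le_div_iff₀ (hpos m)]
      have h1 := hdec (σ n) 3 m
      have h2 := norm_symbol_le (N := M (σ n)) m
      calc ‖cf (x (σ n)) m‖ * ‖(M (σ n) : ℂ) * (1 - om (-(m / M (σ n))))‖ * (1 + |(m : ℝ)|) ^ 2
          ≤ ‖cf (x (σ n)) m‖ * (2 * Real.pi * |(m : ℝ)|) * (1 + |(m : ℝ)|) ^ 2 := by gcongr
        _ ≤ ‖cf (x (σ n)) m‖ * (2 * Real.pi * (1 + |(m : ℝ)|)) * (1 + |(m : ℝ)|) ^ 2 := by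
            have := Real.pi_pos
            gcongr
            linarith
        _ = 2 * Real.pi * ((1 + |(m : ℝ)|) ^ 3 * ‖cf (x (σ n)) m‖) := by ring
        _ ≤ _ := by have := Real.pi_pos; gcongr
    · have := (hlim' m).mul ((tendsto_symbol m hMσ).mul (tendsto_shift m a hMσ))
      refine this.trans (le_of_eq ?_)
      congr 1; push_cast; ring
  · rw [norm_mul, om_norm, mul_one, mul_one_div, le_div_iff₀ (hpos m), mul_comm]
    exact hdec (σ n) 2 m
  · have := (hlim' m).mul (tendsto_shift m a hMσ)
    rwa [mul_one] at this

end Nys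

end

noncomputable section
open scoped ContDiff ComplexConjugate Topology
open Filter MeasureTheory
namespace Nys

/-! ### Convergence of the quadrature sums -/

lemma gp_add (N : ℕ) [NeZero N] (c : ℝ) (i : ℤ) : gp N c (i + N) = gp N c i + 1 := by
  have hN : (N : ℝ) ≠ 0 := Nat.cast_ne_zero.2 (NeZero.ne N)
  unfold gp; push_cast; field_simp; ring

lemma riemann_cell {f : ℝ → ℂ} (hf : Continuous f) {N : ℕ} [NeZero N] {δ : ℝ}
    (hδ : ∀ s t, |s - t| ≤ 1 / (N : ℝ) → ‖f s - f t‖ ≤ δ) (c : ℝ) (i₀ : ℤ) (m : ℕ) :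
    ‖(1 / (N : ℂ)) * ∑ i ∈ Finset.range m, f (gp N c (i₀ + i)) -
      ∫ t in gp N c i₀..gp N c (i₀ + m), f t‖ ≤ δ * (m / N) := by
  have hN : (0 : ℝ) < N := Nat.cast_pos.2 (Nat.pos_of_ne_zero (NeZero.ne N))
  induction m with
  | zero => simp
  | succ m ih =>
    set p := gp N c (i₀ + m) with hp
    have hq : gp N c (i₀ + (m + 1 : ℕ)) = p + 1 / N := by
      rw [hp, ← gp_succ]; push_cast; rw [add_assoc]
    rw [hq, Finset.sum_range_succ, mul_add,
      ← intervalIntegral.integral_add_adjacent_intervals (hf.intervalIntegrable _ p)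
        (hf.intervalIntegrable _ _)]
    have h1 : (1 / (N : ℂ)) * f p = ∫ _ in p..p + 1 / N, f p := by
      rw [intervalIntegral.integral_const, add_sub_cancel_left, Complex.real_smul]; push_cast; rfl
    have h2 : ‖(1 / (N : ℂ)) * f p - ∫ t in p..p + 1 / N, f t‖ ≤ δ * (1 / N) := by
      rw [h1, ← intervalIntegral.integral_sub (by simp) (hf.intervalIntegrable _ _)]
      have := intervalIntegral.norm_integral_le_of_norm_le_const (a := p) (b := p + 1 / N)
        (C := δ) (f := fun t => f p - f t) fun t ht => ?_
      · rwa [add_sub_cancel_left, abs_of_pos (by positivity)] at this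
      · rw [Set.uIoc_of_le (by simp)] at ht
        refine hδ _ _ ?_
        rw [abs_sub_comm, abs_of_pos (by linarith [ht.1])]
        linarith [ht.2]
    have e : (1 / (N : ℂ)) * ∑ i ∈ Finset.range m, f (gp N c (i₀ + i)) + 1 / (N : ℂ) * f p -
        ((∫ t in gp N c i₀..p, f t) + ∫ t in p..p + 1 / N, f t) =
        ((1 / (N : ℂ)) * ∑ i ∈ Finset.range m, f (gp N c (i₀ + i)) - ∫ t in gp N c i₀..p, f t) +
        (1 / (N : ℂ) * f p - ∫ t in p..p + 1 / N, f t) := by ring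
    rw [e]
    refine (norm_add_le _ _).trans ((add_le_add ih h2).trans (le_of_eq ?_))
    push_cast; ring

lemma sum_zmod_cast {E : Type*} [AddCommMonoid E] {N : ℕ} [NeZero N] (f : ℤ → E) :
    ∑ k : ZMod N, f (ZMod.cast k) = ∑ k ∈ Finset.range N, f k := by
  have h : ∀ k : ZMod N, f (ZMod.cast k) = f (k.val : ℕ) := fun k => by rw [ZMod.natCast_val]
  simp only [h]
  cases N with
  | zero => exact absurd rfl (NeZero.ne 0)
  | succ n => exact Fin.sum_univ_eq_sum_range (fun i => f (i : ℕ)) (n + 1)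

lemma riemann_per {f : ℝ → ℂ} (hf : Continuous f) (hp : Function.Periodic f 1) {N : ℕ} [NeZero N]
    {δ : ℝ} (hδ : ∀ s t, |s - t| ≤ 1 / (N : ℝ) → ‖f s - f t‖ ≤ δ) (c : ℝ) :
    ‖(1 / (N : ℂ)) * ∑ j : ZMod N, f (gp N c (ZMod.cast j)) - ∫ t in (0 : ℝ)..1, f t‖ ≤ δ := by
  have hN : (N : ℝ) ≠ 0 := Nat.cast_ne_zero.2 (NeZero.ne N)
  have h := riemann_cell hf hδ c 0 N
  rw [gp_add, hp.intervalIntegral_add_eq _ 0, zero_add, div_self hN, mul_one] at h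
  rw [sum_zmod_cast (fun j => f (gp N c j))]
  simpa using h

lemma intervalIntegrable_log (s a b : ℝ) :
    IntervalIntegrable (fun t => Real.log (Real.sin (Real.pi * (s - t)) ^ 2)) volume a b := by
  have h0 : IntervalIntegrable (fun t => Real.log (Real.sin t)) volume
      (Real.pi * (s - a)) (Real.pi * (s - b)) := intervalIntegrable_log_sin
  have h1 := h0.comp_mul_left (c := Real.pi)
  rw [mul_div_cancel_left₀ _ Real.pi_ne_zero, mul_div_cancel_left₀ _ Real.pi_ne_zero] at h1
  have h2 := (h1.comp_sub_left s).const_mul 2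
  rw [sub_sub_cancel, sub_sub_cancel] at h2
  refine h2.congr (fun t _ => ?_)
  simp [Real.log_pow]

/-- The regularisation error as a function on the circle. -/
def gG (ρ t : ℝ) : ℝ := gw ρ |Real.sin (Real.pi * t)|

lemma gG_periodic (ρ : ℝ) : Function.Periodic (gG ρ) 1 := by
  intro t
  have := abs_sin_pi_add_int t 1
  rw [gG, gG]
  simp only [Int.cast_one] at this
  rw [this]

lemma gG_integrable {ρ : ℝ} (hρ : 0 < ρ) (a b : ℝ) : IntervalIntegrable (gG ρ) volume a b := by
  have h1 : Continuous fun t : ℝ => Real.log (Real.sin (Real.pi * t) ^ 2 + ρ ^ 8) :=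
    Continuous.log (by fun_prop) fun t => by positivity
  have h2 := intervalIntegrable_log 0 a b
  refine ((h1.intervalIntegrable a b).sub h2).congr fun t _ => ?_
  simp [gG, gw, sq_abs]

lemma ae_sin_ne : ∀ᵐ t : ℝ, Real.sin (Real.pi * t) ≠ 0 := by
  have hc : (Set.range ((↑) : ℤ → ℝ)).Countable := Set.countable_range _
  filter_upwards [hc.ae_notMem volume] with t ht h
  obtain ⟨n, hn⟩ := Real.sin_eq_zero_iff.1 h
  refine ht ⟨n, ?_⟩
  have := Real.pi_ne_zero
  rw [mul_comm] at hn
  exact mul_left_cancel₀ this hn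

lemma gG_integral_tendsto :
    Tendsto (fun ρ => ∫ t in (0 : ℝ)..1, |gG ρ t|) (𝓝[>] 0) (𝓝 0) := by
  have h := intervalIntegral.tendsto_integral_filter_of_dominated_convergence
    (μ := volume) (a := 0) (b := 1) (l := 𝓝[>] (0 : ℝ)) (F := fun ρ t => |gG ρ t|)
    (f := fun _ => (0 : ℝ)) (gG 1) ?_ ?_ (gG_integrable one_pos 0 1) ?_
  · simpa using h
  · filter_upwards [self_mem_nhdsWithin] with ρ hρ
    exact (intervalIntegrable_iff.1 (gG_integrable hρ 0 1).abs).aestronglyMeasurable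
  · filter_upwards [Ioo_mem_nhdsGT (one_pos (α := ℝ))] with ρ hρ
    filter_upwards [ae_sin_ne] with t ht _
    have hu : 0 < |Real.sin (Real.pi * t)| := abs_pos.2 ht
    have hn : 0 ≤ gG ρ t := gw_nonneg hρ.1 hu
    rw [Real.norm_eq_abs, abs_abs, abs_of_nonneg hn]
    unfold gG gw
    have : ρ ^ 8 ≤ 1 ^ 8 := pow_le_pow_left₀ hρ.1.le hρ.2.le 8
    gcongr
  · filter_upwards [ae_sin_ne] with t ht _
    have hu : 0 < |Real.sin (Real.pi * t)| := abs_pos.2 ht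
    have hc : ContinuousAt (fun ρ => |gG ρ t|) 0 := by
      unfold gG gw
      refine (ContinuousAt.sub (ContinuousAt.log (by fun_prop) (by positivity))
        continuousAt_const).abs
    have h0 : |gG 0 t| = 0 := by simp [gG, gw]
    have := hc.tendsto
    rw [h0] at this
    exact this.mono_left nhdsWithin_le_nhds

lemma uniformContinuous_periodic {f : ℝ → ℂ} (hf : Continuous f) (hp : Function.Periodic f 1) :
    UniformContinuous f := by
  have h1 : Continuous (hp.lift : AddCircle (1 : ℝ) → ℂ) := by
    have : Topology.IsQuotientMap ((↑) : ℝ → AddCircle (1 : ℝ)) := QuotientAddGroup.isQuotientMap_mk _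
    exact this.continuous_iff.2 hf
  have : Fact ((0 : ℝ) < 1) := ⟨one_pos⟩
  have h2 : UniformContinuous (hp.lift : AddCircle (1 : ℝ) → ℂ) :=
    CompactSpace.uniformContinuous_of_continuous h1
  have h3 : UniformContinuous (QuotientAddGroup.mk' (AddSubgroup.zmultiples (1 : ℝ))) :=
    uniformContinuous_of_continuousAt_zero _ (AddCircle.continuous_mk' 1).continuousAt
  exact h2.comp h3

end Nys

end

noncomputable section
open scoped ContDiff ComplexConjugate Topology
open Filter MeasureTheory
namespace Nys

/-- The integral operator with kernel `V`. -/
def J (V : ℝ × ℝ → ℂ) (g : ℝ → ℂ) (s : ℝ) : ℂ := ∫ t in (0 : ℝ)..1, V (s, t) * g t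

lemma Q_apply {N : ℕ} [NeZero N] (a c : ℝ) {F : ℝ × ℝ → ℂ} (hF : Per F) (x : ZMod N → ℂ) (i : ℤ) :
    Q N a c F x i = (1 / (N : ℂ)) * ∑ j : ZMod N, F (gp N a i, gp N c (ZMod.cast j)) * x j := by
  rw [Q]
  congr 1
  refine Finset.sum_congr rfl fun j _ => ?_
  have h := mat_intCast (N := N) a c hF i (ZMod.cast j : ℤ)
  rw [ZMod.intCast_zmod_cast] at h
  rw [h]

lemma us_cast {N : ℕ} [NeZero N] (a c : ℝ) (i : ℤ) (j : ZMod N) :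
    |Real.sin (Real.pi * (gp N a i - gp N c (ZMod.cast j)))| = us N (a - c) (i - j) := by
  rw [us_sub, ZMod.intCast_zmod_cast]

/-- If `|F| ≤ M |sin(π(s-t))|^(-1/2)`, then the quadrature sums are bounded by `M` times a constant
which depends only on the grid offsets. -/
lemma Q_sup {a c : ℝ} (hε : ∀ k : ℤ, a - c ≠ k) :
    ∃ S, 0 ≤ S ∧ ∀ (N : ℕ) [NeZero N] (F : ℝ × ℝ → ℂ) (_ : Per F) (M : ℝ),
      (∀ p : ℝ × ℝ, 0 < |Real.sin (Real.pi * (p.1 - p.2))| →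
        ‖F p‖ ≤ M * (1 / Real.sqrt |Real.sin (Real.pi * (p.1 - p.2))|)) →
      ∀ (x : ZMod N → ℂ) (δ : ℝ), 0 ≤ M → (∀ j, ‖x j‖ ≤ δ) → ∀ i : ℤ, ‖Q N a c F x i‖ ≤ M * S * δ := by
  obtain ⟨S, hS0, hS⟩ := sum_us hε
  refine ⟨S, hS0, fun N _ F hF M hM x δ hM0 hx i => ?_⟩
  have hδ : 0 ≤ δ := (norm_nonneg _).trans (hx 0)
  have hN : (0 : ℝ) < N := Nat.cast_pos.2 (Nat.pos_of_ne_zero (NeZero.ne N))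
  rw [Q_apply a c hF, norm_mul, norm_div, norm_one, Complex.norm_natCast]
  calc 1 / (N : ℝ) * ‖∑ j : ZMod N, F (gp N a i, gp N c (ZMod.cast j)) * x j‖
      ≤ 1 / (N : ℝ) * ∑ j : ZMod N, M * (1 / Real.sqrt (us N (a - c) (i - j))) * δ := by
        gcongr
        refine (norm_sum_le _ _).trans (Finset.sum_le_sum fun j _ => ?_)
        rw [norm_mul]
        have h1 := hM (gp N a i, gp N c (ZMod.cast j)) (by
          simp only [us_cast]; exact us_pos hε _)
        simp only [us_cast] at h1
        gcongr
        exact hx j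
    _ = M * ((1 / (N : ℝ)) * ∑ k : ZMod N, 1 / Real.sqrt (us N (a - c) k)) * δ := by
        rw [← Equiv.sum_comp (Equiv.subLeft (i : ZMod N))
          (fun k => 1 / Real.sqrt (us N (a - c) k))]
        simp only [Equiv.subLeft_apply, ← Finset.sum_mul, ← Finset.mul_sum]
        ring
    _ ≤ M * S * δ := by have := hS N; gcongr

lemma qw_one_le {u : ℝ} (hu : 0 < u) (hu1 : u ≤ 1) : qw 1 u ≤ 1 / Real.sqrt u := by
  have h1 := one_le_qw hu hu1
  rw [← qw_one_sq_le]
  nlinarith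

section ker
variable {A K : ℝ × ℝ → ℂ}

lemma ker_reg_contDiff (sA : ContDiff ℝ ∞ A) (sK : ContDiff ℝ ∞ K)
    {ρ : ℝ} (hρ : 0 < ρ) :
    ContDiff ℝ ∞ fun p => A p * Le (ρ ^ 8) p + K p :=
  (sA.mul (contDiff_Le (by positivity))).add sK

lemma ker_integrable (sA : ContDiff ℝ ∞ A) (sK : ContDiff ℝ ∞ K)
    {g : ℝ → ℂ} (hg : Continuous g) (s a b : ℝ) :
    IntervalIntegrable (fun t => (A (s, t) * Lk (s, t) + K (s, t)) * g t) volume a b := by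
  have hA := sA.continuous
  have hK := sK.continuous
  have h1 : IntervalIntegrable (fun t => Lk (s, t)) volume a b :=
    ⟨(intervalIntegrable_log s a b).1.ofReal, (intervalIntegrable_log s a b).2.ofReal⟩
  have h2 : IntervalIntegrable (fun t => Lk (s, t) * (A (s, t) * g t)) volume a b :=
    h1.mul_continuousOn (by fun_prop)
  have h3 : IntervalIntegrable (fun t => K (s, t) * g t) volume a b :=
    Continuous.intervalIntegrable (by fun_prop) _ _
  have e : (fun t => (A (s, t) * Lk (s, t) + K (s, t)) * g t) =
      fun t => Lk (s, t) * (A (s, t) * g t) + K (s, t) * g t := by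
    ext t; ring
  rw [e]
  exact h2.add h3

/-- Uniform error of the integral operator when the logarithm is regularised. -/
lemma J_near (sA : ContDiff ℝ ∞ A) (sK : ContDiff ℝ ∞ K)
    {CA Cg : ℝ} (hCA : ∀ p, ‖A p‖ ≤ CA) {g : ℝ → ℂ} (hg : Continuous g)
    (hCg : ∀ t, ‖g t‖ ≤ Cg) {ρ : ℝ} (hρ : 0 < ρ) (s : ℝ) :
    ‖J (fun p => A p * Lk p + K p) g s - J (fun p => A p * Le (ρ ^ 8) p + K p) g s‖ ≤
      CA * Cg * ∫ t in (0 : ℝ)..1, |gG ρ t| := by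
  have hCA0 : 0 ≤ CA := (norm_nonneg _).trans (hCA 0)
  have hCg0 : 0 ≤ Cg := (norm_nonneg _).trans (hCg 0)
  have hc := (ker_reg_contDiff sA sK hρ).continuous
  have hi : IntervalIntegrable (fun t => (A (s, t) * Le (ρ ^ 8) (s, t) + K (s, t)) * g t)
      volume 0 1 := Continuous.intervalIntegrable
    ((hc.comp (by fun_prop : Continuous fun t : ℝ => (s, t))).mul hg) _ _
  rw [J, J, ← intervalIntegral.integral_sub (ker_integrable sA sK hg s 0 1) hi]
  have e : ∫ t in (0 : ℝ)..1, |gG ρ t| = ∫ t in (0 : ℝ)..1, |gG ρ (s - t)| := by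
    rw [intervalIntegral.integral_comp_sub_left (fun t => |gG ρ t|) s]
    have hp : Function.Periodic (fun t => |gG ρ t|) 1 := fun t => by
      simp only [gG_periodic ρ t]
    have := hp.intervalIntegral_add_eq 0 (s - 1)
    simpa using this
  rw [e, ← intervalIntegral.integral_const_mul]
  refine intervalIntegral.norm_integral_le_of_norm_le zero_le_one
    (Eventually.of_forall fun t _ => ?_) ?_
  · have h : (A (s, t) * Lk (s, t) + K (s, t)) * g t - (A (s, t) * Le (ρ ^ 8) (s, t) + K (s, t)) * g t
        = -(A (s, t) * (Le (ρ ^ 8) (s, t) - Lk (s, t)) * g t) := by ring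
    rw [h, Le_sub_Lk, norm_neg, norm_mul, norm_mul, Complex.norm_real, Real.norm_eq_abs]
    have h1 := hCA (s, t)
    have h2 := hCg t
    calc ‖A (s, t)‖ * |gG ρ (s - t)| * ‖g t‖ ≤ CA * |gG ρ (s - t)| * Cg := by gcongr
      _ = _ := by ring
  · have h1 := (gG_integrable hρ (s - 0) (s - 1)).comp_sub_left s
    rw [sub_sub_cancel, sub_sub_cancel] at h1
    exact h1.abs.const_mul _

lemma J_periodic (pA : Per A) (pK : Per K)
    (g : ℝ → ℂ) : Function.Periodic (J (fun p => A p * Lk p + K p) g) 1 := by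
  intro s
  simp only [J]
  refine intervalIntegral.integral_congr fun t _ => ?_
  simp only [(pA s t).1, (pK s t).1, (Per_Lk s t).1]

lemma exists_bdd (sA : ContDiff ℝ ∞ A) (pA : Per A)
    : ∃ C, 0 ≤ C ∧ ∀ p, ‖A p‖ ≤ C := by
  obtain ⟨C, h0, hC⟩ := (UB_const sA pA).bdd
  exact ⟨C, h0, fun p => hC 0 p⟩

lemma bdd_periodic {g : ℝ → ℂ} (hg : ContDiff ℝ ∞ g) (hp : Function.Periodic g 1) :
    ∃ C, 0 ≤ C ∧ ∀ t, ‖g t‖ ≤ C := by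
  obtain ⟨C, h0, hC⟩ := exists_bdd (A := fun p => g p.2) (hg.comp contDiff_snd)
    (fun s t => ⟨rfl, hp t⟩)
  exact ⟨C, h0, fun t => hC (0, t)⟩

lemma small_gG (M : ℝ) {δ : ℝ} (hδ : 0 < δ) :
    ∃ ρ, 0 < ρ ∧ ρ ≤ δ ∧ M * ∫ t in (0 : ℝ)..1, |gG ρ t| ≤ δ := by
  have h := gG_integral_tendsto.const_mul M
  rw [mul_zero] at h
  have h1 := h.eventually (gt_mem_nhds hδ)
  obtain ⟨ρ, h2, h3⟩ := (h1.and (Ioo_mem_nhdsGT hδ)).exists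
  exact ⟨ρ, h3.1, h3.2.le, h2.le⟩

lemma J_continuous (sA : ContDiff ℝ ∞ A) (sK : ContDiff ℝ ∞ K) (pA : Per A)
    {g : ℝ → ℂ} (hg : ContDiff ℝ ∞ g) (hp : Function.Periodic g 1) :
    Continuous (J (fun p => A p * Lk p + K p) g) := by
  obtain ⟨CA, hCA0, hCA⟩ := exists_bdd sA pA
  obtain ⟨Cg, hCg0, hCg⟩ := bdd_periodic hg hp
  refine continuous_of_uniform_approx_of_continuous fun u hu => ?_
  obtain ⟨δ, hδ, hu⟩ := Metric.mem_uniformity_dist.1 hu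
  obtain ⟨ρ, hρ, -, hG⟩ := small_gG (CA * Cg) (half_pos hδ)
  refine ⟨J (fun p => A p * Le (ρ ^ 8) p + K p) g, ?_, fun s => hu ?_⟩
  · have hc := (ker_reg_contDiff sA sK hρ).continuous
    have hg' := hg.continuous
    refine intervalIntegral.continuous_parametric_intervalIntegral_of_continuous' ?_ 0 1
    simp only [Function.uncurry_def]
    fun_prop
  · rw [dist_eq_norm]
    exact ((J_near sA sK hCA hg.continuous hCg hρ s).trans hG).trans_lt (by linarith)

/-- Uniform convergence of the quadrature sums for logarithmic kernels on shifted grids. -/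
lemma riemann_main (sA : ContDiff ℝ ∞ A) (sK : ContDiff ℝ ∞ K) (pA : Per A) (pK : Per K)
    {a c : ℝ} (hε : ∀ k : ℤ, a - c ≠ k) {g : ℝ → ℂ} (hg : ContDiff ℝ ∞ g)
    (hp : Function.Periodic g 1) {δ : ℝ} (hδ : 0 < δ) :
    ∃ δ' > 0, ∃ N₀ : ℕ, ∀ N ≥ N₀, ∀ [NeZero N] (x : ZMod N → ℂ),
      (∀ j : ℤ, ‖x j - g (gp N c j)‖ ≤ δ') → ∀ i : ℤ,
        ‖Q N a c (fun p => A p * Lk p + K p) x i -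
          J (fun p => A p * Lk p + K p) g (gp N a i)‖ ≤ δ := by
  obtain ⟨CA, hCA0, hCA⟩ := exists_bdd sA pA
  obtain ⟨Cg, hCg0, hCg⟩ := bdd_periodic hg hp
  obtain ⟨S, hS0, hS⟩ := Q_sup hε
  obtain ⟨C, hC0, hC⟩ := log_ker_bound (UB_const sA pA) (UB_const sK pK)
  have hd1 : 0 < δ / (4 * (8 * CA * S * Cg + 1)) := by positivity
  have hd1' : δ / (4 * (8 * CA * S * Cg + 1)) ≤ δ / 4 := by
    apply div_le_div_of_nonneg_left hδ.le (by norm_num)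
    have : 0 ≤ 8 * CA * S * Cg := by positivity
    linarith
  obtain ⟨ρ, hρ, hρδ, hG⟩ := small_gG (CA * Cg) hd1
  set V : ℝ × ℝ → ℂ := fun p => A p * Lk p + K p with hV
  set Vr : ℝ × ℝ → ℂ := fun p => A p * Le (ρ ^ 8) p + K p with hVr
  set B : ℝ × ℝ → ℂ := fun p => A p * (Le (ρ ^ 8) p - Lk p) with hB
  have pV : Per V := (pA.mul Per_Lk).add pK
  have pVr : Per Vr := (pA.mul (Per_Le _)).add pK
  have pB : Per B := pA.mul (G := fun p => Le (ρ ^ 8) p - Lk p) fun s t => by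
    simp only [(Per_Le _ s t).1, (Per_Le _ s t).2, (Per_Lk s t).1, (Per_Lk s t).2, and_self]
  have sF : ContDiff ℝ ∞ fun p : ℝ × ℝ => Vr p * g p.2 :=
    (ker_reg_contDiff sA sK hρ).mul (hg.comp contDiff_snd)
  have pF : Per fun p : ℝ × ℝ => Vr p * g p.2 := pVr.mul (G := fun p => g p.2) fun s t =>
    ⟨rfl, hp t⟩
  obtain ⟨L, hL0, hL⟩ := (UB_const sF pF).lip
  obtain ⟨N₀, hN₀⟩ := exists_nat_gt (4 * L / δ)
  refine ⟨δ / (4 * (C * S + 1)), by positivity, N₀, fun N hNN _ x hx i => ?_⟩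
  have hN : (0 : ℝ) < N := Nat.cast_pos.2 (Nat.pos_of_ne_zero (NeZero.ne N))
  set y : ZMod N → ℂ := fun j => g (gp N c (ZMod.cast j)) with hy
  have hxy : ∀ j, ‖(x - y) j‖ ≤ δ / (4 * (C * S + 1)) := fun j => by
    have := hx (ZMod.cast j)
    rwa [ZMod.intCast_zmod_cast] at this
  have k1 : ‖Q N a c V (x - y) i‖ ≤ δ / 4 := by
    refine (hS N V pV C (fun p hq => (hC 0 p hq).trans ?_) (x - y) _ hC0 hxy i).trans ?_
    · have := qw_one_le hq (Real.abs_sin_le_one _)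
      gcongr
    · have : 0 < C * S + 1 := by positivity
      rw [mul_div_assoc', div_le_div_iff₀ (by positivity) (by norm_num)]
      nlinarith
  have k2 : ‖Q N a c B y i‖ ≤ δ / 4 := by
    refine (hS N B pB (CA * (8 * ρ)) (fun p hq => ?_) y Cg (by positivity)
      (fun j => hCg _) i).trans ?_
    · rw [hB]
      simp only
      rw [Le_sub_Lk, norm_mul, Complex.norm_real, Real.norm_eq_abs, abs_of_nonneg (gw_nonneg hρ hq)]
      have h1 := gw_le hρ hq
      have h2 := qw_one_le hq (Real.abs_sin_le_one _)
      have h3 : qw ρ |Real.sin (Real.pi * (p.1 - p.2))| =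
        ρ * qw 1 |Real.sin (Real.pi * (p.1 - p.2))| := by unfold qw; ring
      rw [h3] at h1
      calc ‖A p‖ * gw ρ |Real.sin (Real.pi * (p.1 - p.2))|
          ≤ CA * (8 * (ρ * (1 / Real.sqrt |Real.sin (Real.pi * (p.1 - p.2))|))) := by
            have := hCA p
            have := gw_nonneg hρ hq
            have h5 : gw ρ |Real.sin (Real.pi * (p.1 - p.2))| ≤
              8 * (ρ * (1 / Real.sqrt |Real.sin (Real.pi * (p.1 - p.2))|)) :=
              h1.trans (by gcongr)
            gcongr
        _ = _ := by ring
    · have h0 : 0 ≤ 8 * CA * S * Cg := by positivity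
      calc CA * (8 * ρ) * S * Cg = (8 * CA * S * Cg) * ρ := by ring
        _ ≤ (8 * CA * S * Cg) * (δ / (4 * (8 * CA * S * Cg + 1))) := by gcongr
        _ ≤ δ / 4 := by
            rw [mul_div_assoc', div_le_div_iff₀ (by positivity) (by norm_num)]
            nlinarith
  have k3 : ‖Q N a c Vr y i - J Vr g (gp N a i)‖ ≤ δ / 4 := by
    rw [Q_apply a c pVr, J]
    have hcF := sF.continuous
    have h := riemann_per (f := fun t => Vr (gp N a i, t) * g t) (N := N) (δ := L * (1 / N))
      (by
        have : Continuous fun t : ℝ => (gp N a i, t) := by fun_prop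
        exact hcF.comp this)
      (fun t => (pF (gp N a i) t).2) (fun s t hst => ?_) c
    · refine h.trans ?_
      have : (N₀ : ℝ) ≤ N := by exact_mod_cast hNN
      have h4 : 4 * L / δ < N := hN₀.trans_le this
      rw [div_lt_iff₀ hδ] at h4
      rw [mul_one_div, div_le_div_iff₀ hN (by norm_num)]
      linarith
    · refine (hL 0 (gp N a i, t) (gp N a i, s)).trans ?_
      gcongr
      simpa [Prod.norm_def] using hst
  have k4 := (J_near sA sK hCA hg.continuous hCg hρ (gp N a i)).trans (hG.trans hd1')
  have e : Q N a c V x i = Q N a c V (x - y) i + (Q N a c Vr y i - Q N a c B y i) := by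
    have h1 : x = (x - y) + y := by abel
    have h2 : Vr = fun p => V p + B p := by
      ext p; simp only [hVr, hV, hB]; ring
    conv_lhs => rw [h1, Q_vadd]
    have h3 := congrFun (Q_add a c V B y) i
    rw [← h2] at h3
    simp only [Pi.add_apply] at h3 ⊢
    rw [h3]
    ring
  rw [e]
  have e2 : Q N a c V (x - y) i + (Q N a c Vr y i - Q N a c B y i) - J V g (gp N a i) =
      Q N a c V (x - y) i + (-Q N a c B y i) + (Q N a c Vr y i - J Vr g (gp N a i)) +
      -(J V g (gp N a i) - J Vr g (gp N a i)) := by ring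
  rw [e2]
  refine (norm_add_le _ _).trans ?_
  refine (add_le_add_left (norm_add₃_le) _).trans ?_
  rw [norm_neg, norm_neg]
  linarith

end ker
end Nys

end

noncomputable section
open scoped ContDiff ComplexConjugate Topology
open Filter MeasureTheory
namespace Nys

/-! ### Passage to the limit -/

namespace Dat
variable (D : Dat)

lemma Op_zero_eq {N : ℕ} [NeZero N] (x : ZMod N → ℂ) :
    D.Op N 0 x = -dl (Q N D.a D.c D.V1 (db x)) + Q N D.a' D.c' D.V2 x := by
  have h : Per (df N (0, 1) D.V1) := D.pV1.df N (0, 1)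
  simp only [Op, Function.iterate_zero, id]
  rw [Q_df10 _ _ h, Q_df01 _ _ D.pV1]
  congr 1
  ext i
  simp only [dl, Pi.neg_apply]
  ring

/-- Summation of `W x` over at most one period: the increments of the discrete version of
`U = V₁ φ'` are, up to small errors, integrals of `Z = V₂ φ`. -/
lemma increment {N : ℕ} [NeZero N] (x : ZMod N → ℂ) {U Z : ℝ → ℂ} (hZc : Continuous Z) {δ : ℝ}
    (hδ : 0 ≤ δ)
    (h1 : ∀ i : ℤ, ‖Q N D.a D.c D.V1 (db x) i - U (gp N D.a i)‖ ≤ δ)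
    (h2 : ∀ i : ℤ, ‖Q N D.a' D.c' D.V2 x i - Z (gp N D.a' i)‖ ≤ δ)
    (hw : (1 / (N : ℝ)) * ∑ j, ‖D.Op N 0 x j‖ ≤ δ)
    (hZ : ∀ s t, |s - t| ≤ 1 / (N : ℝ) → ‖Z s - Z t‖ ≤ δ) (i₀ : ℤ) (m : ℕ) (hm : m ≤ N) :
    ‖(U (gp N D.a (i₀ + m)) - U (gp N D.a i₀)) - ∫ t in gp N D.a' i₀..gp N D.a' (i₀ + m), Z t‖
      ≤ 5 * δ := by
  have hN : (0 : ℝ) < N := Nat.cast_pos.2 (Nat.pos_of_ne_zero (NeZero.ne N))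
  have hN' : (N : ℂ) ≠ 0 := Nat.cast_ne_zero.2 (NeZero.ne N)
  have hmN : (m : ℝ) / N ≤ 1 := (div_le_one hN).2 (by exact_mod_cast hm)
  set u := Q N D.a D.c D.V1 (db x) with hu
  set v := Q N D.a' D.c' D.V2 x with hv
  set w := D.Op N 0 x with hw'
  have hstep : ∀ i : ℤ, u ((i + 1 : ℤ) : ZMod N) - u (i : ZMod N) =
      (1 / (N : ℂ)) * (v i - w i) := by
    intro i
    have h := congrFun (D.Op_zero_eq x) (i : ZMod N)
    rw [← hw', ← hu, ← hv] at h
    simp only [Pi.add_apply, Pi.neg_apply, dl] at h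
    push_cast
    field_simp
    linear_combination h
  have htel : u ((i₀ + m : ℤ) : ZMod N) - u (i₀ : ZMod N) =
      (1 / (N : ℂ)) * ∑ i ∈ Finset.range m, v ((i₀ + i : ℤ) : ZMod N) -
        (1 / (N : ℂ)) * ∑ i ∈ Finset.range m, w ((i₀ + i : ℤ) : ZMod N) := by
    have h := Finset.sum_range_sub (fun k : ℕ => u ((i₀ + k : ℤ) : ZMod N)) m
    simp only [Nat.cast_zero, add_zero] at h
    rw [← h, ← mul_sub, ← Finset.sum_sub_distrib, Finset.mul_sum]
    refine Finset.sum_congr rfl fun k _ => ?_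
    rw [← hstep]
    congr 3
    push_cast; ring
  have hwsum : ‖(1 / (N : ℂ)) * ∑ i ∈ Finset.range m, w ((i₀ + i : ℤ) : ZMod N)‖ ≤ δ := by
    rw [norm_mul, norm_div, norm_one, Complex.norm_natCast]
    refine le_trans ?_ hw
    gcongr
    refine (norm_sum_le _ _).trans ?_
    have hinj : Set.InjOn (fun i : ℕ => ((i₀ + i : ℤ) : ZMod N)) (Finset.range m) := by
      intro i hi j hj hij
      simp only [Int.cast_add, Int.cast_natCast, add_right_inj] at hij
      rw [ZMod.natCast_eq_natCast_iff'] at hij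
      simp only [Finset.coe_range, Set.mem_Iio] at hi hj
      rwa [Nat.mod_eq_of_lt (hi.trans_le hm), Nat.mod_eq_of_lt (hj.trans_le hm)] at hij
    rw [← Finset.sum_image (f := fun j => ‖w j‖) hinj]
    exact Finset.sum_le_sum_of_subset_of_nonneg (Finset.subset_univ _) fun _ _ _ => norm_nonneg _
  have hvsum : ‖(1 / (N : ℂ)) * ∑ i ∈ Finset.range m, v ((i₀ + i : ℤ) : ZMod N) -
      (1 / (N : ℂ)) * ∑ i ∈ Finset.range m, Z (gp N D.a' (i₀ + i))‖ ≤ δ := by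
    rw [← mul_sub, ← Finset.sum_sub_distrib, norm_mul, norm_div, norm_one, Complex.norm_natCast]
    calc 1 / (N : ℝ) * _ ≤ 1 / (N : ℝ) * (m * δ) := by
          gcongr
          refine (norm_sum_le _ _).trans ?_
          refine (Finset.sum_le_sum fun (i : ℕ) _ => h2 (i₀ + i)).trans ?_
          simp
      _ = (m / N) * δ := by ring
      _ ≤ 1 * δ := by gcongr
      _ = δ := one_mul δ
  have hcell := riemann_cell hZc hZ D.a' i₀ m
  have hcell' : δ * ((m : ℝ) / N) ≤ δ := mul_le_of_le_one_right hδ hmN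
  have k1 := h1 (i₀ + m)
  have k2 := h1 i₀
  set S := (1 / (N : ℂ)) * ∑ i ∈ Finset.range m, v ((i₀ + i : ℤ) : ZMod N)
  set T := (1 / (N : ℂ)) * ∑ i ∈ Finset.range m, w ((i₀ + i : ℤ) : ZMod N)
  set R := (1 / (N : ℂ)) * ∑ i ∈ Finset.range m, Z (gp N D.a' (i₀ + i))
  set I := ∫ t in gp N D.a' i₀..gp N D.a' (i₀ + m), Z t
  have e : (U (gp N D.a (i₀ + m)) - U (gp N D.a i₀)) - I =
      -(u ((i₀ + m : ℤ) : ZMod N) - U (gp N D.a (i₀ + m))) + (u (i₀ : ZMod N) - U (gp N D.a i₀))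
        + (S - R) + (R - I) + -T := by
    linear_combination htel
  rw [e]
  refine (norm_add_le _ _).trans ?_
  refine (add_le_add_left (norm_add_le _ _) _).trans ?_
  refine (add_le_add_left (add_le_add_left (norm_add₃_le) _) _).trans ?_
  rw [norm_neg, norm_neg]
  linarith

end Dat

lemma tendsto_gp_floor {M : ℕ → ℕ} [∀ n, NeZero (M n)] (hM : Tendsto M atTop atTop) (a r : ℝ) :
    Tendsto (fun n => gp (M n) a ⌊r * M n⌋) atTop (𝓝 r) := by
  have hM' : Tendsto (fun n => (M n : ℝ)) atTop atTop := tendsto_natCast_atTop_atTop.comp hM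
  have h0 : Tendsto (fun n => (1 + |a|) / (M n : ℝ)) atTop (𝓝 0) := hM'.const_div_atTop _
  rw [tendsto_iff_norm_sub_tendsto_zero]
  refine squeeze_zero (fun _ => norm_nonneg _) (fun n => ?_) h0
  have hN : (0 : ℝ) < M n := Nat.cast_pos.2 (Nat.pos_of_ne_zero (NeZero.ne _))
  have e : gp (M n) a ⌊r * M n⌋ - r = (((⌊r * M n⌋ : ℝ) - r * M n) + a) / M n := by
    unfold gp; field_simp; ring
  rw [e, norm_div, Real.norm_of_nonneg hN.le]
  gcongr
  refine (norm_add_le _ _).trans ?_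
  rw [Real.norm_eq_abs, Real.norm_eq_abs]
  gcongr
  rw [abs_le]
  have h1 := Int.floor_le (r * M n)
  have h2 := Int.lt_floor_add_one (r * M n)
  constructor <;> linarith

namespace Dat
variable (D : Dat)

/-- A smooth limit of grid functions whose images under the discrete operators tend to zero in
the mean lies in the kernel of the continuous operator. -/
lemma limit_kernel {M : ℕ → ℕ} [∀ n, NeZero (M n)] (hM : Tendsto M atTop atTop)
    (x : ∀ n, ZMod (M n) → ℂ) {φ : ℝ → ℂ} (hφ : ContDiff ℝ ∞ φ) (hp : Function.Periodic φ 1)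
    (hx : ∀ c : ℝ, ∀ δ > 0, ∀ᶠ n in atTop, ∀ j : ℤ,
        ‖x n j - φ (gp (M n) c j)‖ ≤ δ ∧ ‖db (x n) j - deriv φ (gp (M n) c j)‖ ≤ δ)
    (hw : ∀ δ > 0, ∀ᶠ n in atTop, (1 / (M n : ℝ)) * ∑ j, ‖D.Op (M n) 0 (x n) j‖ ≤ δ) (s : ℝ) :
    -deriv (J D.V1 (deriv φ)) s + J D.V2 φ s = 0 := by
  have hφ' : ContDiff ℝ ∞ (deriv φ) := (contDiff_infty_iff_deriv.1 hφ).2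
  have hp' : Function.Periodic (deriv φ) 1 := fun t => by
    rw [← deriv_comp_add_const]
    congr 1
    ext t; exact hp t
  set U := J D.V1 (deriv φ) with hU
  set Z := J D.V2 φ with hZ
  have cU : Continuous U := J_continuous D.sA1 D.sK1 D.pA1 hφ' hp'
  have cZ : Continuous Z := J_continuous D.sA2 D.sK2 D.pA2 hφ hp
  have uZ : UniformContinuous Z := uniformContinuous_periodic cZ (J_periodic D.pA2 D.pK2 φ)
  have hM' : Tendsto (fun n => (M n : ℝ)) atTop atTop := tendsto_natCast_atTop_atTop.comp hM
  have hM0 : Tendsto (fun n => 1 / (M n : ℝ)) atTop (𝓝 0) := hM'.const_div_atTop _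
  set P : ℝ → ℂ := fun t => ∫ τ in (0 : ℝ)..t, Z τ with hP
  have dP : ∀ t, HasDerivAt P (Z t) t := fun t =>
    intervalIntegral.integral_hasDerivAt_right (cZ.intervalIntegrable _ _)
      cZ.aestronglyMeasurable.stronglyMeasurableAtFilter cZ.continuousAt
  have cP : Continuous P := continuous_iff_continuousAt.2 fun t => (dP t).continuousAt
  have key : ∀ r s, r ≤ s → s < r + 1 → U s - U r = P s - P r := by
    intro r s hrs hsr
    have hlim : Tendsto (fun n => (U (gp (M n) D.a ⌊s * M n⌋) - U (gp (M n) D.a ⌊r * M n⌋)) -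
        (P (gp (M n) D.a' ⌊s * M n⌋) - P (gp (M n) D.a' ⌊r * M n⌋))) atTop
        (𝓝 ((U s - U r) - (P s - P r))) := by
      refine Tendsto.sub (Tendsto.sub ?_ ?_) (Tendsto.sub ?_ ?_)
      · exact (cU.tendsto s).comp (tendsto_gp_floor hM _ s)
      · exact (cU.tendsto r).comp (tendsto_gp_floor hM _ r)
      · exact (cP.tendsto s).comp (tendsto_gp_floor hM _ s)
      · exact (cP.tendsto r).comp (tendsto_gp_floor hM _ r)
    rw [← sub_eq_zero, ← norm_le_zero_iff]
    refine le_of_forall_pos_le_add fun η hη => ?_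
    rw [zero_add]
    refine le_of_tendsto hlim.norm ?_
    have hδ : 0 < η / 5 := by positivity
    obtain ⟨δ1, hδ1, N1, hQ1⟩ :=
      riemann_main D.sA1 D.sK1 D.pA1 D.pK1 D.hac_int hφ' hp' hδ
    obtain ⟨δ2, hδ2, N2, hQ2⟩ :=
      riemann_main D.sA2 D.sK2 D.pA2 D.pK2 D.hac_int' hφ hp hδ
    obtain ⟨δ3, hδ3, hZ3⟩ := Metric.uniformContinuous_iff.1 uZ (η / 5) hδ
    filter_upwards [hx D.c δ1 hδ1, hx D.c' δ2 hδ2, hM.eventually_ge_atTop N1,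
      hM.eventually_ge_atTop N2, hw (η / 5) hδ, hM0.eventually (gt_mem_nhds hδ3)]
      with n g1 g2 g3 g4 g5 g6
    have hN : (0 : ℝ) < M n := Nat.cast_pos.2 (Nat.pos_of_ne_zero (NeZero.ne _))
    obtain ⟨m, hm⟩ : ∃ m : ℕ, ⌊s * M n⌋ = ⌊r * M n⌋ + m := by
      refine Int.le.dest ?_ |>.imp fun m h => h.symm
      exact Int.floor_le_floor (by gcongr)
    have hmN : m ≤ M n := by
      have : ⌊s * M n⌋ ≤ ⌊r * M n + (M n : ℤ)⌋ := by
        refine Int.floor_le_floor ?_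
        push_cast
        nlinarith
      rw [Int.floor_add_intCast] at this
      omega
    have h := D.increment (x n) cZ hδ.le (U := U)
      (hQ1 (M n) g3 (db (x n)) fun j => (g1 j).2) (hQ2 (M n) g4 (x n) fun j => (g2 j).1) g5
      (fun s t hst => by
        have := hZ3 (a := s) (b := t) (by rw [Real.dist_eq]; exact hst.trans_lt g6)
        rw [dist_eq_norm] at this
        exact this.le) ⌊r * M n⌋ m hmN
    rw [← hm] at h
    have e : P (gp (M n) D.a' ⌊s * M n⌋) - P (gp (M n) D.a' ⌊r * M n⌋) =
        ∫ t in gp (M n) D.a' ⌊r * M n⌋..gp (M n) D.a' ⌊s * M n⌋, Z t :=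
      intervalIntegral.integral_interval_sub_left (cZ.intervalIntegrable _ _)
        (cZ.intervalIntegrable _ _)
    rw [e]
    refine h.trans (by linarith)
  have dU : HasDerivAt U (Z s) s := by
    have h1 : HasDerivAt (fun t => P t + (U s - P s)) (Z s) s := (dP s).add_const _
    refine h1.congr_of_eventuallyEq ?_
    filter_upwards [Ioo_mem_nhds (show s - 1 < s by linarith) (show s < s + 1 by linarith)]
      with t ht
    rcases le_total s t with h | h
    · linear_combination key s t h ht.2
    · linear_combination -key t s h (by linarith [ht.1])
  rw [dU.deriv]
  ring

/-- Uniform lower bound for the discrete operators, given injectivity of the continuous one. -/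
theorem stable (hinj : ∀ φ : ℝ → ℂ, ContDiff ℝ ∞ φ → Function.Periodic φ 1 →
      (∀ s, -deriv (J D.V1 (deriv φ)) s + J D.V2 φ s = 0) → ∀ s, φ s = 0) :
    ∃ N₀ : ℕ, ∃ β > (0 : ℝ), ∀ N ≥ N₀, ∀ [NeZero N] (x : ZMod N → ℂ),
      β * nrm x ≤ nrm (D.Op N 0 x) := by
  by_contra hcon
  have hseq : ∀ n : ℕ, ∃ (N : ℕ) (_ : NeZero N) (x : ZMod N → ℂ) (μ : ℝ), n ≤ N ∧
      0 ≤ μ ∧ μ ≤ 1 ∧ nrm x = Real.sqrt N ∧ D.adj.Op N 0 (D.Op N 0 x) = (μ : ℂ) • x ∧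
      nrm (D.Op N 0 x) ^ 2 = μ * nrm x ^ 2 ∧ nrm (D.Op N 0 x) ≤ 1 / ((n : ℝ) + 1) * Real.sqrt N := by
    intro n
    have hn : (0 : ℝ) < 1 / ((n : ℝ) + 1) := by positivity
    have hn1 : 1 / ((n : ℝ) + 1) ≤ 1 := by
      rw [div_le_one (by positivity)]
      have : (0 : ℝ) ≤ n := n.cast_nonneg
      linarith
    have : ∃ N ≥ n, ∃ (_ : NeZero N) (x : ZMod N → ℂ),
        nrm (D.Op N 0 x) < 1 / ((n : ℝ) + 1) * nrm x := by
      by_contra h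
      refine hcon ⟨n, _, hn, fun N hN i x => ?_⟩
      by_contra h'
      exact h ⟨N, hN, i, x, lt_of_not_ge h'⟩
    obtain ⟨N, hN, iN, x₀, hx₀⟩ := this
    have h0 : x₀ ≠ 0 := by
      rintro rfl
      have : nrm (0 : ZMod N → ℂ) = 0 := by simp [nrm]
      rw [this, mul_zero] at hx₀
      exact absurd hx₀ (not_lt.2 (nrm_nonneg _))
    have h0' : 0 < nrm x₀ := by
      by_contra h
      have h1 := nrm_sq x₀
      have h2 : nrm x₀ = 0 := le_antisymm (not_lt.1 h) (nrm_nonneg _)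
      refine h0 (funext fun j => ?_)
      have h3 := norm_apply_le x₀ j
      rw [h2] at h3
      simpa using h3
    obtain ⟨y, μ, hy, hμ, hle, hy1, hy2⟩ := D.exists_singular N x₀ h0
    have hμ' : μ ≤ (1 / ((n : ℝ) + 1)) ^ 2 := by
      have h1 : nrm (D.Op N 0 x₀) ^ 2 ≤ (1 / ((n : ℝ) + 1) * nrm x₀) ^ 2 :=
        pow_le_pow_left₀ (nrm_nonneg _) hx₀.le 2
      have h2 := hle.trans h1
      rw [mul_pow] at h2
      exact le_of_mul_le_mul_right h2 (by positivity)
    have hy0 : 0 < nrm y := by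
      by_contra h
      have h2 : nrm y = 0 := le_antisymm (not_lt.1 h) (nrm_nonneg _)
      refine hy (funext fun j => ?_)
      have h3 := norm_apply_le y j
      rw [h2] at h3
      simpa using h3
    set r : ℂ := ((Real.sqrt N / nrm y : ℝ) : ℂ) with hr
    have hxn : nrm (r • y) = Real.sqrt N := by
      rw [nrm_smul, hr, Complex.norm_real, Real.norm_of_nonneg (by positivity)]
      field_simp
    have hnq : nrm (D.Op N 0 (r • y)) ^ 2 = μ * nrm (r • y) ^ 2 := by
      rw [Op_vsmul, nrm_smul, nrm_smul, mul_pow, hy2]; ring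
    refine ⟨N, iN, r • y, μ, hN, hμ, hμ'.trans (pow_le_one₀ hn.le hn1), hxn, ?_, hnq, ?_⟩
    · rw [Op_vsmul, Op_vsmul, hy1, smul_comm]
    · refine abs_le_of_sq_le_sq' ?_ (by positivity) |>.2
      rw [hnq, hxn, mul_pow]
      gcongr
  choose M iM x μ hMn hμ0 hμ1 hnx hex hnx2 hop using hseq
  have hM : Tendsto M atTop atTop := tendsto_atTop_mono hMn tendsto_id
  choose C hC0 hC using D.singular_regular
  obtain ⟨φ, hφ, hp, σ, hσ, hconv⟩ := compactness hM x C fun n k => by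
    rw [← hnx n]
    exact (nrm_le_sob k (x n)).trans (hC k (M n) (x n) (μ n) (hμ0 n) (hμ1 n) (hex n) (hnx2 n)).1
  have hMσ : Tendsto (fun n => M (σ n)) atTop atTop := hM.comp hσ.tendsto_atTop
  have hz := hinj φ hφ hp (D.limit_kernel hMσ (fun n => x (σ n)) hφ hp hconv fun δ hδ => by
    have h1 : Tendsto (fun n : ℕ => 1 / ((n : ℝ) + 1)) atTop (𝓝 0) :=
      tendsto_one_div_add_atTop_nhds_zero_nat
    filter_upwards [(h1.comp hσ.tendsto_atTop).eventually (gt_mem_nhds hδ)] with n hn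
    have hN : (0 : ℝ) < M (σ n) := Nat.cast_pos.2 (Nat.pos_of_ne_zero (NeZero.ne _))
    refine le_trans ?_ hn.le
    calc 1 / (M (σ n) : ℝ) * _
        ≤ 1 / (M (σ n) : ℝ) * (Real.sqrt (M (σ n)) *
          (1 / ((σ n : ℝ) + 1) * Real.sqrt (M (σ n)))) := by
          gcongr
          refine (sum_norm_le _).trans ?_
          gcongr
          exact hop (σ n)
      _ = 1 / (M (σ n) : ℝ) * (Real.sqrt (M (σ n)) * Real.sqrt (M (σ n))) *
          (1 / ((σ n : ℝ) + 1)) := by ring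
      _ = 1 / ((σ n : ℝ) + 1) := by
          rw [Real.mul_self_sqrt hN.le, one_div_mul_cancel hN.ne', one_mul])
  -- a vanishing limit contradicts the normalisation `|x|² = N`
  obtain ⟨n, hn⟩ := (hconv 0 (1 / 2) (by norm_num)).exists
  have hN : (0 : ℝ) < M (σ n) := Nat.cast_pos.2 (Nat.pos_of_ne_zero (NeZero.ne _))
  have h2 := nrm_sq (x (σ n))
  rw [hnx, Real.sq_sqrt hN.le] at h2
  have h3 : ∑ j, ‖x (σ n) j‖ ^ 2 ≤ ∑ _j : ZMod (M (σ n)), (1 / 2 : ℝ) ^ 2 := by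
    refine Finset.sum_le_sum fun j _ => ?_
    have h4 := (hn (ZMod.cast j)).1
    rw [hz, sub_zero, ZMod.intCast_zmod_cast] at h4
    gcongr
  rw [← h2, Finset.sum_const, Finset.card_univ, ZMod.card, nsmul_eq_mul] at h3
  nlinarith

end Dat
end Nys

end

noncomputable section
open scoped ContDiff
namespace Nys

/-! ### Application to the Nyström matrix -/

lemma SPK.smooth {A : ℝ → ℝ → ℂ} (h : SPK A) : ContDiff ℝ ∞ fun p : ℝ × ℝ => A p.1 p.2 := h.1

lemma SPK.per {A : ℝ → ℝ → ℂ} (h : SPK A) : Per fun p : ℝ × ℝ => A p.1 p.2 :=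
  fun s t => ⟨h.2.1 s t, h.2.2 s t⟩

/-- The data of the Nyström discretisation, with the factor `i/(2π)` absorbed into `A₁`, `A₂`. -/
def mkDat (A1 K1 A2 K2 : ℝ → ℝ → ℂ) (hA1 : SPK A1) (hK1 : SPK K1) (hA2 : SPK A2) (hK2 : SPK K2)
    (α : ℂ) (hα : α ≠ 0) (hdiag : ∀ s : ℝ, A1 s s = α) (ε : ℝ) (hε : ∀ k : ℤ, ε ≠ (k : ℝ) / 2) :
    Dat where
  κ := Complex.I / (2 * Real.pi) * α
  A1 p := Complex.I / (2 * Real.pi) * A1 p.1 p.2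
  K1 p := K1 p.1 p.2
  A2 p := Complex.I / (2 * Real.pi) * A2 p.1 p.2
  K2 p := K2 p.1 p.2
  a := ε - 1 / 2
  c := -(1 / 2)
  a' := ε
  c' := 0
  ε := ε
  hκ := by simp [hα, Real.pi_ne_zero]
  sA1 := contDiff_const.mul (SPK.smooth hA1)
  sK1 := SPK.smooth hK1
  sA2 := contDiff_const.mul (SPK.smooth hA2)
  sK2 := SPK.smooth hK2
  pA1 s t := by simp only [hA1.2.1, hA1.2.2, and_self]
  pK1 := SPK.per hK1
  pA2 s t := by simp only [hA2.2.1, hA2.2.2, and_self]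
  pK2 := SPK.per hK2
  diag s := by simp only [hdiag]
  hac := by ring
  hac' := by ring
  hε := hε

variable {A1 K1 A2 K2 : ℝ → ℝ → ℂ} (hA1 : SPK A1) (hK1 : SPK K1) (hA2 : SPK A2) (hK2 : SPK K2)
    {α : ℂ} (hα : α ≠ 0) (hdiag : ∀ s : ℝ, A1 s s = α) {ε : ℝ} (hε : ∀ k : ℤ, ε ≠ (k : ℝ) / 2)

lemma mkDat_V1 : (mkDat A1 K1 A2 K2 hA1 hK1 hA2 hK2 α hα hdiag ε hε).V1 =
    fun p => logKer A1 K1 p.1 p.2 := rfl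

lemma mkDat_V2 : (mkDat A1 K1 A2 K2 hA1 hK1 hA2 hK2 α hα hdiag ε hε).V2 =
    fun p => logKer A2 K2 p.1 p.2 := rfl

lemma mkDat_Op (N : ℕ) [NeZero N] (x : ZMod N → ℂ) (i : ZMod N) :
    (mkDat A1 K1 A2 K2 hA1 hK1 hA2 hK2 α hα hdiag ε hε).Op N 0 x i =
      (N : ℂ) * ∑ j : ZMod N, Wmat (logKer A1 K1) (logKer A2 K2) (1 / (N : ℝ)) ε
        (ZMod.cast i) (ZMod.cast j) * x j := by
  have hN : (N : ℂ) ≠ 0 := Nat.cast_ne_zero.2 (NeZero.ne N)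
  have hs : ∀ (η : ℝ) (j : ℤ), sg (1 / (N : ℝ)) η j = gp N (η - 1 / 2) j :=
    fun η j => by unfold sg gp; ring
  have ht : ∀ (η : ℝ) (j : ℤ), tg (1 / (N : ℝ)) η j = gp N η j :=
    fun η j => by unfold tg gp; ring
  have hg : ∀ (η : ℝ) (j : ℤ), gp N η j + 1 / (N : ℝ) = gp N η (j + 1) :=
    fun η j => by unfold gp; push_cast; ring
  have hh : (((1 / (N : ℝ) : ℝ)) : ℂ) = 1 / (N : ℂ) := by push_cast; rfl
  simp only [Dat.Op, Function.iterate_zero, id, mkDat_V1, mkDat_V2, Pi.add_apply, Q, mat, df]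
  simp only [mkDat]
  rw [← mul_add, ← Finset.sum_add_distrib, Finset.mul_sum, Finset.mul_sum]
  refine Finset.sum_congr rfl fun j _ => ?_
  simp only [Wmat, hs, ht, hh, Prod.smul_mk, Prod.mk_add_mk, smul_eq_mul, mul_one, mul_zero,
    add_zero, hg, zero_sub]
  field_simp
  ring

end Nys

end

/-- discrete stability (inf-sup) of the Nyström matrix `W^ε` and its
invertibility for small enough `h`. -/
theorem stmt_0
    (A1 K1 A2 K2 : ℝ → ℝ → ℂ) (hA1 : SPK A1) (hK1 : SPK K1) (hA2 : SPK A2) (hK2 : SPK K2)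
    (α : ℂ) (hα : α ≠ 0) (hdiag : ∀ s : ℝ, A1 s s = α)
    (hinj : ∀ φ : ℝ → ℂ, ContDiff ℝ (⊤ : ℕ∞) φ → Function.Periodic φ 1 →
      (∀ s, Wop (logKer A1 K1) (logKer A2 K2) φ s = 0) → ∀ s, φ s = 0)
    (ε : ℝ) (hε : ∀ k : ℤ, ε ≠ (k : ℝ) / 2) :
    ∃ h0 > (0:ℝ), ∃ β > (0:ℝ), ∀ N : ℕ, 0 < N → 1 / (N : ℝ) ≤ h0 →
      (∀ φv : Fin N → ℂ,
        β * (1 / (N : ℝ)) * Real.sqrt (∑ j : Fin N, ‖φv j‖ ^ 2) ≤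
          Real.sqrt (∑ i : Fin N,
            ‖∑ j : Fin N,
              Wmat (logKer A1 K1) (logKer A2 K2) (1 / (N : ℝ)) ε ((i : ℕ) : ℤ) ((j : ℕ) : ℤ)
                * φv j‖ ^ 2)) ∧
      IsUnit (Matrix.of fun i j : Fin N =>
        Wmat (logKer A1 K1) (logKer A2 K2) (1 / (N : ℝ)) ε ((i : ℕ) : ℤ) ((j : ℕ) : ℤ)) := by
  set D := Nys.mkDat A1 K1 A2 K2 hA1 hK1 hA2 hK2 α hα hdiag ε hε with hD
  obtain ⟨N₀, β, hβ, hst⟩ := D.stable hinj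
  refine ⟨1 / ((N₀ : ℝ) + 1), by positivity, β, hβ, fun N hN hNh => ?_⟩
  have hNN : N₀ ≤ N := by
    have hN' : (0 : ℝ) < N := Nat.cast_pos.2 hN
    rw [div_le_div_iff₀ hN' (by positivity), one_mul, one_mul] at hNh
    have : N₀ + 1 ≤ N := by exact_mod_cast hNh
    omega
  obtain ⟨n, rfl⟩ : ∃ n, N = n + 1 := ⟨N - 1, by omega⟩
  have hn : (0 : ℝ) < ((n + 1 : ℕ) : ℝ) := Nat.cast_pos.2 hN
  have hZ : ∀ x : ZMod (n + 1) → ℂ,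
      β * (1 / ((n + 1 : ℕ) : ℝ)) * Real.sqrt (∑ j : ZMod (n + 1), ‖x j‖ ^ 2) ≤
        Real.sqrt (∑ i : ZMod (n + 1), ‖∑ j : ZMod (n + 1),
          Wmat (logKer A1 K1) (logKer A2 K2) (1 / ((n + 1 : ℕ) : ℝ)) ε
            (ZMod.cast i) (ZMod.cast j) * x j‖ ^ 2) := by
    intro x
    have h := hst (n + 1) hNN x
    rw [Nys.nrm_eq, Nys.nrm_eq] at h
    simp only [hD, Nys.mkDat_Op, norm_mul, mul_pow, Complex.norm_natCast] at h
    rw [← Finset.mul_sum, Real.sqrt_mul (by positivity), Real.sqrt_sq hn.le] at h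
    rw [mul_one_div, div_mul_eq_mul_div, div_le_iff₀ hn, mul_comm (Real.sqrt _) ((n + 1 : ℕ) : ℝ)]
    exact h
  have hbound : ∀ φv : Fin (n + 1) → ℂ,
      β * (1 / ((n + 1 : ℕ) : ℝ)) * Real.sqrt (∑ j : Fin (n + 1), ‖φv j‖ ^ 2) ≤
          Real.sqrt (∑ i : Fin (n + 1),
            ‖∑ j : Fin (n + 1),
              Wmat (logKer A1 K1) (logKer A2 K2) (1 / ((n + 1 : ℕ) : ℝ)) ε ((i : ℕ) : ℤ)
                ((j : ℕ) : ℤ) * φv j‖ ^ 2) := fun φv => hZ φv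
  refine ⟨hbound, ?_⟩
  rw [← Matrix.mulVec_injective_iff_isUnit]
  refine (injective_iff_map_eq_zero (Matrix.mulVecLin _)).2 fun v hv => ?_
  have h := hbound v
  have h0 : ∀ i : Fin (n + 1), ∑ j : Fin (n + 1),
      Wmat (logKer A1 K1) (logKer A2 K2) (1 / ((n + 1 : ℕ) : ℝ)) ε ((i : ℕ) : ℤ)
                ((j : ℕ) : ℤ) * v j = 0 := fun i => congrFun hv i
  simp only [h0, norm_zero, ne_eq, OfNat.ofNat_ne_zero, not_false_eq_true, zero_pow,
    Finset.sum_const_zero, Real.sqrt_zero] at h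
  have hs : Real.sqrt (∑ j : Fin (n + 1), ‖v j‖ ^ 2) ≤ 0 :=
    nonpos_of_mul_nonpos_right h (by positivity)
  rw [Real.sqrt_le_iff, zero_pow two_ne_zero] at hs
  have := (Finset.sum_eq_zero_iff_of_nonneg fun j _ => by positivity).1
    (le_antisymm hs.2 (Finset.sum_nonneg fun j _ => by positivity))
  ext j
  simpa using this j (Finset.mem_univ j)
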